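/- arXiv:2104.01968 — 10 statements merged into one kernel-verified Lean document; each statement's English description precedes it below -/
import Mathlib

section
/- Let B be a quaternion algebra over a field F of characteristic zero, and let (x1, x2) and (y1, y2) be pairs of invertible elements of B such that: x1, x2, y1, y2 ∉ F·1; for i = 1, 2 the elements x_i and y_i have the same irreducible minimal polynomial over F; and x1·x2 and y1·y2 have the same minimal polynomial over F. Then the pairs are simultaneously conjugate in B: there exists r ∈ B^× with r·x_i·r⁻¹ = y_i for i = 1, 2. -/
/-!
Write `x₁ = t + u`, `x₂ = s + v`, `y₁ = t' + u'`, `y₂ = s' + v'` with `u, v, u', v'` of reduced trace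
zero. Comparing minimal polynomials gives equality of reduced traces and norms
(`re_norm_eq_of_minpoly_eq`), so `t = t'`, `s = s'`, and the pairs `(u, v)`, `(u', v')` have the same
Gram matrix for the form `(z, w) ↦ re (z * w)` on trace-zero quaternions. Simultaneous conjugacy is
then a case of Witt's theorem, proved here by explicit conjugators.

Irreducibility of the minimal polynomial of `x₁` says that `u² = d` is not a square in `F`, which
forces the form to be anisotropic on the orthogonal complement of `u`
(`eq_zero_of_orthogonal_isotropic`): an isotropic `n ≠ 0` orthogonal to `u` would satisfy
`u * n = c • n`, so `d = c²`. Hence nonzero elements of that complement are invertible.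

* Either `u + u'` is invertible and conjugates `u` to `u'`, or `u' = -u`, and any nonzero element
  orthogonal to `u` conjugates `u` to `-u` (`exists_conj_pure`). So one may assume `u = u'`.
* Subtracting the projection to `u`, one gets `w, w'` orthogonal to `u` with `w² = w'²`. By
  Hilbert 90 for `F(u)/F`, made explicit, `(w' + w) * w` (or `u`, if `w' = -w`) commutes with `u` and
  conjugates `w` to `w'` (`exists_conj_orthogonal`).
-/

open Quaternion

/-- `B` is a quaternion algebra over `F`: an `F`-algebra isomorphic to some `ℍ[F, a, b]`
with `a, b ∈ F^×`. -/
def IsQuaternionAlgebra (F B : Type*) [Field F] [Ring B] [Algebra F B] : Prop :=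
  ∃ a b : F, a ≠ 0 ∧ b ≠ 0 ∧ Nonempty (B ≃ₐ[F] ℍ[F, a, b])

namespace QuatConj

variable {F : Type*} [Field F] {a b : F}

lemma re_mul_comm (x y : ℍ[F, a, b]) : (x * y).re = (y * x).re := by
  simp; ring

lemma pure_mul_self {z : ℍ[F, a, b]} (hz : z.re = 0) :
    z * z = algebraMap F _ (z * z).re := by
  ext <;> simp [hz] <;> ring

lemma pure_mul_add_mul {z w : ℍ[F, a, b]} (hz : z.re = 0) (hw : w.re = 0) :
    z * w + w * z = algebraMap F _ ((z * w).re + (z * w).re) := by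
  ext <;> simp [hz, hw] <;> ring

lemma isUnit_of_mul_self {z : ℍ[F, a, b]} {e : F} (h : z * z = algebraMap F _ e)
    (he : e ≠ 0) : IsUnit z := by
  have h1 : IsUnit (z * z) := h ▸ (IsUnit.mk0 e he).map (algebraMap F ℍ[F, a, b])
  exact ((Commute.refl z).isUnit_mul_iff.mp h1).1

/-- If `u` has trace zero and `u²` is not a square in `F`, then the norm form is anisotropic on the
trace-zero quaternions orthogonal to `u`. -/
lemma eq_zero_of_orthogonal_isotropic (ha : a ≠ 0) (hb : b ≠ 0) {u n : ℍ[F, a, b]}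
    (hu : u.re = 0) (hn : n.re = 0) (hd : ¬ IsSquare (u * u).re)
    (hun : (u * n).re = 0) (hnn : (n * n).re = 0) : n = 0 := by
  obtain ⟨u0, u1, u2, u3⟩ := u
  obtain ⟨n0, n1, n2, n3⟩ := n
  simp at hu hn
  subst hu hn
  simp at hun hnn hd
  -- If a coordinate of `n` is nonzero, its ratio to that of `u * n` is a square root of `u²`.
  have key : ∀ m p : F, p * p = (a * u1 * u1 + b * u2 * u2 - a * b * u3 * u3) * (m * m) →
      m = 0 := by
    intro m p h
    by_contra hm
    refine hd ⟨p / m, ?_⟩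
    field_simp
    linear_combination -h
  have e1 : n1 = 0 := by
    refine key n1 (b * (u2 * n3 - u3 * n2)) ?_
    apply mul_left_cancel₀ ha
    linear_combination (-(a * u1 * n1 - b * u2 * n2 + a * b * u3 * n3)) * hun
      - (b * u2 ^ 2 - a * b * u3 ^ 2) * hnn
  have e2 : n2 = 0 := by
    refine key n2 (a * (u1 * n3 - u3 * n1)) ?_
    apply mul_left_cancel₀ hb
    linear_combination (-(b * u2 * n2 - a * u1 * n1 + a * b * u3 * n3)) * hun
      - (a * u1 ^ 2 - a * b * u3 ^ 2) * hnn
  subst e1 e2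
  have e3 : n3 = 0 := by
    have : a * b * (n3 * n3) = 0 := by linear_combination -hnn
    simpa [ha, hb] using this
  subst e3
  rfl

lemma isUnit_of_orthogonal (ha : a ≠ 0) (hb : b ≠ 0) {u n : ℍ[F, a, b]}
    (hu : u.re = 0) (hn : n.re = 0) (hd : ¬ IsSquare (u * u).re)
    (hun : (u * n).re = 0) (h0 : n ≠ 0) : IsUnit n :=
  isUnit_of_mul_self (pure_mul_self hn)
    fun h => h0 (eq_zero_of_orthogonal_isotropic ha hb hu hn hd hun h)

lemma exists_orthogonal (u : ℍ[F, a, b]) :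
    ∃ w : ℍ[F, a, b], w.re = 0 ∧ w ≠ 0 ∧ (u * w).re = 0 := by
  by_cases h : a * u.imI = 0 ∧ b * u.imJ = 0
  · exact ⟨⟨0, 1, 0, 0⟩, rfl, fun h => by simpa using congrArg QuaternionAlgebra.imI h,
      by simp [h.1]⟩
  · refine ⟨⟨0, b * u.imJ, -(a * u.imI), 0⟩, rfl, fun h' => h ⟨?_, ?_⟩, by simp; ring⟩
    · simpa using congrArg QuaternionAlgebra.imJ h'
    · simpa using congrArg QuaternionAlgebra.imI h'

lemma mul_eq_neg_mul [CharZero F] {u w : ℍ[F, a, b]} (hu : u.re = 0) (hw : w.re = 0)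
    (h : (u * w).re = 0) : u * w = -(w * u) := by
  have := pure_mul_add_mul hu hw
  rw [h, add_zero] at this
  simpa [add_eq_zero_iff_eq_neg] using this

/-- Skolem–Noether for trace-zero quaternions whose common square is not a square in `F`. -/
lemma exists_conj_pure [CharZero F] (ha : a ≠ 0) (hb : b ≠ 0) {u u' : ℍ[F, a, b]}
    (hu : u.re = 0) (hu' : u'.re = 0) (hd : ¬ IsSquare (u * u).re)
    (h : (u * u).re = (u' * u').re) : ∃ r : ℍ[F, a, b], IsUnit r ∧ r * u = u' * r := by
  have huu : u * u = u' * u' := by rw [pure_mul_self hu, pure_mul_self hu', h]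
  by_cases hs : u + u' = 0
  · obtain ⟨w, hw, hw0, huw⟩ := exists_orthogonal u
    refine ⟨w, isUnit_of_orthogonal ha hb hu hw hd huw hw0, ?_⟩
    rw [← neg_eq_of_add_eq_zero_right hs, neg_mul, mul_eq_neg_mul hu hw huw, neg_neg]
  · have hre : (u + u').re = 0 := by simp [hu, hu']
    refine ⟨u + u', isUnit_of_mul_self (pure_mul_self hre) fun h0 => hs ?_, ?_⟩
    · refine eq_zero_of_orthogonal_isotropic ha hb hu hre hd ?_ h0
      have h2 := re_mul_comm u u'
      -- As `u² = u'²`, the square of `u + u'` is twice its pairing with `u`.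
      have : 2 * (u * (u + u')).re = 0 := by
        simp only [mul_add, add_mul, QuaternionAlgebra.re_add] at h0 ⊢
        linear_combination h0 + h + h2
      simpa using this
    · rw [add_mul, mul_add, huu, add_comm]

/-- Trace-zero quaternions orthogonal to `u` with the same square are conjugate under the
centralizer of `u`. -/
lemma exists_conj_orthogonal [CharZero F] (ha : a ≠ 0) (hb : b ≠ 0) {u w w' : ℍ[F, a, b]}
    (hu : u.re = 0) (hw : w.re = 0) (hw' : w'.re = 0) (hd : ¬ IsSquare (u * u).re)
    (huw : (u * w).re = 0) (huw' : (u * w').re = 0) (h : (w * w).re = (w' * w').re) :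
    ∃ r : ℍ[F, a, b], IsUnit r ∧ r * u = u * r ∧ r * w = w' * r := by
  have hww : w * w = w' * w' := by rw [pure_mul_self hw, pure_mul_self hw', h]
  have a1 := mul_eq_neg_mul hu hw huw
  have a2 := mul_eq_neg_mul hu hw' huw'
  by_cases hw0 : w = 0
  · have : w' = 0 := by
      refine eq_zero_of_orthogonal_isotropic ha hb hu hw' hd huw' ?_
      rw [← h, hw0]; simp
    exact ⟨1, isUnit_one, by simp, by simp [hw0, this]⟩
  by_cases hs : w' + w = 0
  · refine ⟨u, isUnit_of_mul_self (pure_mul_self hu) fun h0 => hd (by rw [h0]; exact IsSquare.zero), rfl, ?_⟩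
    rw [eq_neg_of_add_eq_zero_left hs, a1, neg_mul]
  · refine ⟨(w' + w) * w, (isUnit_of_orthogonal ha hb hu (by simp [hw, hw']) hd ?_ hs).mul
      (isUnit_of_orthogonal ha hb hu hw hd huw hw0), ?_, ?_⟩
    · rw [mul_add, QuaternionAlgebra.re_add, huw, huw', add_zero]
    · have a3 : u * (w' + w) = -((w' + w) * u) := by rw [mul_add, a1, a2, add_mul, neg_add]
      rw [← mul_assoc, a3, neg_mul, mul_assoc, mul_assoc, a1, mul_neg, neg_neg]
    · have : (w' + w) * w = w' * (w' + w) := by rw [add_mul, mul_add, hww, add_comm]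
      rw [this, mul_assoc, this]

/-- The reduced characteristic equation. -/
lemma quad (x : ℍ[F, a, b]) :
    x * x - algebraMap F _ (x.re + x.re) * x + algebraMap F _ (x * star x).re = 0 := by
  ext <;> simp <;> ring

/-- The minimal polynomial determines the trace and the norm: an element outside `F` satisfies a
unique monic quadratic equation, and a scalar is determined by its minimal polynomial. -/
lemma re_norm_eq_of_minpoly_eq [CharZero F] {x y : ℍ[F, a, b]} (h : minpoly F x = minpoly F y) :
    x.re = y.re ∧ (x * star x).re = (y * star y).re := by
  by_cases hy : y ∈ Set.range (algebraMap F ℍ[F, a, b])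
  · obtain ⟨c, rfl⟩ := hy
    rw [minpoly.eq_X_sub_C] at h
    have := minpoly.aeval F x
    rw [h] at this
    simp only [map_sub, Polynomial.aeval_X, Polynomial.aeval_C, sub_eq_zero] at this
    simp [this]
  · have hx : Polynomial.aeval x (Polynomial.X ^ 2 - Polynomial.C (x.re + x.re) * Polynomial.X
        + Polynomial.C (x * star x).re) = 0 := by
      rw [← quad x]
      simp only [map_sub, map_add, map_mul, Polynomial.aeval_X, Polynomial.aeval_C, sq]
    have hdvd := minpoly.dvd F x hx
    rw [h] at hdvd
    have hy2 := Polynomial.aeval_eq_zero_of_dvd_aeval_eq_zero hdvd (minpoly.aeval F y)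
    simp only [map_sub, map_add, map_mul, Polynomial.aeval_X, Polynomial.aeval_C, sq] at hy2
    rw [← map_add (algebraMap F ℍ[F, a, b])] at hy2
    have hq := quad y
    -- Subtracting the two quadratic equations for `y` leaves a linear one.
    have hsub : ∀ Y P Q N M : ℍ[F, a, b], Y - P + N = Y - Q + M → P - Q = N - M := by
      intro Y P Q N M h3
      have h5 : P - Q - (N - M) = (Y - Q + M) - (Y - P + N) := by abel
      rw [← sub_eq_zero, h5, h3, sub_self]
    have hlin : algebraMap F ℍ[F, a, b] ((x.re + x.re) - (y.re + y.re)) * y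
        = algebraMap F _ ((x * star x).re - (y * star y).re) := by
      rw [map_sub, map_sub, sub_mul]
      exact hsub _ _ _ _ _ (hy2.trans hq.symm)
    have hre : x.re = y.re := by
      by_contra hne
      have hc : (x.re + x.re) - (y.re + y.re) ≠ 0 := by
        rw [← two_mul, ← two_mul, ← mul_sub]
        exact mul_ne_zero two_ne_zero (sub_ne_zero.mpr hne)
      refine hy ⟨((x.re + x.re) - (y.re + y.re))⁻¹ * ((x * star x).re - (y * star y).re), ?_⟩
      rw [map_mul, ← hlin, ← mul_assoc, ← map_mul, inv_mul_cancel₀ hc, map_one, one_mul]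
    refine ⟨hre, ?_⟩
    rw [hre, sub_self, map_zero, zero_mul] at hlin
    have := congrArg QuaternionAlgebra.re hlin
    exact sub_eq_zero.mp this.symm

/-- If the minimal polynomial of a nonscalar `t + u` is irreducible, then `u²` is not a square:
`u² = c²` would make `(X - t - c) * (X - t + c)` vanish at `t + u`. -/
lemma not_isSquare {t : F} {u : ℍ[F, a, b]} (hu : u.re = 0)
    (hx : algebraMap F _ t + u ∉ Set.range (algebraMap F ℍ[F, a, b]))
    (hirr : Irreducible (minpoly F (algebraMap F _ t + u))) : ¬ IsSquare (u * u).re := by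
  rintro ⟨c, hc⟩
  have huu : u * u = algebraMap F _ (c * c) := hc ▸ pure_mul_self hu
  have hlin : ∀ e : F, ¬ minpoly F (algebraMap F _ t + u) ∣ Polynomial.X - Polynomial.C e := by
    intro e he
    have := Polynomial.aeval_eq_zero_of_dvd_aeval_eq_zero he (minpoly.aeval F _)
    simp only [map_sub, Polynomial.aeval_X, Polynomial.aeval_C, sub_eq_zero] at this
    exact hx ⟨e, this.symm⟩
  have hz : Polynomial.aeval (algebraMap F _ t + u)
      ((Polynomial.X - Polynomial.C (t + c)) * (Polynomial.X - Polynomial.C (t - c))) = 0 := by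
    have hcomm : algebraMap F _ c * u = u * algebraMap F ℍ[F, a, b] c := Algebra.commutes c u
    simp only [map_sub, map_mul, map_add, Polynomial.aeval_X, Polynomial.aeval_C]
    rw [add_sub_add_left_eq_sub, add_sub_sub_cancel, sub_mul, mul_add, mul_add, huu, hcomm,
      map_mul]
    abel
  exact (hirr.prime.dvd_or_dvd (minpoly.dvd F _ hz)).elim (hlin _) (hlin _)

lemma exists_conj [CharZero F] (ha : a ≠ 0) (hb : b ≠ 0) {u v u' v' : ℍ[F, a, b]}
    (hu : u.re = 0) (hv : v.re = 0) (hu' : u'.re = 0) (hv' : v'.re = 0)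
    (hd : ¬ IsSquare (u * u).re) (huu : (u * u).re = (u' * u').re)
    (hvv : (v * v).re = (v' * v').re) (huv : (u * v).re = (u' * v').re) :
    ∃ r : ℍ[F, a, b], IsUnit r ∧ r * u = u' * r ∧ r * v = v' * r := by
  obtain ⟨_, ⟨r, rfl⟩, hr⟩ := exists_conj_pure ha hb hu hu' hd huu
  have hu1 : u' = r * u * ↑r⁻¹ := by rw [hr, Units.mul_inv_cancel_right]
  have hcre : ∀ z : ℍ[F, a, b], (r * z * ↑r⁻¹).re = z.re := fun z => by
    rw [re_mul_comm, Units.inv_mul_cancel_left]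
  have hcmul : ∀ z w : ℍ[F, a, b], (r * z * ↑r⁻¹) * (r * w * ↑r⁻¹) = r * (z * w) * ↑r⁻¹ :=
    fun z w => by simp only [mul_assoc, Units.inv_mul_cancel_left]
  set v1 : ℍ[F, a, b] := r * v * ↑r⁻¹ with hv1
  have hv1re : v1.re = 0 := by rw [hv1, hcre, hv]
  have hv1v1 : (v1 * v1).re = (v' * v').re := by rw [hv1, hcmul, hcre, hvv]
  have huv1 : (u' * v1).re = (u' * v').re := by rw [← huv, hu1, hv1, hcmul, hcre]
  rw [huu] at hd
  have hd0 : (u' * u').re ≠ 0 := fun h0 => hd (by rw [h0]; exact IsSquare.zero)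
  -- The coefficient of the orthogonal projection of `v1`, and of `v'`, to `u'`.
  set c : F := (u' * v').re / (u' * u').re with hc
  have hcd : c * (u' * u').re = (u' * v').re := div_mul_cancel₀ _ hd0
  have hvu := re_mul_comm u' v1
  have hvu' := re_mul_comm u' v'
  obtain ⟨_, ⟨s, rfl⟩, hs1, hs2⟩ := exists_conj_orthogonal (w := v1 - c • u')
    (w' := v' - c • u') ha hb hu' (by simp [hv1re, hu']) (by simp [hv', hu']) hd
    (by simp only [mul_sub, mul_smul_comm, QuaternionAlgebra.re_sub, QuaternionAlgebra.re_smul,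
          smul_eq_mul, huv1, hcd, sub_self])
    (by simp only [mul_sub, mul_smul_comm, QuaternionAlgebra.re_sub, QuaternionAlgebra.re_smul,
          smul_eq_mul, hcd, sub_self])
    (by simp only [mul_sub, sub_mul, mul_smul_comm, smul_mul_assoc, QuaternionAlgebra.re_sub,
          QuaternionAlgebra.re_smul, smul_eq_mul, ← hvu, ← hvu', huv1, hv1v1])
  refine ⟨s * r, s.isUnit.mul r.isUnit, ?_, ?_⟩
  · rw [mul_assoc, hr, ← mul_assoc, hs1, mul_assoc]
  · have h1 : ↑s * v1 = v' * ↑s := by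
      rw [mul_sub, sub_mul, mul_smul_comm, smul_mul_assoc, hs1] at hs2
      exact sub_left_inj.mp hs2
    have h2 : ↑r * v = v1 * ↑r := by rw [hv1, Units.inv_mul_cancel_right]
    rw [mul_assoc, h2, ← mul_assoc, h1, mul_assoc]

theorem conj_main [CharZero F] (ha : a ≠ 0) (hb : b ≠ 0) {x1 x2 y1 y2 : ℍ[F, a, b]}
    (hx1 : x1 ∉ Set.range (algebraMap F ℍ[F, a, b]))
    (hmin1 : minpoly F x1 = minpoly F y1) (hirr1 : Irreducible (minpoly F x1))
    (hmin2 : minpoly F x2 = minpoly F y2)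
    (hmin12 : minpoly F (x1 * x2) = minpoly F (y1 * y2)) :
    ∃ r : ℍ[F, a, b], IsUnit r ∧ r * x1 = y1 * r ∧ r * x2 = y2 * r := by
  have hdec : ∀ x : ℍ[F, a, b], ∃ t : F, ∃ u : ℍ[F, a, b], u.re = 0 ∧ x = algebraMap F _ t + u :=
    fun x => ⟨x.re, x.im, by simp, by ext <;> simp⟩
  obtain ⟨h1, n1⟩ := re_norm_eq_of_minpoly_eq hmin1
  obtain ⟨h2, n2⟩ := re_norm_eq_of_minpoly_eq hmin2
  obtain ⟨h12, -⟩ := re_norm_eq_of_minpoly_eq hmin12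
  obtain ⟨t, u, hu, rfl⟩ := hdec x1
  obtain ⟨s, v, hv, rfl⟩ := hdec x2
  obtain ⟨t', u', hu', rfl⟩ := hdec y1
  obtain ⟨s', v', hv', rfl⟩ := hdec y2
  have ht : t = t' := by simpa [hu, hu'] using h1
  have hs : s = s' := by simpa [hv, hv'] using h2
  subst ht hs
  obtain ⟨r, hr, hr1, hr2⟩ := exists_conj ha hb hu hv hu' hv' (not_isSquare hu hx1 hirr1)
    (by simp [hu, hu'] at n1 ⊢; linear_combination -n1)
    (by simp [hv, hv'] at n2 ⊢; linear_combination -n2)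
    (by simp [hu, hu', hv, hv'] at h12 ⊢; linear_combination h12)
  refine ⟨r, hr, ?_, ?_⟩
  · rw [mul_add, add_mul, hr1, Algebra.commutes]
  · rw [mul_add, add_mul, hr2, Algebra.commutes]

end QuatConj

/-- Let `B` be a quaternion algebra over a field `F` of characteristic zero, and let
`(x1, x2)` and `(y1, y2)` be pairs of invertible elements of `B` such that:
`x1, x2, y1, y2 ∉ F·1`; for `i = 1, 2` the elements `xᵢ` and `yᵢ` have the same irreducible
minimal polynomial over `F`; and `x1·x2` and `y1·y2` have the same minimal polynomial over `F`.
Then the pairs are simultaneously conjugate in `B`: there exists `r ∈ B^×` with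
`r·xᵢ·r⁻¹ = yᵢ` for `i = 1, 2`. -/
theorem stmt0 {F B : Type*} [Field F] [CharZero F] [Ring B] [Algebra F B]
    (hB : IsQuaternionAlgebra F B)
    (x1 x2 y1 y2 : Bˣ)
    (hx1 : (x1 : B) ∉ Set.range (algebraMap F B))
    (hx2 : (x2 : B) ∉ Set.range (algebraMap F B))
    (hy1 : (y1 : B) ∉ Set.range (algebraMap F B))
    (hy2 : (y2 : B) ∉ Set.range (algebraMap F B))
    (hmin1 : minpoly F (x1 : B) = minpoly F (y1 : B))
    (hirr1 : Irreducible (minpoly F (x1 : B)))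
    (hmin2 : minpoly F (x2 : B) = minpoly F (y2 : B))
    (hirr2 : Irreducible (minpoly F (x2 : B)))
    (hmin12 : minpoly F ((x1 : B) * (x2 : B)) = minpoly F ((y1 : B) * (y2 : B))) :
    ∃ r : Bˣ, (r : B) * (x1 : B) * ((r⁻¹ : Bˣ) : B) = (y1 : B) ∧
      (r : B) * (x2 : B) * ((r⁻¹ : Bˣ) : B) = (y2 : B) := by
  obtain ⟨a, b, ha, hb, ⟨φ⟩⟩ := hB
  obtain ⟨r, hr, h1, h2⟩ := QuatConj.conj_main ha hb (x1 := φ x1) (x2 := φ x2) (y1 := φ y1)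
    (y2 := φ y2)
    (by
      rintro ⟨c, hc⟩
      exact hx1 ⟨c, φ.injective (by rw [φ.commutes, hc])⟩)
    (by rwa [minpoly.algEquiv_eq, minpoly.algEquiv_eq])
    (by rwa [minpoly.algEquiv_eq])
    (by rwa [minpoly.algEquiv_eq, minpoly.algEquiv_eq])
    (by rwa [← map_mul, ← map_mul, minpoly.algEquiv_eq, minpoly.algEquiv_eq])
  obtain ⟨ρ, hρ⟩ := hr.map φ.symm
  have tr : ∀ x y : B, r * φ x = φ y * r → (ρ : B) * x * ((ρ⁻¹ : Bˣ) : B) = y := fun x y h => by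
    rw [Units.mul_inv_eq_iff_eq_mul, hρ]
    apply φ.injective
    simpa using h
  exact ⟨ρ, tr _ _ h1, tr _ _ h2⟩
end

section
/- Let F be a field of characteristic zero (in the paper F = ℚ or ℚ_p), B a quaternion algebra over F, and let D1, D2, x be integers with x² ≠ D1·D2. Let (φ1, φ2) and (φ1′, φ2′) be pairs of x-linked embeddings of O_{D1}, O_{D2} into B, given by elements w_n = φ_n(√D_n) and w_n′ = φ_n′(√D_n) (n = 1, 2). Then V := {v ∈ B : v·w_n = w_n′·v for n = 1, 2} is a 1-dimensional F-vector space generated by an element of nonzero reduced norm; in particular the pairs are simultaneously conjugate: there exists r ∈ B^× with r·w_n·r⁻¹ = w_n′ for n = 1, 2. -/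
/-!
The elements `w₁, w₂` satisfy `w₁² = d₁`, `w₂² = d₂`, `w₁w₂ + w₂w₁ = 2x`. Put
`w₃ = w₁w₂ - x`; then `w₃` anticommutes with `w₁` and `w₂`, and `w₃² = δ` with `δ = x² - d₁d₂ ≠ 0`.
Hence `e = (1, w₁, w₂, w₃)` has a dual family `e*` for the (halved) trace form, with denominator `δ`,
and for a second such pair the averaging operator
`P(b) = δ ∑ᵢ e'ᵢ b e*ᵢ`
takes values in the space of intertwiners `V = {v : v wₙ = w'ₙ v}` (`casimir_left`,
`casimir_right`). As `∑ₘ eₘ e*ᵢ e*ₘ` is `4` for `i = 0` and vanishes otherwise, one gets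
`δ ∑ₘ P(b eₘ) e*ₘ = 4 δ² b` (`casimir_dual_sum`), so `P` does not vanish on `b B` when `b ≠ 0`.
All of this follows from the three relations alone, in any algebra.

The quaternion algebra enters only because there the centralizer of `{w₁, w₂}` is `F`
(`exists_eq_smul_one_of_commute`): in coordinates, the imaginary part of a centralizing element
has vanishing cross product with those of `w₁` and `w₂`, hence it kills the coordinates of
`w₁w₂ - w₂w₁ = 2w₃ ≠ 0`.

Take `0 ≠ v = P(b) ∈ V`. With `P'` the averaging operator in the opposite direction, `v P'(y)`
is the operator of the pair `w'` with itself, applied to `v y`, so it is nonzero for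
some `y`. Then `v P'(y)` and `P'(y) v` centralize `w'` and `w` respectively, hence are scalars;
they agree and are nonzero, so `v` is a unit. Any `u ∈ V` is `v · (v⁻¹u)` with `v⁻¹u` centralizing
`w`, that is, a scalar multiple of `v`.
-/

open Quaternion

/-- An embedding of the quadratic order `O_D` into `B` is given by an element `w = φ(√D)`
with `w² = D·1` and `w ∉ F·1`. -/
def IsQuadEmbedding {F B : Type*} [Field F] [Ring B] [Algebra F B] (D : ℤ) (w : B) : Prop :=
  w ∉ Set.range (algebraMap F B) ∧ w ^ 2 = algebraMap F B (D : F)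

/-- Two embeddings, given by `w1 = φ1(√D1)` and `w2 = φ2(√D2)`, are `x`-linked if
`x = ½·trd(w1·w2)`; intrinsically, since `trd(w1·w2)·1 = w1·w2 + w2·w1`, this says
`w1·w2 + w2·w1 = 2x·1`. -/
def IsXLinked {F B : Type*} [Field F] [Ring B] [Algebra F B] (x : ℤ) (w1 w2 : B) : Prop :=
  w1 * w2 + w2 * w1 = algebraMap F B ((2 * x : ℤ) : F)

section Casimir

variable {F B : Type*} [Field F] [Ring B] [Algebra F B]

/-- The relations `w₁² = d₁`, `w₂² = d₂`, `w₁w₂ + w₂w₁ = 2x`, oriented as rewrite rules towards the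
spanning set `1, w₁, w₂, w₁w₂` of the algebra they generate. -/
structure LinkedPair (d1 d2 x : F) (w1 w2 : B) : Prop where
  sq1 : w1 * w1 = d1 • (1 : B)
  sq2 : w2 * w2 = d2 • (1 : B)
  swap : w2 * w1 = (2 * x) • (1 : B) - w1 * w2

namespace LinkedPair

variable {d1 d2 x : F} {w1 w2 : B}

lemma sq1_mul (h : LinkedPair d1 d2 x w1 w2) (y : B) : w1 * (w1 * y) = d1 • y := by
  rw [← mul_assoc, h.sq1, smul_mul_assoc, one_mul]

lemma sq2_mul (h : LinkedPair d1 d2 x w1 w2) (y : B) : w2 * (w2 * y) = d2 • y := by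
  rw [← mul_assoc, h.sq2, smul_mul_assoc, one_mul]

lemma swap_mul (h : LinkedPair d1 d2 x w1 w2) (y : B) :
    w2 * (w1 * y) = (2 * x) • y - w1 * (w2 * y) := by
  rw [← mul_assoc, h.swap, sub_mul, smul_mul_assoc, one_mul, mul_assoc]

end LinkedPair

lemma LinkedPair.of_isXLinked {D1 D2 x : ℤ} {w1 w2 : B} (h1 : IsQuadEmbedding (F := F) D1 w1)
    (h2 : IsQuadEmbedding (F := F) D2 w2) (h : IsXLinked (F := F) x w1 w2) :
    LinkedPair (D1 : F) (D2 : F) (x : F) w1 w2 := by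
  refine ⟨?_, ?_, ?_⟩
  · rw [← sq, h1.2, Algebra.algebraMap_eq_smul_one]
  · rw [← sq, h2.2, Algebra.algebraMap_eq_smul_one]
  · rw [eq_sub_iff_add_eq', h, Algebra.algebraMap_eq_smul_one]
    push_cast
    rfl

/-- The sum `δ ∑ₘ f(eₘ) e*ₘ` for the family `e = (1, w₁, w₂, w₁w₂ - x)` with
`δ = x² - d₁d₂`, given the values `a₀, a₁, a₂, a₃` of `f` on `e`. -/
def dualSum (d1 d2 x : F) (w1 w2 a0 a1 a2 a3 : B) : B :=
  (x ^ 2 - d1 * d2) • a0 - d2 • (a1 * w1) + x • (a1 * w2) + x • (a2 * w1) - d1 • (a2 * w2)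
    + a3 * (w1 * w2 - x • (1 : B))

/-- The averaging operator `b ↦ δ ∑ᵢ e'ᵢ b e*ᵢ` from the pair `(w₁, w₂)` to the pair
`(u₁, u₂)`. -/
def casimir (d1 d2 x : F) (u1 u2 w1 w2 b : B) : B :=
  dualSum d1 d2 x w1 w2 b (u1 * b) (u2 * b) ((u1 * u2 - x • (1 : B)) * b)

variable {d1 d2 x : F} {u1 u2 w1 w2 : B}

lemma casimir_left (hu : LinkedPair d1 d2 x u1 u2) (hw : LinkedPair d1 d2 x w1 w2) (b : B) :
    casimir d1 d2 x u1 u2 w1 w2 b * w1 = u1 * casimir d1 d2 x u1 u2 w1 w2 b := by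
  simp only [casimir, dualSum, mul_add, add_mul, mul_sub, sub_mul, smul_mul_assoc, mul_smul_comm,
    mul_assoc, one_mul, mul_one, smul_sub, hu.sq1_mul,
    hw.sq1, hw.swap, hw.sq1_mul]
  module

lemma casimir_right (hu : LinkedPair d1 d2 x u1 u2) (hw : LinkedPair d1 d2 x w1 w2) (b : B) :
    casimir d1 d2 x u1 u2 w1 w2 b * w2 = u2 * casimir d1 d2 x u1 u2 w1 w2 b := by
  simp only [casimir, dualSum, mul_add, add_mul, mul_sub, sub_mul, smul_mul_assoc, mul_smul_comm,
    mul_assoc, one_mul, mul_one, smul_sub, hu.sq2_mul,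
    hu.swap_mul, hw.sq2]
  module

/-- Summing the averages of the `b eₘ` against the dual family recovers `b`. -/
lemma casimir_dual_sum (hw : LinkedPair d1 d2 x w1 w2) (b : B) :
    dualSum d1 d2 x w1 w2 (casimir d1 d2 x u1 u2 w1 w2 (b * 1))
      (casimir d1 d2 x u1 u2 w1 w2 (b * w1)) (casimir d1 d2 x u1 u2 w1 w2 (b * w2))
      (casimir d1 d2 x u1 u2 w1 w2 (b * (w1 * w2 - x • (1 : B))))
      = (4 * (x ^ 2 - d1 * d2) ^ 2) • b := by
  simp only [casimir, dualSum, add_mul, mul_sub, sub_mul, smul_mul_assoc, mul_smul_comm,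
    mul_assoc, one_mul, mul_one, smul_sub, smul_add,
    hw.sq1, hw.sq2, hw.swap, hw.sq1_mul, hw.swap_mul]
  module

lemma exists_casimir_ne_zero [CharZero F] (hδ : x ^ 2 - d1 * d2 ≠ 0)
    (hw : LinkedPair d1 d2 x w1 w2) {b : B} (hb : b ≠ 0) :
    ∃ y, casimir d1 d2 x u1 u2 w1 w2 (b * y) ≠ 0 := by
  by_contra! H
  have h := casimir_dual_sum (u1 := u1) (u2 := u2) hw b
  simp only [H, dualSum, smul_zero, zero_mul, sub_zero, add_zero] at h
  have h4 : (4 * (x ^ 2 - d1 * d2) ^ 2 : F) ≠ 0 := mul_ne_zero (by norm_num) (pow_ne_zero _ hδ)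
  exact (smul_ne_zero h4 hb) h.symm

/-- An intertwiner `v` carries averages from `u` to `w` to averages from `u` to `u`. -/
lemma mul_casimir {v : B} (h1 : v * w1 = u1 * v) (h2 : v * w2 = u2 * v) (y : B) :
    v * casimir d1 d2 x w1 w2 u1 u2 y = casimir d1 d2 x u1 u2 u1 u2 (v * y) := by
  have h1' (z : B) : v * (w1 * z) = u1 * (v * z) := by rw [← mul_assoc, h1, mul_assoc]
  have h2' (z : B) : v * (w2 * z) = u2 * (v * z) := by rw [← mul_assoc, h2, mul_assoc]
  simp only [casimir, dualSum, mul_add, mul_sub, sub_mul, smul_mul_assoc, mul_smul_comm,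
    mul_assoc, one_mul, mul_one, h1', h2']

lemma LinkedPair.commutator_ne_zero [CharZero F] [Nontrivial B] (hδ : x ^ 2 - d1 * d2 ≠ 0)
    (hw : LinkedPair d1 d2 x w1 w2) : w1 * w2 - w2 * w1 ≠ 0 := by
  intro h
  -- the commutator is `2w₃`, whose square is `4δ`
  have h' : (w1 * w2 - w2 * w1) * (w1 * w2 - w2 * w1) = (4 * (x ^ 2 - d1 * d2)) • (1 : B) := by
    simp only [mul_sub, sub_mul, smul_mul_assoc, mul_smul_comm,
      mul_assoc, one_mul, mul_one, smul_sub,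
      hw.sq1, hw.sq2, hw.swap, hw.swap_mul]
    module
  rw [h, zero_mul] at h'
  exact smul_ne_zero (mul_ne_zero (by norm_num) hδ) one_ne_zero h'.symm

lemma exists_eq_smul_one_of_commute [CharZero F] (hB : IsQuaternionAlgebra F B)
    (hδ : x ^ 2 - d1 * d2 ≠ 0) (hw : LinkedPair d1 d2 x w1 w2)
    {c : B} (h1 : c * w1 = w1 * c) (h2 : c * w2 = w2 * c) :
    ∃ t : F, c = t • (1 : B) := by
  obtain ⟨a, b, ha, hb, ⟨e⟩⟩ := hB
  have : Nontrivial B := e.toEquiv.nontrivial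
  have hne : e w1 * e w2 - e w2 * e w1 ≠ 0 := by
    rw [← map_mul, ← map_mul, ← map_sub]
    exact (map_ne_zero_iff e e.injective).2 (hw.commutator_ne_zero hδ)
  replace h1 : e c * e w1 = e w1 * e c := by rw [← map_mul, h1, map_mul]
  replace h2 : e c * e w2 = e w2 * e c := by rw [← map_mul, h2, map_mul]
  suffices h : ∃ t : F, e c = t • (1 : ℍ[F, a, b]) by
    obtain ⟨t, ht⟩ := h
    exact ⟨t, e.injective (by simpa using ht)⟩
  generalize e c = c at *
  generalize e w1 = p at *
  generalize e w2 = q at *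
  have ha2 : 2 * a ≠ 0 := mul_ne_zero two_ne_zero ha
  have hb2 : 2 * b ≠ 0 := mul_ne_zero two_ne_zero hb
  have cross (r : ℍ[F, a, b]) (h : c * r = r * c) :
      c.imJ * r.imK = c.imK * r.imJ ∧ c.imI * r.imK = c.imK * r.imI ∧
        c.imI * r.imJ = c.imJ * r.imI := by
    have hI := congrArg QuaternionAlgebra.imI h
    have hJ := congrArg QuaternionAlgebra.imJ h
    have hK := congrArg QuaternionAlgebra.imK h
    simp only [QuaternionAlgebra.imI_mul, QuaternionAlgebra.imJ_mul,
      QuaternionAlgebra.imK_mul] at hI hJ hK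
    refine ⟨mul_left_cancel₀ hb2 ?_, mul_left_cancel₀ ha2 ?_, mul_left_cancel₀ two_ne_zero ?_⟩
    · linear_combination -hI
    · linear_combination hJ
    · linear_combination hK
  obtain ⟨p1, p2, p3⟩ := cross p h1
  obtain ⟨q1, q2, q3⟩ := cross q h2
  have key (s : F) (hs : s = c.imI ∨ s = c.imJ ∨ s = c.imK) : s = 0 := by
    by_contra hs0
    apply hne
    have m1 : p.imJ * q.imK = p.imK * q.imJ := by
      apply mul_left_cancel₀ hs0
      rcases hs with rfl | rfl | rfl <;> grind
    have m2 : p.imI * q.imK = p.imK * q.imI := by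
      apply mul_left_cancel₀ hs0
      rcases hs with rfl | rfl | rfl <;> grind
    have m3 : p.imI * q.imJ = p.imJ * q.imI := by
      apply mul_left_cancel₀ hs0
      rcases hs with rfl | rfl | rfl <;> grind
    ext
    · simp; ring
    · simp; linear_combination (-2 * b) * m1
    · simp; linear_combination (2 * a) * m2
    · simp; linear_combination 2 * m3
  refine ⟨c.re, ?_⟩
  ext
  · simp
  · simpa using key _ (Or.inl rfl)
  · simpa using key _ (Or.inr (Or.inl rfl))
  · simpa using key _ (Or.inr (Or.inr rfl))

end Casimir

/-- Let `F` be a field of characteristic zero, `B` a quaternion algebra over `F`, and let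
`D1, D2, x` be integers (with `D1, D2` discriminants) with `x² ≠ D1·D2`. Let `(φ1, φ2)` and
`(φ1′, φ2′)` be pairs of `x`-linked embeddings of `O_{D1}, O_{D2}` into `B`, given by elements
`wₙ = φₙ(√Dₙ)` and `wₙ′ = φₙ′(√Dₙ)`. Then `V := {v ∈ B : v·wₙ = wₙ′·v for n = 1, 2}` is a
1-dimensional `F`-vector space generated by an element of nonzero reduced norm (i.e. by a unit
of `B`); in particular the pairs are simultaneously conjugate: there is `r ∈ B^×` with
`r·wₙ·r⁻¹ = wₙ′` for `n = 1, 2`. -/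
theorem stmt1 {F B : Type*} [Field F] [CharZero F] [Ring B] [Algebra F B]
    (hB : IsQuaternionAlgebra F B)
    (D1 D2 x : ℤ)
    (hD1 : D1 % 4 = 0 ∨ D1 % 4 = 1) (hD2 : D2 % 4 = 0 ∨ D2 % 4 = 1)
    (hx : x ^ 2 ≠ D1 * D2)
    (w1 w2 w1' w2' : B)
    (h1 : IsQuadEmbedding (F := F) D1 w1) (h2 : IsQuadEmbedding (F := F) D2 w2)
    (h1' : IsQuadEmbedding (F := F) D1 w1') (h2' : IsQuadEmbedding (F := F) D2 w2')
    (hlink : IsXLinked (F := F) x w1 w2) (hlink' : IsXLinked (F := F) x w1' w2') :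
    ∃ r : Bˣ,
      {v : B | v * w1 = w1' * v ∧ v * w2 = w2' * v} =
        Set.range (fun c : F => c • (r : B)) ∧
      (r : B) * w1 * ((r⁻¹ : Bˣ) : B) = w1' ∧
      (r : B) * w2 * ((r⁻¹ : Bˣ) : B) = w2' := by
  have hw := LinkedPair.of_isXLinked h1 h2 hlink
  have hu := LinkedPair.of_isXLinked h1' h2' hlink'
  have hδ : (x : F) ^ 2 - (D1 : F) * (D2 : F) ≠ 0 := by
    rw [sub_ne_zero]
    exact_mod_cast hx
  have : Nontrivial B := by
    obtain ⟨a, b, -, -, ⟨e⟩⟩ := hB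
    exact e.toEquiv.nontrivial
  obtain ⟨y, hy⟩ := exists_casimir_ne_zero (u1 := w1') (u2 := w2') hδ hw (one_ne_zero (α := B))
  have hv1 := casimir_left hu hw (1 * y)
  have hv2 := casimir_right hu hw (1 * y)
  generalize casimir (D1 : F) (D2 : F) (x : F) w1' w2' w1 w2 (1 * y) = v at hy hv1 hv2
  obtain ⟨z, hz⟩ := exists_casimir_ne_zero (u1 := w1') (u2 := w2') hδ hu hy
  rw [← mul_casimir hv1 hv2] at hz
  have hs1 := casimir_left hw hu z
  have hs2 := casimir_right hw hu z
  generalize casimir (D1 : F) (D2 : F) (x : F) w1 w2 w1' w2' z = s at hz hs1 hs2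
  obtain ⟨c, hc⟩ := exists_eq_smul_one_of_commute hB hδ hu (c := v * s)
    (by rw [mul_assoc, hs1, ← mul_assoc, hv1, mul_assoc])
    (by rw [mul_assoc, hs2, ← mul_assoc, hv2, mul_assoc])
  obtain ⟨d, hd⟩ := exists_eq_smul_one_of_commute hB hδ hw (c := s * v)
    (by rw [mul_assoc, hv1, ← mul_assoc, hs1, mul_assoc])
    (by rw [mul_assoc, hv2, ← mul_assoc, hs2, mul_assoc])
  have hc0 : c ≠ 0 := by
    rintro rfl
    exact hz (by rw [hc, zero_smul])
  -- compare the two ways of evaluating `v s v`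
  have hcd : d = c := by
    have h : d • v = c • v := by
      calc d • v = v * (s * v) := by rw [hd, mul_smul_comm, mul_one]
        _ = c • v := by rw [← mul_assoc, hc, smul_mul_assoc, one_mul]
    exact smul_left_injective F hy h
  subst hcd
  let r : Bˣ := ⟨v, d⁻¹ • s, by rw [mul_smul_comm, hc, inv_smul_smul₀ hc0],
    by rw [smul_mul_assoc, hd, inv_smul_smul₀ hc0]⟩
  have hr : (r : B) = v := rfl
  refine ⟨r, ?_, ?_, ?_⟩
  · ext u
    simp only [Set.mem_ofPred_eq, Set.mem_range]
    constructor
    · rintro ⟨hu1, hu2⟩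
      obtain ⟨t, ht⟩ := exists_eq_smul_one_of_commute hB hδ hw (c := s * u)
        (by rw [mul_assoc, hu1, ← mul_assoc, hs1, mul_assoc])
        (by rw [mul_assoc, hu2, ← mul_assoc, hs2, mul_assoc])
      refine ⟨d⁻¹ * t, ?_⟩
      have h : d • u = t • v := by
        calc d • u = v * s * u := by rw [hc, smul_mul_assoc, one_mul]
          _ = t • v := by rw [mul_assoc, ht, mul_smul_comm, mul_one]
      rw [hr, mul_smul, ← h, inv_smul_smul₀ hc0]
    · rintro ⟨t, rfl⟩
      rw [hr]
      simp only [smul_mul_assoc, mul_smul_comm, hv1, hv2, and_self]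
  · rw [Units.mul_inv_eq_iff_eq_mul]
    exact hv1
  · rw [Units.mul_inv_eq_iff_eq_mul]
    exact hv2
end

section
/- Let B be a quaternion algebra over a field F of characteristic not equal to 2, and let x ∈ B with x ∉ F·1 and x² = n·1 for some n ∈ F^×. Then there exist m ∈ F^× and an F-algebra isomorphism θ : B → ℍ[F,n,m] satisfying θ(x) = i. -/
/-!
Transport `x` to `ℍ[F,a,b]`. Since `x² = n` and `x` is not a scalar, `x` is a pure quaternion
(characteristic not `2`). On pure quaternions the square is a nondegenerate ternary quadratic form,
so some pure `y` orthogonal to `x` has `y² = m ≠ 0`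
(`exists_orthogonal_anisotropic`), and orthogonality means `x * y = -(y * x)`. Thus `i ↦ x`, `j ↦ y`
defines an algebra map `ℍ[F,n,m] → ℍ[F,a,b]`. It preserves the real part, because `x`, `y` and
`x * y` are pure; as the form `(z, w) ↦ re (z * w)` on `ℍ[F,n,m]` is nondegenerate, the map is
injective (`injective_of_re_eq`), and it is bijective because both sides have dimension `4`.
-/

open Quaternion

/-- For the ternary form `⟨a, b, -ab⟩`, the orthogonal complement of a nonzero vector contains an
anisotropic vector. -/
lemma exists_orthogonal_anisotropic {F : Type*} [Field F] (hchar : (2 : F) ≠ 0) {a b : F}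
    (ha : a ≠ 0) (hb : b ≠ 0) {e f g : F} (h : ¬ (e = 0 ∧ f = 0 ∧ g = 0)) :
    ∃ p q r : F, a * e * p + b * f * q - a * b * g * r = 0 ∧
      a * p ^ 2 + b * q ^ 2 - a * b * r ^ 2 ≠ 0 := by
  -- The three obvious vectors orthogonal to `(e, f, g)`; they cannot all be isotropic.
  by_contra! H
  have h1 := H (b * f) (-(a * e)) 0 (by ring)
  have h2 := H (b * g) 0 e (by ring)
  have h3 := H 0 (a * g) f (by ring)
  have hab : a * b ≠ 0 := mul_ne_zero ha hb
  have h1' : a * e ^ 2 + b * f ^ 2 = 0 :=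
    (mul_eq_zero.mp (by linear_combination h1 : a * b * (a * e ^ 2 + b * f ^ 2) = 0)).resolve_left hab
  have h2' : b * g ^ 2 - e ^ 2 = 0 :=
    (mul_eq_zero.mp (by linear_combination h2 : a * b * (b * g ^ 2 - e ^ 2) = 0)).resolve_left hab
  have h3' : a * g ^ 2 - f ^ 2 = 0 :=
    (mul_eq_zero.mp (by linear_combination h3 : a * b * (a * g ^ 2 - f ^ 2) = 0)).resolve_left hab
  have hg : g = 0 := by
    have : (2 * (a * b)) * g ^ 2 = 0 := by linear_combination h1' + a * h2' + b * h3'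
    exact pow_eq_zero_iff two_ne_zero |>.mp
      ((mul_eq_zero.mp this).resolve_left (mul_ne_zero hchar hab))
  subst hg
  refine h ⟨?_, ?_, rfl⟩
  · exact pow_eq_zero_iff two_ne_zero |>.mp (by linear_combination -h2')
  · exact pow_eq_zero_iff two_ne_zero |>.mp (by linear_combination -h3')

/-- In characteristic not `2`, a non-scalar quaternion whose square is a scalar is pure. -/
lemma re_eq_zero_of_sq_eq {F : Type*} [Field F] (hchar : (2 : F) ≠ 0) {a b n : F} {x : ℍ[F, a, b]}
    (hx : x ∉ Set.range (algebraMap F ℍ[F, a, b])) (hxn : x ^ 2 = algebraMap F _ n) :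
    x.re = 0 := by
  by_contra ht
  rw [pow_two] at hxn
  have h1 := congrArg QuaternionAlgebra.imI hxn
  have h2 := congrArg QuaternionAlgebra.imJ hxn
  have h3 := congrArg QuaternionAlgebra.imK hxn
  simp only [QuaternionAlgebra.imI_mul, QuaternionAlgebra.imJ_mul, QuaternionAlgebra.imK_mul,
    QuaternionAlgebra.coe_algebraMap, QuaternionAlgebra.imI_coe, QuaternionAlgebra.imJ_coe,
    QuaternionAlgebra.imK_coe] at h1 h2 h3
  have key : ∀ u : F, 2 * x.re * u = 0 → u = 0 := fun u hu =>
    (mul_eq_zero.mp hu).resolve_left (mul_ne_zero hchar ht)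
  refine hx ⟨x.re, ?_⟩
  rw [QuaternionAlgebra.coe_algebraMap]
  ext
  · simp
  · simpa using (key x.imI (by linear_combination h1)).symm
  · simpa using (key x.imJ (by linear_combination h2)).symm
  · simpa using (key x.imK (by linear_combination h3)).symm

/-- An algebra map preserving real parts is injective: if `z` is in the kernel, so are
`z`, `z * i`, `z * j`, `z * k`, whose real parts are nonzero multiples of the coordinates of `z`. -/
lemma injective_of_re_eq {F : Type*} [Field F] {a b n m : F} (hn : n ≠ 0) (hm : m ≠ 0)
    (φ : ℍ[F, n, m] →ₐ[F] ℍ[F, a, b]) (hφ : ∀ w, (φ w).re = w.re) : Function.Injective φ := by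
  rw [injective_iff_map_eq_zero]
  intro z hz
  have key : ∀ w, (z * w).re = 0 := fun w => by rw [← hφ, map_mul, hz, zero_mul]; rfl
  have h0 := key 1
  have h1 := key ⟨0, 1, 0, 0⟩
  have h2 := key ⟨0, 0, 1, 0⟩
  have h3 := key ⟨0, 0, 0, 1⟩
  ext <;> simp_all

/-- Let `B` be a quaternion algebra over a field `F` of characteristic not equal to `2`, and let
`x ∈ B` with `x ∉ F·1` and `x² = n·1` for some `n ∈ F^×`. Then there exist `m ∈ F^×` and an
`F`-algebra isomorphism `θ : B → ℍ[F,n,m]` satisfying `θ(x) = i`. -/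
theorem stmt2 {F B : Type*} [Field F] [Ring B] [Algebra F B]
    (hchar : (2 : F) ≠ 0)
    (hB : IsQuaternionAlgebra F B)
    (x : B) (hx : x ∉ Set.range (algebraMap F B))
    (n : F) (hn : n ≠ 0) (hxn : x ^ 2 = algebraMap F B n) :
    ∃ m : F, m ≠ 0 ∧ ∃ θ : B ≃ₐ[F] ℍ[F, n, m], θ x = (⟨0, 1, 0, 0⟩ : ℍ[F, n, m]) := by
  obtain ⟨a, b, ha, hb, ⟨ψ⟩⟩ := hB
  obtain ⟨X, hX⟩ : ∃ X, X = ψ x := ⟨_, rfl⟩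
  have hXr : X ∉ Set.range (algebraMap F ℍ[F, a, b]) := by
    rintro ⟨c, hc⟩
    exact hx ⟨c, ψ.injective (by rw [AlgEquiv.commutes, hc, hX])⟩
  have hXn : X ^ 2 = algebraMap F _ n := by rw [hX, ← map_pow, hxn, AlgEquiv.commutes]
  have hre := re_eq_zero_of_sq_eq hchar hXr hXn
  have hne : ¬ (X.imI = 0 ∧ X.imJ = 0 ∧ X.imK = 0) := by
    rintro ⟨h1, h2, h3⟩
    exact hXr ⟨0, by rw [map_zero]; ext <;> simp [hre, h1, h2, h3]⟩
  obtain ⟨p, q, r, horth, hm⟩ := exists_orthogonal_anisotropic hchar ha hb hne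
  set m := a * p ^ 2 + b * q ^ 2 - a * b * r ^ 2 with hmdef
  obtain ⟨Y, hY⟩ : ∃ Y : ℍ[F, a, b], Y = ⟨0, p, q, r⟩ := ⟨_, rfl⟩
  let β : QuaternionAlgebra.Basis ℍ[F, a, b] n 0 m :=
    { i := X
      j := Y
      k := X * Y
      i_mul_i := by rw [← pow_two, hXn, Algebra.algebraMap_eq_smul_one, zero_smul, add_zero]
      j_mul_j := by
        subst hY
        ext <;> simp [hmdef] <;> ring
      i_mul_j := rfl
      j_mul_i := by
        subst hY
        ext <;> simp [hre]
        · linear_combination 2 * horth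
        all_goals ring }
  have hφ : ∀ w, (β.liftHom w).re = w.re := by
    intro w
    have hk : (X * Y).re = 0 := by
      subst hY
      simp [hre]
      linear_combination horth
    have hYr : Y.re = 0 := by rw [hY]
    change (algebraMap F _ w.re + w.imI • X + w.imJ • Y + w.imK • (X * Y)).re = w.re
    rw [QuaternionAlgebra.coe_algebraMap]
    simp only [QuaternionAlgebra.re_add, QuaternionAlgebra.re_smul, QuaternionAlgebra.re_coe, hre,
      hYr, hk, smul_zero, add_zero]
  have hinj := injective_of_re_eq hn hm β.liftHom hφ
  have hbij : Function.Bijective β.liftHom :=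
    ⟨hinj, (LinearMap.injective_iff_surjective_of_finrank_eq_finrank
      (f := β.liftHom.toLinearMap) (by simp only [QuaternionAlgebra.finrank_eq_four])).mp hinj⟩
  refine ⟨m, hm, ψ.trans (AlgEquiv.ofBijective β.liftHom hbij).symm, ?_⟩
  rw [AlgEquiv.trans_apply, AlgEquiv.symm_apply_eq, ← hX]
  change X = algebraMap F _ 0 + (1 : F) • X + (0 : F) • Y + (0 : F) • (X * Y)
  simp
end

section
/- Let B be a quaternion algebra over ℚ, O an order of B, and let D1, D2 be discriminants with parities p_{D1}, p_{D2}. Let v1, v2 ∈ O be such that w_i := 2·v_i − p_{D_i}·1 satisfies w_i² = D_i·1 and w_i ∉ ℚ·1 (i = 1, 2). Then: (a) x := ½·trd(w1·w2) is an integer and x ≡ D1·D2 (mod 2); (b) the element T := w1·w2 satisfies T² − 2x·T + D1·D2·1 = 0; and (c) (T − x·1)/2 ∈ O, so that T determines an embedding of the quadratic order of discriminant x² − D1·D2 into O. -/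
/-!
A non-scalar element of a quaternion algebra whose square is a scalar has reduced trace `0`
(`re_eq_zero_of_sq`), and two trace-zero elements have a scalar anticommutator
(`exists_anticommutator_eq`). Hence `w1 * w2 + w2 * w1 = s` is rational. Write `pᵢ = Dᵢ % 2`.
As `vᵢ` has conjugate `pᵢ - vᵢ`, the reduced trace `t = v1 * v2 + (p2 - v2) * (p1 - v1)` of
`v1 * v2` lies in the order, and `4 * t = s + 2 * p1 * p2`. So `t` is a rational number in a ring
finite over `ℤ`, i.e. an integer (`exists_int_of_algebraMap_mem`), and
`x = s / 2 = 2 * t - p1 * p2` is an integer congruent to `p1 * p2`, hence to `D1 * D2`, modulo `2`.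
The quadratic equation for `w1 * w2` comes from `w1 ^ 2` being central, and the last claim from
`(w1 * w2 - x) / 2 = 2 * v1 * v2 - p2 * v1 - p1 * v2 + (p1 * p2 - t)`.
-/

open Quaternion

/-- An order of a quaternion algebra `B` over `ℚ`: a unital subring of `B` that is finitely
generated as a `ℤ`-module and contains a basis of `B` over `ℚ` (equivalently, spans `B`
over `ℚ`). -/
def IsOrder {B : Type*} [Ring B] [Algebra ℚ B] (O : Subring B) : Prop :=
  (AddSubgroup.toIntSubmodule O.toAddSubgroup).FG ∧
    Submodule.span ℚ (O : Set B) = ⊤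

theorem re_eq_zero_of_sq {a b d : ℚ} (q : ℍ[ℚ,a,b]) (hq : q ^ 2 = algebraMap ℚ ℍ[ℚ,a,b] d)
    (hns : q ∉ Set.range (algebraMap ℚ ℍ[ℚ,a,b])) : q.re = 0 := by
  by_contra hre
  apply hns
  have hI := congrArg QuaternionAlgebra.imI hq
  have hJ := congrArg QuaternionAlgebra.imJ hq
  have hK := congrArg QuaternionAlgebra.imK hq
  simp only [pow_two, QuaternionAlgebra.imI_mul, QuaternionAlgebra.imJ_mul,
    QuaternionAlgebra.imK_mul, QuaternionAlgebra.algebraMap_eq] at hI hJ hK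
  refine ⟨q.re, ?_⟩
  rw [QuaternionAlgebra.algebraMap_eq]
  ext
  · rfl
  · exact (mul_left_cancel₀ hre (by linarith : q.re * q.imI = q.re * 0)).symm
  · exact (mul_left_cancel₀ hre (by linarith : q.re * q.imJ = q.re * 0)).symm
  · exact (mul_left_cancel₀ hre (by linarith : q.re * q.imK = q.re * 0)).symm

theorem exists_anticommutator_eq {B : Type*} [Ring B] [Algebra ℚ B]
    (hB : IsQuaternionAlgebra ℚ B) {d1 d2 : ℚ} {w1 w2 : B}
    (h1 : w1 ^ 2 = algebraMap ℚ B d1) (h2 : w2 ^ 2 = algebraMap ℚ B d2)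
    (hn1 : w1 ∉ Set.range (algebraMap ℚ B)) (hn2 : w2 ∉ Set.range (algebraMap ℚ B)) :
    ∃ s : ℚ, w1 * w2 + w2 * w1 = algebraMap ℚ B s := by
  obtain ⟨a, b, -, -, ⟨e⟩⟩ := hB
  have key : ∀ (w : B) (d : ℚ), w ^ 2 = algebraMap ℚ B d →
      w ∉ Set.range (algebraMap ℚ B) → (e w).re = 0 := by
    intro w d h hn
    refine re_eq_zero_of_sq (d := d) (e w) (by rw [← map_pow, h, AlgEquiv.commutes]) ?_
    rintro ⟨r, hr⟩
    exact hn ⟨r, e.injective (by rw [AlgEquiv.commutes, hr])⟩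
  have r1 := key w1 d1 h1 hn1
  have r2 := key w2 d2 h2 hn2
  refine ⟨(e w1 * e w2 + e w2 * e w1).re, e.injective ?_⟩
  rw [AlgEquiv.commutes, map_add, map_mul, map_mul, QuaternionAlgebra.algebraMap_eq]
  ext
  · rfl
  all_goals
    simp [r1, r2]
    try ring

theorem exists_int_of_algebraMap_mem {B : Type*} [Ring B] [Algebra ℚ B] [Nontrivial B]
    {O : Subring B} (hO : (AddSubgroup.toIntSubmodule O.toAddSubgroup).FG) {t : ℚ}
    (ht : algebraMap ℚ B t ∈ O) : ∃ n : ℤ, t = n := by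
  have : Module.Finite ℤ O :=
    Module.Finite.iff_fg (N := AddSubgroup.toIntSubmodule O.toAddSubgroup) |>.2 hO
  have h1 : IsIntegral ℤ (⟨_, ht⟩ : O) := IsIntegral.of_finite ℤ _
  have h2 : IsIntegral ℤ (algebraMap ℚ B t) := h1.map (O.subtype.toIntAlgHom)
  have h3 : IsIntegral ℤ t :=
    (isIntegral_algHom_iff ((algebraMap ℚ B).toIntAlgHom) (algebraMap ℚ B).injective).1 h2
  obtain ⟨n, hn⟩ := IsIntegrallyClosed.isIntegral_iff.1 h3
  exact ⟨n, by simpa using hn.symm⟩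


/-- Let `B` be a quaternion algebra over `ℚ`, `O` an order of `B`, and let `D1, D2` be
discriminants with parities `p_{D1}, p_{D2}`. Let `v1, v2 ∈ O` be such that
`wᵢ := 2·vᵢ − p_{Dᵢ}·1` satisfies `wᵢ² = Dᵢ·1` and `wᵢ ∉ ℚ·1`. Then:
(a) `x := ½·trd(w1·w2)` is an integer (i.e. `w1·w2 + w2·w1 = 2x·1` for some `x ∈ ℤ`) and
`x ≡ D1·D2 (mod 2)`; (b) `T := w1·w2` satisfies `T² − 2x·T + D1·D2·1 = 0`; and
(c) `(T − x·1)/2 ∈ O`, so that `T` determines an embedding of the quadratic order of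
discriminant `x² − D1·D2` into `O`. -/
theorem stmt3 {B : Type*} [Ring B] [Algebra ℚ B]
    (hB : IsQuaternionAlgebra ℚ B)
    (O : Subring B) (hO : IsOrder O)
    (D1 D2 : ℤ)
    (hD1 : D1 % 4 = 0 ∨ D1 % 4 = 1) (hD2 : D2 % 4 = 0 ∨ D2 % 4 = 1)
    (v1 v2 : B) (hv1 : v1 ∈ O) (hv2 : v2 ∈ O)
    (w1 w2 : B)
    (hw1 : w1 = 2 * v1 - algebraMap ℚ B ((D1 % 2 : ℤ) : ℚ))
    (hw2 : w2 = 2 * v2 - algebraMap ℚ B ((D2 % 2 : ℤ) : ℚ))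
    (hw1sq : w1 ^ 2 = algebraMap ℚ B ((D1 : ℤ) : ℚ))
    (hw2sq : w2 ^ 2 = algebraMap ℚ B ((D2 : ℤ) : ℚ))
    (hw1ns : w1 ∉ Set.range (algebraMap ℚ B))
    (hw2ns : w2 ∉ Set.range (algebraMap ℚ B)) :
    ∃ x : ℤ,
      w1 * w2 + w2 * w1 = algebraMap ℚ B ((2 * x : ℤ) : ℚ) ∧
      x % 2 = (D1 * D2) % 2 ∧
      (w1 * w2) ^ 2 - algebraMap ℚ B ((2 * x : ℤ) : ℚ) * (w1 * w2) +
        algebraMap ℚ B ((D1 * D2 : ℤ) : ℚ) = 0 ∧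
      (2 : ℚ)⁻¹ • (w1 * w2 - algebraMap ℚ B ((x : ℤ) : ℚ)) ∈ O := by
  have hnt : Nontrivial B := by
    refine ⟨w1, 0, ?_⟩
    rintro rfl
    exact hw1ns ⟨0, map_zero _⟩
  obtain ⟨s, hs⟩ := exists_anticommutator_eq hB hw1sq hw2sq hw1ns hw2ns
  set p1 : ℤ := D1 % 2 with hp1
  set p2 : ℤ := D2 % 2 with hp2
  simp only [map_intCast] at hw1 hw2 hw1sq hw2sq ⊢
  have c1 : ∀ y : B, y * (p1 : B) = p1 * y := fun y => (Int.cast_commute p1 y).symm.eq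
  have c2 : ∀ y : B, y * (p2 : B) = p2 * y := fun y => (Int.cast_commute p2 y).symm.eq
  -- `trd (v1 * v2) = (s + 2 * p1 * p2) / 4`
  have htr : v1 * v2 + (p2 - v2) * (p1 - v1) = algebraMap ℚ B ((s + 2 * p1 * p2) / 4) := by
    have h4 : (4 : ℚ) • (v1 * v2 + (p2 - v2) * (p1 - v1)) =
        w1 * w2 + w2 * w1 + 2 * (p1 : B) * p2 := by
      rw [ofNat_smul_eq_nsmul, hw1, hw2]
      simp only [mul_sub, sub_mul, c1 v2, c2, two_mul, mul_add, add_mul]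
      abel
    have h5 : v1 * v2 + (p2 - v2) * (p1 - v1) = (4 : ℚ)⁻¹ • (4 : ℚ) •
        (v1 * v2 + (p2 - v2) * (p1 - v1)) := by
      rw [smul_smul]; norm_num
    rw [h5, h4, hs, Algebra.smul_def]
    have : algebraMap ℚ B s + 2 * (p1 : B) * p2 = algebraMap ℚ B (s + 2 * p1 * p2) := by
      simp [map_ofNat (algebraMap ℚ B) 2]
    rw [this, ← map_mul]
    congr 1
    ring
  obtain ⟨t, ht⟩ := exists_int_of_algebraMap_mem hO.1 (htr ▸
    O.add_mem (O.mul_mem hv1 hv2) (O.mul_mem (O.sub_mem (intCast_mem O p2) hv2)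
      (O.sub_mem (intCast_mem O p1) hv1)))
  have hsx : s = ((2 * (2 * t - p1 * p2) : ℤ) : ℚ) := by
    push_cast
    linarith
  rw [hsx, map_intCast] at hs
  refine ⟨2 * t - p1 * p2, hs, ?_, ?_, ?_⟩
  · have : D1 * D2 % 2 = p1 * p2 % 2 := Int.mul_emod _ _ _
    omega
  · have hD : w2 * w1 * (w1 * w2) = ((D1 * D2 : ℤ) : B) := by
      calc w2 * w1 * (w1 * w2) = w2 * w1 ^ 2 * w2 := by simp only [pow_two, mul_assoc]
        _ = D1 * w2 ^ 2 := by
          rw [hw1sq, (Int.cast_commute D1 w2).symm.eq, mul_assoc, pow_two]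
        _ = _ := by rw [hw2sq]; push_cast; rfl
    rw [← hs, ← hD]
    noncomm_ring
  · have h2 : w1 * w2 - ((2 * t - p1 * p2 : ℤ) : B) =
        (2 : ℚ) • (2 * (v1 * v2) - p2 * v1 - p1 * v2 + ((p1 * p2 - t : ℤ) : B)) := by
      rw [ofNat_smul_eq_nsmul, hw1, hw2]
      push_cast
      simp only [mul_sub, sub_mul, c2, two_mul, mul_add, add_mul]
      abel
    rw [h2, smul_smul, inv_mul_cancel₀ two_ne_zero, one_smul]
    exact O.add_mem (O.sub_mem (O.sub_mem (O.mul_mem (ofNat_mem O 2) (O.mul_mem hv1 hv2))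
      (O.mul_mem (intCast_mem O p2) hv1)) (O.mul_mem (intCast_mem O p1) hv2)) (intCast_mem O _)
end

section
/- Let p be a prime and e ≥ 0 an integer, and let A, B ∈ M₂(ℚ_p) both lie in the standard Eichler order of level pᵉ (all entries in ℤ_p and lower-left entry in pᵉℤ_p). Then det(A·B − B·A) ∈ pᵉℤ_p. -/
/-- Let `p` be a prime and `e ≥ 0` an integer, and let `A, B ∈ M₂(ℚ_p)` both lie in the
standard Eichler order of level `pᵉ` (all entries in `ℤ_p` and lower-left entry in `pᵉℤ_p`).
Then `det(A·B − B·A) ∈ pᵉℤ_p`. -/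
theorem stmt4 (p : ℕ) [Fact p.Prime] (e : ℕ)
    (A B : Matrix (Fin 2) (Fin 2) ℚ_[p])
    (hA : ∀ i j, ∃ a : ℤ_[p], A i j = (a : ℚ_[p]))
    (hA' : ∃ a : ℤ_[p], A 1 0 = ((p : ℚ_[p]) ^ e) * (a : ℚ_[p]))
    (hB : ∀ i j, ∃ b : ℤ_[p], B i j = (b : ℚ_[p]))
    (hB' : ∃ b : ℤ_[p], B 1 0 = ((p : ℚ_[p]) ^ e) * (b : ℚ_[p])) :
    ∃ c : ℤ_[p], (A * B - B * A).det = ((p : ℚ_[p]) ^ e) * (c : ℚ_[p]) := by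
  obtain ⟨a, ha⟩ := hA 0 0
  obtain ⟨b, hb⟩ := hA 0 1
  obtain ⟨c, hc⟩ := hA'
  obtain ⟨d, hd⟩ := hA 1 1
  obtain ⟨x, hx⟩ := hB 0 0
  obtain ⟨y, hy⟩ := hB 0 1
  obtain ⟨z, hz⟩ := hB'
  obtain ⟨w, hw⟩ := hB 1 1
  -- Both the diagonal entries `±pᵉ(bz - yc)` and the lower-left entry of the commutator are
  -- divisible by `pᵉ`; the witness is its determinant with one factor `pᵉ` removed.
  refine ⟨-((p : ℤ_[p]) ^ e * (b * z - y * c) ^ 2 +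
    (a * y + b * w - x * b - y * d) * (c * x + d * z - z * a - w * c)), ?_⟩
  simp only [Matrix.det_fin_two, Matrix.sub_apply, Matrix.mul_apply, Fin.sum_univ_two,
    ha, hb, hc, hd, hx, hy, hz, hw]
  push_cast
  ring
end

section
/- Let B be a quaternion algebra over ℚ_p that is a division ring, and let v1, v2 ∈ B be integral elements, i.e., trd(v1), trd(v2), nrd(v1), nrd(v2) ∈ ℤ_p. Then nrd(v1·v2 − v2·v1) ∈ p·ℤ_p. -/
/-!
Write `N` for the reduced norm. In a division algebra `N` is anisotropic, since `N z = 0` means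
`z * star z = 0`. Both halves of the argument produce, by Hensel's lemma, a zero of `N` restricted
to a small lattice, and so a linear relation between `1`, `v1`, `v2`.

* The polar form `s = trd (v1 * star v2)` is integral. Otherwise, dividing
  `N (x v1 + v2) = n1 x² + s x + n2` by `s` gives a polynomial over `ℤ_p` that reduces to `x`
  modulo `p`, hence has a root `x ∈ ℤ_p`. Then `v2 = - x v1`, and `s = -2 x n1` is integral
  after all.
* The norm of the commutator `v1 * v2 - v2 * v1` is the half-discriminant of the ternary form
  `N (x + y v1 + z v2)`, which has coefficients in `ℤ_p` by the first step. If it were a unit, this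
  form would define a smooth conic over `𝔽_p` (in every characteristic, including `2`).
  By Chevalley–Warning the conic has a point, which lifts to `ℤ_p` by Hensel's lemma. This gives
  a nontrivial relation `x + y v1 + z v2 = 0`, so `v1` and `v2` commute and the commutator has
  norm `0`, which is not a unit.
-/

open Quaternion

namespace CommutatorNorm

/-! ### Ternary quadratic forms -/

/-- The ternary quadratic form with diagonal coefficients `A, B, C` and cross coefficients
`u, v, w` at `yz, xz, xy`. -/
def tern {R : Type*} [CommRing R] (A B C u v w x y z : R) : R :=
  A * x ^ 2 + B * y ^ 2 + C * z ^ 2 + u * (y * z) + v * (x * z) + w * (x * y)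

/-- The half-discriminant of `tern`: half the determinant of the Gram matrix of its polar form,
written so that it makes sense in characteristic `2`. -/
def halfDisc {R : Type*} [CommRing R] (A B C u v w : R) : R :=
  4 * A * B * C + u * v * w - A * u ^ 2 - B * v ^ 2 - C * w ^ 2

/-- A ternary quadratic form over `𝔽_p` has a nontrivial zero (Chevalley–Warning). -/
lemma exists_zero_zmod (p : ℕ) [Fact p.Prime] (A B C u v w : ZMod p) :
    ∃ x y z : ZMod p, tern A B C u v w x y z = 0 ∧ (x ≠ 0 ∨ y ≠ 0 ∨ z ≠ 0) := by
  classical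
  let X : Fin 3 → MvPolynomial (Fin 3) (ZMod p) := MvPolynomial.X
  let K : ZMod p → MvPolynomial (Fin 3) (ZMod p) := MvPolynomial.C
  let f : MvPolynomial (Fin 3) (ZMod p) :=
    K A * (X 0 * X 0) + K B * (X 1 * X 1) + K C * (X 2 * X 2) + K u * (X 1 * X 2)
      + K v * (X 0 * X 2) + K w * (X 0 * X 1)
  have hmon : ∀ (c : ZMod p) (i j : Fin 3), (K c * (X i * X j)).IsHomogeneous 2 := by
    intro c i j
    have := (MvPolynomial.isHomogeneous_C (Fin 3) c).mul
      ((MvPolynomial.isHomogeneous_X (ZMod p) i).mul (MvPolynomial.isHomogeneous_X (ZMod p) j))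
    simpa using this
  have hf : f.IsHomogeneous 2 :=
    (((((hmon A 0 0).add (hmon B 1 1)).add (hmon C 2 2)).add (hmon u 1 2)).add (hmon v 0 2)).add
      (hmon w 0 1)
  have hdeg : f.totalDegree < Fintype.card (Fin 3) := by
    have := hf.totalDegree_le
    simp only [Fintype.card_fin]
    omega
  have heval : ∀ g : Fin 3 → ZMod p,
      MvPolynomial.eval g f = tern A B C u v w (g 0) (g 1) (g 2) := by
    intro g
    simp only [f, X, K, map_add, map_mul, MvPolynomial.eval_C, MvPolynomial.eval_X, tern]
    ring
  have hdvd := char_dvd_card_solutions p hdeg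
  by_contra! hno
  -- Otherwise the origin is the only zero, and `p` does not divide `1`.
  have hone : Fintype.card { g : Fin 3 → ZMod p // MvPolynomial.eval g f = 0 } = 1 := by
    rw [Fintype.card_eq_one_iff]
    refine ⟨⟨0, ?_⟩, ?_⟩
    · rw [heval]; simp [tern]
    · rintro ⟨g, hg⟩
      rw [heval] at hg
      obtain ⟨h0, h1, h2⟩ := hno _ _ _ hg
      ext i
      fin_cases i <;> simpa
  rw [hone] at hdvd
  exact (Fact.out : p.Prime).one_lt.ne' (Nat.dvd_one.mp hdvd)

/-- The square of a coordinate times the half-discriminant lies in the ideal generated by the form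
and its partial derivatives. Hence the conic is smooth when the half-discriminant is a unit. -/
lemma halfDisc_mul_sq {R : Type*} [CommRing R] (A B C u v w x y z : R) :
    halfDisc A B C u v w * x ^ 2 = (4 * B * C - u ^ 2) * tern A B C u v w x y z
      - C * (w * x + 2 * B * y + u * z) ^ 2
      + u * ((w * x + 2 * B * y + u * z) * (v * x + u * y + 2 * C * z))
      - B * (v * x + u * y + 2 * C * z) ^ 2 := by
  simp only [halfDisc, tern]; ring

lemma eq_zero_of_grad {K : Type*} [Field K] {A B C u v w x y z : K}
    (hD : halfDisc A B C u v w ≠ 0) (h : tern A B C u v w x y z = 0)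
    (hy : w * x + 2 * B * y + u * z = 0) (hz : v * x + u * y + 2 * C * z = 0) : x = 0 := by
  have := halfDisc_mul_sq A B C u v w x y z
  rw [h, hy, hz] at this
  simpa [hD] using this

lemma exists_smooth_zero_zmod (p : ℕ) [Fact p.Prime] {A B C u v w : ZMod p}
    (hD : halfDisc A B C u v w ≠ 0) :
    ∃ x y z : ZMod p, tern A B C u v w x y z = 0 ∧ (x ≠ 0 ∨ y ≠ 0 ∨ z ≠ 0) ∧
      (2 * A * x + (v * z + w * y) ≠ 0 ∨ 2 * B * y + (u * z + w * x) ≠ 0 ∨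
        2 * C * z + (u * y + v * x) ≠ 0) := by
  obtain ⟨x, y, z, h, hne⟩ := exists_zero_zmod p A B C u v w
  refine ⟨x, y, z, h, hne, ?_⟩
  by_contra! hgrad
  obtain ⟨gx, gy, gz⟩ := hgrad
  have hx0 : x = 0 :=
    eq_zero_of_grad hD h (by linear_combination gy) (by linear_combination gz)
  have hy0 : y = 0 :=
    eq_zero_of_grad (A := B) (B := A) (C := C) (u := v) (v := u) (w := w) (y := x) (z := z)
      (by rw [show halfDisc B A C v u w = halfDisc A B C u v w by simp only [halfDisc]; ring]
          exact hD)
      (by rw [← h]; simp only [tern]; ring)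
      (by linear_combination gx) (by linear_combination gz)
  have hz0 : z = 0 :=
    eq_zero_of_grad (A := C) (B := B) (C := A) (u := w) (v := v) (w := u) (y := y) (z := x)
      (by rw [show halfDisc C B A w v u = halfDisc A B C u v w by simp only [halfDisc]; ring]
          exact hD)
      (by rw [← h]; simp only [tern]; ring)
      (by linear_combination gy) (by linear_combination gx)
  simp [hx0, hy0, hz0] at hne

/-! ### Lifting to the p-adic integers -/

lemma exists_root_quadratic {p : ℕ} [Fact p.Prime] (α β γ x₀ : ℤ_[p])
    (h : PadicInt.toZMod (α * x₀ ^ 2 + β * x₀ + γ) = 0)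
    (h' : PadicInt.toZMod (2 * α * x₀ + β) ≠ 0) :
    ∃ x : ℤ_[p], α * x ^ 2 + β * x + γ = 0 ∧ PadicInt.toZMod x = PadicInt.toZMod x₀ := by
  have hker : ∀ c : ℤ_[p], PadicInt.toZMod c = 0 ↔ ‖c‖ < 1 := fun c => by
    rw [← RingHom.mem_ker, PadicInt.ker_toZMod, IsLocalRing.mem_maximalIdeal,
      PadicInt.mem_nonunits]
  let F : Polynomial ℤ_[p] :=
    Polynomial.C α * Polynomial.X ^ 2 + Polynomial.C β * Polynomial.X + Polynomial.C γ
  have hF : ∀ c, Polynomial.aeval c F = α * c ^ 2 + β * c + γ := fun c => by simp [F]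
  have hF' : ∀ c, Polynomial.aeval c (Polynomial.derivative F) = 2 * α * c + β := fun c => by
    simp [F]; ring
  have hd : ‖Polynomial.aeval x₀ (Polynomial.derivative F)‖ = 1 := by
    rw [hF']
    rw [Ne, hker, not_lt] at h'
    exact le_antisymm (PadicInt.norm_le_one _) h'
  obtain ⟨x, hx, hclose, -⟩ := hensels_lemma (F := F) (a := x₀) (by
    rw [hd, hF]; simpa using (hker _).mp h)
  refine ⟨x, by rw [← hF]; exact hx, ?_⟩
  rw [← sub_eq_zero, ← map_sub, hker]
  rwa [hd] at hclose

/-- A ternary quadratic form over `ℤ_p` with unit half-discriminant is isotropic. -/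
lemma exists_zero_padicInt {p : ℕ} [Fact p.Prime] {A B C u v w : ℤ_[p]}
    (hD : PadicInt.toZMod (halfDisc A B C u v w) ≠ 0) :
    ∃ x y z : ℤ_[p], tern A B C u v w x y z = 0 ∧ (x ≠ 0 ∨ y ≠ 0 ∨ z ≠ 0) := by
  have hD' : halfDisc (PadicInt.toZMod A) (PadicInt.toZMod B) (PadicInt.toZMod C)
      (PadicInt.toZMod u) (PadicInt.toZMod v) (PadicInt.toZMod w) ≠ 0 := by
    have h4 : PadicInt.toZMod (4 : ℤ_[p]) = 4 := map_ofNat _ 4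
    simpa [halfDisc, h4] using hD
  obtain ⟨x', y', z', h, hne, hgrad⟩ := exists_smooth_zero_zmod p hD'
  obtain ⟨x, rfl⟩ := ZMod.ringHom_surjective (PadicInt.toZMod (p := p)) x'
  obtain ⟨y, rfl⟩ := ZMod.ringHom_surjective (PadicInt.toZMod (p := p)) y'
  obtain ⟨z, rfl⟩ := ZMod.ringHom_surjective (PadicInt.toZMod (p := p)) z'
  have hnz : ∀ c : ℤ_[p], PadicInt.toZMod c ≠ 0 → c ≠ 0 := by
    rintro c hc rfl
    exact hc (map_zero _)
  simp only [tern] at h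
  have h2 : PadicInt.toZMod (2 : ℤ_[p]) = 2 := map_ofNat _ 2
  -- Move only the coordinate along which the partial derivative is nonzero modulo `p`.
  rcases hgrad with g | g | g
  · obtain ⟨r, hr, hrx⟩ := exists_root_quadratic A (v * z + w * y)
      (B * y ^ 2 + C * z ^ 2 + u * (y * z)) x
      (by simp only [map_add, map_mul, map_pow]; linear_combination h)
      (by simpa [h2] using g)
    rw [← hrx] at hne
    exact ⟨r, y, z, by simp only [tern]; linear_combination hr,
      hne.imp (hnz _) (Or.imp (hnz _) (hnz _))⟩
  · obtain ⟨r, hr, hrx⟩ := exists_root_quadratic B (u * z + w * x)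
      (A * x ^ 2 + C * z ^ 2 + v * (x * z)) y
      (by simp only [map_add, map_mul, map_pow]; linear_combination h)
      (by simpa [h2] using g)
    rw [← hrx] at hne
    exact ⟨x, r, z, by simp only [tern]; linear_combination hr,
      hne.imp (hnz _) (Or.imp (hnz _) (hnz _))⟩
  · obtain ⟨r, hr, hrx⟩ := exists_root_quadratic C (u * y + v * x)
      (A * x ^ 2 + B * y ^ 2 + w * (x * y)) z
      (by simp only [map_add, map_mul, map_pow]; linear_combination h)
      (by simpa [h2] using g)
    rw [← hrx] at hne
    exact ⟨x, y, r, by simp only [tern]; linear_combination hr,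
      hne.imp (hnz _) (Or.imp (hnz _) (hnz _))⟩

/-! ### The reduced norm -/

section Norm

variable {F : Type*} [Field F] {a b : F}

/-- The reduced norm on `ℍ[F, a, b]`, in coordinates and with values in `F`. -/
def nrd (z : ℍ[F, a, b]) : F :=
  z.re ^ 2 - a * z.imI ^ 2 - b * z.imJ ^ 2 + a * b * z.imK ^ 2

/-- The polar form `trd (z * star w)` of the reduced norm. -/
def polar (z w : ℍ[F, a, b]) : F :=
  2 * (z.re * w.re - a * (z.imI * w.imI) - b * (z.imJ * w.imJ) + a * b * (z.imK * w.imK))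

lemma mul_star_eq (z : ℍ[F, a, b]) : z * star z = ((nrd z : F) : ℍ[F, a, b]) := by
  ext <;> simp only [nrd, QuaternionAlgebra.re_mul, QuaternionAlgebra.imI_mul,
    QuaternionAlgebra.imJ_mul, QuaternionAlgebra.imK_mul, QuaternionAlgebra.re_star,
    QuaternionAlgebra.imI_star, QuaternionAlgebra.imJ_star, QuaternionAlgebra.imK_star,
    QuaternionAlgebra.re_coe, QuaternionAlgebra.imI_coe, QuaternionAlgebra.imJ_coe,
    QuaternionAlgebra.imK_coe] <;> ring

/-- The reduced norm of a commutator is the half-discriminant of the reduced norm form on the span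
of `1`, `z`, `w`. -/
lemma nrd_commutator (z w : ℍ[F, a, b]) :
    nrd (z * w - w * z) =
      halfDisc 1 (nrd z) (nrd w) (polar z w) (2 * w.re) (2 * z.re) := by
  simp [nrd, polar, halfDisc]; ring

lemma nrd_combination (x y t : F) (z w : ℍ[F, a, b]) :
    nrd ((x : ℍ[F, a, b]) + y • z + t • w) =
      tern 1 (nrd z) (nrd w) (polar z w) (2 * w.re) (2 * z.re) x y t := by
  simp [nrd, polar, tern]; ring

lemma nrd_eq_zero (hdiv : ∀ z : ℍ[F, a, b], z ≠ 0 → IsUnit z) {z : ℍ[F, a, b]}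
    (h : nrd z = 0) : z = 0 := by
  by_contra hz
  have h1 : z * star z = 0 := by rw [mul_star_eq, h]; simp
  exact hz (star_eq_zero.mp ((hdiv z hz).mul_right_eq_zero.mp h1))

end Norm

/-- The polar form of two elements of integral norm is integral in a division algebra. -/
lemma exists_polar_eq {p : ℕ} [Fact p.Prime] {a b : ℚ_[p]}
    (hdiv : ∀ z : ℍ[ℚ_[p], a, b], z ≠ 0 → IsUnit z) {z w : ℍ[ℚ_[p], a, b]} {m n : ℤ_[p]}
    (hz : nrd z = m) (hw : nrd w = n) : ∃ s : ℤ_[p], polar z w = s := by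
  by_contra hno
  have hs : 1 < ‖polar z w‖ := by
    by_contra! hle
    exact hno ⟨⟨_, hle⟩, rfl⟩
  have hs0 : polar z w ≠ 0 := by
    rintro h0
    rw [h0, norm_zero] at hs
    linarith
  have hinv : ‖(polar z w)⁻¹‖ < 1 := by
    rw [norm_inv]
    exact inv_lt_one_of_one_lt₀ hs
  let i : ℤ_[p] := ⟨(polar z w)⁻¹, hinv.le⟩
  have hi : (i : ℚ_[p]) = (polar z w)⁻¹ := rfl
  have hi0 : PadicInt.toZMod i = 0 := by
    rw [← RingHom.mem_ker, PadicInt.ker_toZMod, IsLocalRing.mem_maximalIdeal,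
      PadicInt.mem_nonunits]
    exact hinv
  obtain ⟨x, hx, -⟩ := exists_root_quadratic (i * m) 1 (i * n) 0
    (by simp [hi0]) (by simp)
  have hx' : (m : ℚ_[p]) * x ^ 2 + polar z w * x + n = 0 := by
    have h2 := congrArg (fun c : ℤ_[p] => (c : ℚ_[p])) hx
    push_cast at h2
    rw [hi] at h2
    field_simp at h2
    linear_combination h2
  have hrel : ((0 : ℚ_[p]) : ℍ[ℚ_[p], a, b]) + (x : ℚ_[p]) • z + (1 : ℚ_[p]) • w = 0 := by
    apply nrd_eq_zero hdiv
    rw [nrd_combination, hz, hw, tern]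
    linear_combination hx'
  have hwz : w = (-(x : ℚ_[p])) • z := by
    rw [neg_smul, eq_neg_iff_add_eq_zero, add_comm]
    simpa using hrel
  refine hno ⟨-2 * x * m, ?_⟩
  have h2 : ((2 : ℤ_[p]) : ℚ_[p]) = 2 := map_ofNat PadicInt.Coe.ringHom 2
  push_cast
  rw [← hz, hwz, h2]
  simp [polar, nrd]; ring

end CommutatorNorm

/-- Let `B = ℍ[ℚ_p, a, b]` be a quaternion algebra over `ℚ_p` that is a division ring, and let
`v1, v2 ∈ B` be integral elements, i.e. `trd(v1), trd(v2), nrd(v1), nrd(v2) ∈ ℤ_p` (where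
`trd(v)·1 = v + v̄` and `nrd(v)·1 = v·v̄` for the standard involution `v̄ = star v`).
Then `nrd(v1·v2 − v2·v1) ∈ p·ℤ_p`. -/
theorem stmt5 (p : ℕ) [Fact p.Prime] (a b : ℚ_[p]) (ha : a ≠ 0) (hb : b ≠ 0)
    (hdiv : ∀ z : ℍ[ℚ_[p], a, b], z ≠ 0 → IsUnit z)
    (v1 v2 : ℍ[ℚ_[p], a, b])
    (htrd1 : ∃ t : ℤ_[p], v1 + star v1 = ((t : ℚ_[p]) : ℍ[ℚ_[p], a, b]))
    (htrd2 : ∃ t : ℤ_[p], v2 + star v2 = ((t : ℚ_[p]) : ℍ[ℚ_[p], a, b]))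
    (hnrd1 : ∃ n : ℤ_[p], v1 * star v1 = ((n : ℚ_[p]) : ℍ[ℚ_[p], a, b]))
    (hnrd2 : ∃ n : ℤ_[p], v2 * star v2 = ((n : ℚ_[p]) : ℍ[ℚ_[p], a, b])) :
    ∃ c : ℤ_[p],
      (v1 * v2 - v2 * v1) * star (v1 * v2 - v2 * v1) =
        ((((p : ℤ_[p]) * c : ℤ_[p]) : ℚ_[p]) : ℍ[ℚ_[p], a, b]) := by
  obtain ⟨t1, ht1⟩ := htrd1
  obtain ⟨t2, ht2⟩ := htrd2
  obtain ⟨n1, hn1⟩ := hnrd1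
  obtain ⟨n2, hn2⟩ := hnrd2
  have ht1' : 2 * v1.re = t1 := by
    have := congrArg QuaternionAlgebra.re ht1
    simp at this
    linear_combination this
  have ht2' : 2 * v2.re = t2 := by
    have := congrArg QuaternionAlgebra.re ht2
    simp at this
    linear_combination this
  rw [CommutatorNorm.mul_star_eq, QuaternionAlgebra.coe_inj] at hn1 hn2
  obtain ⟨s, hs⟩ := CommutatorNorm.exists_polar_eq hdiv hn1 hn2
  have hcomm : CommutatorNorm.nrd (v1 * v2 - v2 * v1) =
      ((CommutatorNorm.halfDisc 1 n1 n2 s t2 t1 : ℤ_[p]) : ℚ_[p]) := by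
    rw [CommutatorNorm.nrd_commutator, hn1, hn2, hs, ht1', ht2']
    have h4 : ((4 : ℤ_[p]) : ℚ_[p]) = 4 := map_ofNat PadicInt.Coe.ringHom 4
    simp [CommutatorNorm.halfDisc, h4]
  have hD : PadicInt.toZMod (CommutatorNorm.halfDisc 1 n1 n2 s t2 t1) = 0 := by
    by_contra hD
    obtain ⟨x, y, z, hxyz, hne⟩ := CommutatorNorm.exists_zero_padicInt hD
    have hrel : ((x : ℚ_[p]) : ℍ[ℚ_[p], a, b]) + (y : ℚ_[p]) • v1 + (z : ℚ_[p]) • v2 = 0 := by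
      apply CommutatorNorm.nrd_eq_zero hdiv
      rw [CommutatorNorm.nrd_combination, hn1, hn2, hs, ht1', ht2']
      have := congrArg (fun c : ℤ_[p] => (c : ℚ_[p])) hxyz
      simpa [CommutatorNorm.tern] using this
    -- Taking commutators of the relation with `v2` and with `v1` isolates `y` and `z`.
    have hy : (y : ℚ_[p]) • (v1 * v2 - v2 * v1) = 0 := by
      have h1 : (y : ℚ_[p]) • (v1 * v2 - v2 * v1) =
          (((x : ℚ_[p]) : ℍ[ℚ_[p], a, b]) + (y : ℚ_[p]) • v1 + (z : ℚ_[p]) • v2) * v2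
          - v2 * (((x : ℚ_[p]) : ℍ[ℚ_[p], a, b]) + (y : ℚ_[p]) • v1 + (z : ℚ_[p]) • v2) := by
        ext <;> simp <;> ring
      rw [h1, hrel, zero_mul, mul_zero, sub_zero]
    have hz : (z : ℚ_[p]) • (v1 * v2 - v2 * v1) = 0 := by
      have h1 : (z : ℚ_[p]) • (v1 * v2 - v2 * v1) =
          v1 * (((x : ℚ_[p]) : ℍ[ℚ_[p], a, b]) + (y : ℚ_[p]) • v1 + (z : ℚ_[p]) • v2)
          - (((x : ℚ_[p]) : ℍ[ℚ_[p], a, b]) + (y : ℚ_[p]) • v1 + (z : ℚ_[p]) • v2) * v1 := by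
        ext <;> simp <;> ring
      rw [h1, hrel, zero_mul, mul_zero, sub_zero]
    have hcne : v1 * v2 - v2 * v1 ≠ 0 := by
      intro h0
      rw [h0] at hcomm
      have h1 : CommutatorNorm.halfDisc 1 n1 n2 s t2 t1 = 0 := by
        apply Subtype.coe_injective
        simpa [CommutatorNorm.nrd] using hcomm.symm
      exact hD (by rw [h1, map_zero])
    have hy0 : y = 0 := by simpa [hcne] using hy
    have hz0 : z = 0 := by simpa [hcne] using hz
    have hx0 : x = 0 := by
      have := congrArg QuaternionAlgebra.re hrel
      simpa [hy0, hz0] using this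
    simp [hx0, hy0, hz0] at hne
  rw [← RingHom.mem_ker, PadicInt.ker_toZMod, PadicInt.maximalIdeal_eq_span_p,
    Ideal.mem_span_singleton] at hD
  obtain ⟨c, hc⟩ := hD
  exact ⟨c, by rw [CommutatorNorm.mul_star_eq, hcomm, hc]⟩
end

section
/- Let B be an indefinite quaternion algebra over ℚ and O an Eichler order in B. Let (D1, D2, x) be an admissible triple and suppose there exist x-linked embeddings φ1, φ2 of O_{D1}, O_{D2} into B whose associated elements v_i = (p_{D_i}·1 + φ_i(√D_i))/2 lie in O. Then discrd(O) divides (D1·D2 − x²)/4. -/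
/-! The divisibility is an index computation. The elements `1, v₁, v₂, v₁v₂` lie in `O`, so they
are integral combinations of the basis `β`, with some integer matrix `M` of coefficients. The trace
form is bilinear, so its Gram matrix on `(1, v₁, v₂, v₁v₂)` is `M G Mᵀ` where `G` is the Gram matrix
on `β` (`gram_change`), and its determinant is `-(det M)² d²`. On the other hand `w₁, w₂` are pure
quaternions (`re_eq_zero_of_sq`), and an explicit computation (`gram_det`) shows that this
determinant is `-((D₁D₂ - x²)/4)²`. Hence `d²` divides `((D₁D₂ - x²)/4)²` in `ℤ`, and therefore
`d` divides `(D₁D₂ - x²)/4`. -/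

open Quaternion
open scoped TensorProduct

/-- `(D1, D2, x)` is an admissible triple: `D1, D2` are positive discriminants,
`x ≡ D1·D2 (mod 2)` and `x² ≠ D1·D2`. -/
def Admissible (D1 D2 x : ℤ) : Prop :=
  0 < D1 ∧ 0 < D2 ∧ (D1 % 4 = 0 ∨ D1 % 4 = 1) ∧ (D2 % 4 = 0 ∨ D2 % 4 = 1) ∧
    x % 2 = (D1 * D2) % 2 ∧ x ^ 2 ≠ D1 * D2

/-- A maximal order: an order maximal under inclusion. -/
def IsMaximalOrder {B : Type*} [Ring B] [Algebra ℚ B] (O : Subring B) : Prop :=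
  IsOrder O ∧ ∀ O' : Subring B, IsOrder O' → O ≤ O' → O' = O

/-- An Eichler order: the intersection of two maximal orders. -/
def IsEichlerOrder {B : Type*} [Ring B] [Algebra ℚ B] (O : Subring B) : Prop :=
  ∃ O1 O2 : Subring B, IsMaximalOrder O1 ∧ IsMaximalOrder O2 ∧ O = O1 ⊓ O2

/-- The reduced trace on `ℍ[ℚ, a, b]`: `trd(α) = α + ᾱ = 2·re(α)`. -/
def trd {a b : ℚ} (α : ℍ[ℚ, a, b]) : ℚ := 2 * α.re

/-- A non-rational quaternion whose square is rational is pure. -/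
lemma re_eq_zero_of_sq_s6 {a b D : ℚ} (w : ℍ[ℚ, a, b])
    (hns : w ∉ Set.range (algebraMap ℚ ℍ[ℚ, a, b]))
    (hsq : w ^ 2 = algebraMap ℚ ℍ[ℚ, a, b] D) : w.re = 0 := by
  by_contra h
  apply hns
  rw [pow_two] at hsq
  -- The imaginary part of `w²` is `2 · re w · im w`, so `im w = 0` once `re w ≠ 0`.
  have h1 := congrArg QuaternionAlgebra.imI hsq
  have h2 := congrArg QuaternionAlgebra.imJ hsq
  have h3 := congrArg QuaternionAlgebra.imK hsq
  simp [QuaternionAlgebra.algebraMap_eq] at h1 h2 h3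
  refine ⟨w.re, ?_⟩
  ext
  · simp [QuaternionAlgebra.algebraMap_eq]
  · have : w.re * w.imI = 0 := by linarith
    simpa [QuaternionAlgebra.algebraMap_eq, h, eq_comm] using this
  · have : w.re * w.imJ = 0 := by linarith
    simpa [QuaternionAlgebra.algebraMap_eq, h, eq_comm] using this
  · have : w.re * w.imK = 0 := by linarith
    simpa [QuaternionAlgebra.algebraMap_eq, h, eq_comm] using this

lemma trd_sum_mul_sum {a b : ℚ} (β : Fin 4 → ℍ[ℚ, a, b]) (c c' : Fin 4 → ℤ) :
    trd ((∑ i, c i • β i) * (∑ j, c' j • β j)) =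
      ∑ j, (∑ i, (c i : ℚ) * trd (β i * β j)) * (c' j : ℚ) := by
  let T : ℍ[ℚ, a, b] →+ ℚ :=
    { toFun := trd
      map_zero' := by simp [trd]
      map_add' := fun u v => by simp [trd, mul_add] }
  change T _ = ∑ j, (∑ i, (c i : ℚ) * T (β i * β j)) * (c' j : ℚ)
  rw [Finset.sum_mul_sum, map_sum, Finset.sum_congr rfl fun i _ => map_sum T _ _,
    Finset.sum_comm]
  refine Finset.sum_congr rfl fun j _ => ?_
  rw [Finset.sum_mul]
  refine Finset.sum_congr rfl fun i _ => ?_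
  rw [smul_mul_smul_comm, map_zsmul, zsmul_eq_mul]
  push_cast
  ring

/-- Change of basis for the Gram determinant of the trace form. -/
lemma gram_change {a b : ℚ} (β : Fin 4 → ℍ[ℚ, a, b]) (M : Matrix (Fin 4) (Fin 4) ℤ) :
    Matrix.det (Matrix.of fun k l : Fin 4 => trd ((∑ i, M k i • β i) * (∑ j, M l j • β j))) =
      (M.det : ℚ) ^ 2 * Matrix.det (Matrix.of fun i j : Fin 4 => trd (β i * β j)) := by
  have h : (Matrix.of fun k l : Fin 4 => trd ((∑ i, M k i • β i) * (∑ j, M l j • β j))) =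
      M.map (Int.castRingHom ℚ) * (Matrix.of fun i j : Fin 4 => trd (β i * β j)) *
        (M.map (Int.castRingHom ℚ)).transpose := by
    ext k l
    rw [Matrix.of_apply, trd_sum_mul_sum]
    simp [Matrix.mul_apply]
  have hd : (M.map (Int.castRingHom ℚ)).det = (M.det : ℚ) := by
    simpa using ((Int.castRingHom ℚ).map_det M).symm
  rw [h, Matrix.det_mul, Matrix.det_mul, Matrix.det_transpose, hd]
  ring

/-- For pure `w₁, w₂` with `w₁² = D₁`, `w₂² = D₂`, `w₁w₂ + w₂w₁ = 2x`, and any rational shifts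
`pᵢ`, the trace form on `1, v₁, v₂, v₁v₂` with `vᵢ = (pᵢ + wᵢ)/2` has determinant
`-((D₁D₂ - x²)/4)²`. -/
lemma gram_det {a b D1 D2 x p1 p2 : ℚ} (w1 w2 : ℍ[ℚ, a, b])
    (h1 : w1.re = 0) (h2 : w2.re = 0)
    (hw1sq : w1 ^ 2 = algebraMap ℚ ℍ[ℚ, a, b] D1)
    (hw2sq : w2 ^ 2 = algebraMap ℚ ℍ[ℚ, a, b] D2)
    (hlink : w1 * w2 + w2 * w1 = algebraMap ℚ ℍ[ℚ, a, b] (2 * x))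
    (v : Fin 4 → ℍ[ℚ, a, b]) (hv0 : v 0 = 1)
    (hv1 : v 1 = (2 : ℚ)⁻¹ • (algebraMap ℚ ℍ[ℚ, a, b] p1 + w1))
    (hv2 : v 2 = (2 : ℚ)⁻¹ • (algebraMap ℚ ℍ[ℚ, a, b] p2 + w2))
    (hv3 : v 3 = v 1 * v 2) :
    Matrix.det (Matrix.of fun k l : Fin 4 => trd (v k * v l)) =
      -((D1 * D2 - x ^ 2) / 4) ^ 2 := by
  rw [pow_two] at hw1sq hw2sq
  obtain ⟨r1, i1, j1, k1⟩ := w1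
  obtain ⟨r2, i2, j2, k2⟩ := w2
  simp only at h1 h2
  subst h1 h2
  have e1 := congrArg QuaternionAlgebra.re hw1sq
  have e2 := congrArg QuaternionAlgebra.re hw2sq
  have e3 := congrArg QuaternionAlgebra.re hlink
  simp [QuaternionAlgebra.algebraMap_eq] at e1 e2 e3
  have e3' : x = a * i1 * i2 + b * j1 * j2 - a * b * k1 * k2 := by linarith
  subst e3'
  rw [← e1, ← e2]
  rw [hv1, hv2] at hv3
  simp only [Matrix.det_succ_row_zero, Fin.sum_univ_succ]
  simp [Fin.succAbove, trd, hv0, hv1, hv2, hv3, QuaternionAlgebra.algebraMap_eq]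
  ring

/-- Admissibility makes `D₁D₂ - x²` divisible by `4`, so the integer quotient is exact. -/
lemma four_dvd_of_admissible {D1 D2 x : ℤ} (h : Admissible D1 D2 x) :
    (4 : ℤ) ∣ D1 * D2 - x ^ 2 := by
  obtain ⟨-, -, h1, h2, hx, -⟩ := h
  have hprod : D1 * D2 % 4 = 0 ∨ D1 * D2 % 4 = 1 := by
    rcases h1 with h1 | h1 <;> rcases h2 with h2 | h2 <;> simp [Int.mul_emod, h1, h2]
  have hxx : x % 4 = 0 ∨ x % 4 = 1 ∨ x % 4 = 2 ∨ x % 4 = 3 := by omega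
  have hsq : x ^ 2 % 4 = x % 2 := by
    rcases hxx with hx | hx | hx | hx <;> rw [pow_two, Int.mul_emod, hx] <;> omega
  omega

/-- Let `B` be an indefinite quaternion algebra over `ℚ` (`ℝ ⊗_ℚ B` is not a division ring)
and `O` an Eichler order in `B`. Let `(D1, D2, x)` be an admissible triple and suppose there
exist `x`-linked embeddings `φ1, φ2` of `O_{D1}, O_{D2}` into `B` (given by `wᵢ = φᵢ(√Dᵢ)`)
whose associated elements `vᵢ = (p_{Dᵢ}·1 + φᵢ(√Dᵢ))/2` lie in `O`. Then `discrd(O)` divides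
`(D1·D2 − x²)/4`: for any `ℤ`-basis `β` of `O` and positive integer `d` with
`d² = −det(trd(βᵢ·βⱼ))`, we have `d ∣ (D1·D2 − x²)/4`. -/
theorem stmt6 (a b : ℚ) (ha : a ≠ 0) (hb : b ≠ 0)
    (hindef : ¬ (∀ z : ℝ ⊗[ℚ] ℍ[ℚ, a, b], z ≠ 0 → IsUnit z))
    (O : Subring ℍ[ℚ, a, b]) (hO : IsEichlerOrder O)
    (D1 D2 x : ℤ) (hadm : Admissible D1 D2 x)
    (w1 w2 : ℍ[ℚ, a, b])
    (hw1ns : w1 ∉ Set.range (algebraMap ℚ ℍ[ℚ, a, b]))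
    (hw2ns : w2 ∉ Set.range (algebraMap ℚ ℍ[ℚ, a, b]))
    (hw1sq : w1 ^ 2 = algebraMap ℚ ℍ[ℚ, a, b] ((D1 : ℤ) : ℚ))
    (hw2sq : w2 ^ 2 = algebraMap ℚ ℍ[ℚ, a, b] ((D2 : ℤ) : ℚ))
    (hlink : w1 * w2 + w2 * w1 = algebraMap ℚ ℍ[ℚ, a, b] ((2 * x : ℤ) : ℚ))
    (hv1 : (2 : ℚ)⁻¹ • (algebraMap ℚ ℍ[ℚ, a, b] ((D1 % 2 : ℤ) : ℚ) + w1) ∈ O)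
    (hv2 : (2 : ℚ)⁻¹ • (algebraMap ℚ ℍ[ℚ, a, b] ((D2 % 2 : ℤ) : ℚ) + w2) ∈ O) :
    ∀ β : Fin 4 → ℍ[ℚ, a, b],
      (∀ i, β i ∈ O) →
      (∀ z ∈ O, z ∈ Submodule.span ℤ (Set.range β)) →
      LinearIndependent ℚ β →
      ∀ d : ℤ, 0 < d →
        ((d : ℚ)) ^ 2 = - Matrix.det (Matrix.of fun i j : Fin 4 => trd (β i * β j)) →
        d ∣ (D1 * D2 - x ^ 2) / 4 := by
  intro β hβ hspan _ d hd hdet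
  set v1 := (2 : ℚ)⁻¹ • (algebraMap ℚ ℍ[ℚ, a, b] ((D1 % 2 : ℤ) : ℚ) + w1) with hv1def
  set v2 := (2 : ℚ)⁻¹ • (algebraMap ℚ ℍ[ℚ, a, b] ((D2 % 2 : ℤ) : ℚ) + w2) with hv2def
  have hmem : ∀ k, (![1, v1, v2, v1 * v2] : Fin 4 → ℍ[ℚ, a, b]) k ∈ O := by
    intro k
    fin_cases k
    · exact O.one_mem
    · exact hv1
    · exact hv2
    · exact O.mul_mem hv1 hv2
  have hcoef := fun k => (Submodule.mem_span_range_iff_exists_fun ℤ).1 (hspan _ (hmem k))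
  choose M hM using hcoef
  have hG := gram_change β (Matrix.of M)
  simp only [Matrix.of_apply, hM] at hG
  rw [show ((2 * x : ℤ) : ℚ) = 2 * (x : ℚ) by push_cast; rfl] at hlink
  rw [gram_det w1 w2 (re_eq_zero_of_sq_s6 w1 hw1ns hw1sq) (re_eq_zero_of_sq_s6 w2 hw2ns hw2sq)
    hw1sq hw2sq hlink ![1, v1, v2, v1 * v2] rfl hv1def hv2def rfl] at hG
  obtain ⟨q, hq⟩ := four_dvd_of_admissible hadm
  rw [hq, Int.mul_ediv_cancel_left _ (by norm_num), ← Int.pow_dvd_pow_iff two_ne_zero]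
  have hq' : (D1 : ℚ) * D2 - x ^ 2 = 4 * q := by exact_mod_cast hq
  refine ⟨(Matrix.det (Matrix.of M)) ^ 2, ?_⟩
  have : (q : ℚ) ^ 2 = d ^ 2 * ((Matrix.det (Matrix.of M) : ℤ) : ℚ) ^ 2 := by
    rw [hdet]
    rw [hq', mul_div_cancel_left₀ _ (by norm_num)] at hG
    linarith
  exact_mod_cast this
end

section
/- Let p be a prime, A a nonzero integer, and D a positive discriminant coprime to p. Then the equation X² − D·Y² = A has a solution (X, Y) ∈ ℤ_p × ℤ_p if and only if one of the following holds: (i) (D/p) = 1 and, in case p = 2, additionally v_2(A) ≠ 1; or (ii) (D/p) = −1 and v_p(A) is even. -/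
/-!
Over `ℤ_p` the behaviour of the norm form `X² - D Y²` depends on whether `D` is a square.

If `(D/p) = 1`, Hensel's lemma gives `D = d²` with `d` a unit, and the form factors as
`(X - d Y) (X + d Y)`. A solution is then the same as a factorization `A = s t` with
`s ≡ t (mod 2)` (`split_repr`). For odd `p` the condition is empty; for `p = 2` one takes
`1 · A` when `A` is odd and `2 · (A / 2)` when `4 ∣ A`, while `x² - D y² ≡ x² - y² (mod 4)` is
never `2`, which excludes `v_2(A) = 1`.

If `(D/p) = -1`, the form is anisotropic. A value of odd valuation forces `p ∣ X` and `p ∣ Y`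
(`dvd_of_odd_val`), so dividing by `p²` gives a descent (`even_val`) showing that `v_p(A)` is
even. Conversely, after scaling by a power of `p` it is enough to represent integers prime to `p`
(`unit_repr`): the form represents every such residue modulo `p` (modulo `8` when `p = 2`), and
Hensel's lemma, applied in a variable whose approximate value is prime to `p`, lifts the
representation.

Congruence arguments for `p`-adic solutions are carried out on integral approximations (`approx`).
A discriminant prime to `2` is `1` modulo `4`, so for `p = 2` only `D ≡ 1, 5 (mod 8)` occur.
-/

open scoped Classical

/-- The Kronecker symbol `(D/p)` at a prime `p`: for odd `p` it is the Legendre symbol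
(`0` if `p ∣ D`, `1` if `D` is a nonzero square mod `p`, `-1` otherwise); for `p = 2` it is
`0` if `D` is even, `1` if `D ≡ ±1 (mod 8)` and `-1` if `D ≡ ±3 (mod 8)`. -/
noncomputable def kron (D : ℤ) (p : ℕ) : ℤ :=
  if p = 2 then
    if D % 2 = 0 then 0 else if D % 8 = 1 ∨ D % 8 = 7 then 1 else -1
  else if (p : ℤ) ∣ D then 0
  else if ∃ y : ℤ, (p : ℤ) ∣ (y ^ 2 - D) then 1 else -1

/-- Hensel's lemma for `a z² + c`, with an integral approximate root `w`. -/
lemma hensel_quad (p : ℕ) [Fact p.Prime] (a c w : ℤ)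
    (h : ‖((a * w ^ 2 + c : ℤ) : ℤ_[p])‖ < ‖((2 * a * w : ℤ) : ℤ_[p])‖ ^ 2) :
    ∃ z : ℤ_[p], (a : ℤ_[p]) * z ^ 2 + c = 0 := by
  let F : Polynomial ℤ := Polynomial.C a * Polynomial.X ^ 2 + Polynomial.C c
  have h1 : ∀ z : ℤ_[p], F.aeval z = (a : ℤ_[p]) * z ^ 2 + c := fun z => by simp [F]
  have h2 : F.derivative.aeval (w : ℤ_[p]) = ((2 * a * w : ℤ) : ℤ_[p]) := by
    have h3 : (Polynomial.aeval (w : ℤ_[p])) (2 : Polynomial ℤ) = 2 := map_ofNat _ 2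
    simp [F, h3]; ring
  obtain ⟨z, hz, -⟩ := hensels_lemma (F := F) (a := (w : ℤ_[p])) (by
    rw [h1, h2]; push_cast at h ⊢; exact h)
  exact ⟨z, by rw [← h1, hz]⟩

lemma norm_int_eq_one (p : ℕ) [Fact p.Prime] (k : ℤ) (h : ¬ (p : ℤ) ∣ k) :
    ‖(k : ℤ_[p])‖ = 1 :=
  le_antisymm (PadicInt.norm_le_one _)
    (not_lt.1 fun hlt => h ((PadicInt.norm_int_lt_one_iff_dvd k).1 hlt))

lemma not_dvd_two (p : ℕ) [hp : Fact p.Prime] (h2 : p ≠ 2) : ¬ (p : ℤ) ∣ 2 := fun h =>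
  h2 ((Nat.prime_dvd_prime_iff_eq hp.out Nat.prime_two).1 (by exact_mod_cast h))

lemma hensel_odd (p : ℕ) [hp : Fact p.Prime] (h2 : p ≠ 2) (a c w : ℤ) (ha : ¬ (p : ℤ) ∣ a)
    (hw : ¬ (p : ℤ) ∣ w) (h : (p : ℤ) ∣ a * w ^ 2 + c) :
    ∃ z : ℤ_[p], (a : ℤ_[p]) * z ^ 2 + c = 0 := by
  have hpp : Prime (p : ℤ) := Nat.prime_iff_prime_int.1 hp.out
  refine hensel_quad p a c w ?_
  rw [norm_int_eq_one p (2 * a * w), one_pow]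
  · exact (PadicInt.norm_int_lt_one_iff_dvd _).2 h
  · intro hd
    rcases hpp.dvd_or_dvd hd with hd | hd
    · exact (hpp.dvd_or_dvd hd).elim (not_dvd_two p h2) ha
    · exact hw hd

lemma hensel_two (a c w : ℤ) (ha : ¬ (2 : ℤ) ∣ a) (hw : ¬ (2 : ℤ) ∣ w)
    (h : (8 : ℤ) ∣ a * w ^ 2 + c) : ∃ z : ℤ_[2], (a : ℤ_[2]) * z ^ 2 + c = 0 := by
  refine hensel_quad 2 a c w ?_
  have h1 : ‖((2 * a * w : ℤ) : ℤ_[2])‖ = 2⁻¹ := by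
    have h2 : ‖((2 : ℤ) : ℤ_[2])‖ = 2⁻¹ := by simpa using PadicInt.norm_p (p := 2)
    rw [mul_assoc, Int.cast_mul, norm_mul, h2, Int.cast_mul, norm_mul,
      norm_int_eq_one 2 a (by exact_mod_cast ha), norm_int_eq_one 2 w (by exact_mod_cast hw)]
    norm_num
  have h3 := (PadicInt.norm_int_le_pow_iff_dvd (p := 2) (k := a * w ^ 2 + c) (n := 3)).2
    (by norm_num; exact h)
  rw [h1]
  refine h3.trans_lt ?_
  norm_num [zpow_neg]

/-- A `p`-adic solution is congruent modulo `p ^ n` to an integral solution of the congruence. -/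
lemma approx (p : ℕ) [hp : Fact p.Prime] (A D : ℤ) (n : ℕ) (X Y : ℤ_[p])
    (h : X ^ 2 - (D : ℤ_[p]) * Y ^ 2 = (A : ℤ_[p])) :
    ∃ x y : ℤ, (p : ℤ_[p]) ^ n ∣ X - x ∧ (p : ℤ_[p]) ^ n ∣ Y - y ∧
      (p : ℤ) ^ n ∣ x ^ 2 - D * y ^ 2 - A := by
  have hX := Ideal.mem_span_singleton.1 (PadicInt.appr_spec n X)
  have hY := Ideal.mem_span_singleton.1 (PadicInt.appr_spec n Y)
  refine ⟨X.appr n, Y.appr n, by exact_mod_cast hX, by exact_mod_cast hY, ?_⟩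
  rw [← PadicInt.pow_p_dvd_int_iff]
  push_cast
  obtain ⟨r, hr⟩ := hX
  obtain ⟨s, hs⟩ := hY
  rw [← h]
  refine ⟨-r * (X + X.appr n) + D * s * (Y + Y.appr n), ?_⟩
  linear_combination (-(X + X.appr n)) * hr + D * (Y + Y.appr n) * hs

lemma dvd_of_approx (p : ℕ) [hp : Fact p.Prime] {n : ℕ} (hn : n ≠ 0) {X : ℤ_[p]} {x : ℤ}
    (h : (p : ℤ_[p]) ^ n ∣ X - x) (hx : (p : ℤ) ∣ x) : (p : ℤ_[p]) ∣ X := by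
  have h1 : (p : ℤ_[p]) ∣ X - x := (dvd_pow_self _ hn).trans h
  have h2 : (p : ℤ_[p]) ∣ (x : ℤ_[p]) := by
    obtain ⟨k, rfl⟩ := hx
    exact ⟨k, by push_cast; rfl⟩
  simpa using dvd_add h1 h2

lemma odd_sq_mod_eight {x : ℤ} (h : ¬ (2 : ℤ) ∣ x) : x ^ 2 % 8 = 1 := by
  have h8 : x % 8 = 1 ∨ x % 8 = 3 ∨ x % 8 = 5 ∨ x % 8 = 7 := by omega
  rw [sq, Int.mul_emod]
  rcases h8 with h | h | h | h <;> rw [h] <;> rfl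

lemma val_eq {p : ℕ} [hp : Fact p.Prime] (n : ℕ) (u : ℤ) (hu : ¬ (p : ℤ) ∣ u) :
    padicValInt p ((p : ℤ) ^ n * u) = n := by
  have hu0 : u ≠ 0 := by rintro rfl; simp at hu
  have hp0 : (p : ℤ) ≠ 0 := by exact_mod_cast hp.out.ne_zero
  induction n with
  | zero => simpa using padicValInt.eq_zero_of_not_dvd hu
  | succ n ih =>
    rw [pow_succ', mul_assoc, padicValInt.mul hp0 (mul_ne_zero (pow_ne_zero _ hp0) hu0), ih,
      padicValInt_self, add_comm]

/-- When `(D/p) = -1`, the form `X² - D Y²` takes values of odd valuation only when both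
arguments are divisible by `p`. For `p = 2` odd arguments give a value `≡ 4 (mod 8)`. -/
lemma dvd_of_odd_val (p : ℕ) [hp : Fact p.Prime] (A D : ℤ)
    (hD : kron D p = -1) (hD4 : p = 2 → D % 4 = 1)
    (X Y : ℤ_[p]) (h : X ^ 2 - (D : ℤ_[p]) * Y ^ 2 = (A : ℤ_[p]))
    (hv : ¬ Even (padicValInt p A)) : (p : ℤ_[p]) ∣ X ∧ (p : ℤ_[p]) ∣ Y := by
  have hpp : Prime (p : ℤ) := Nat.prime_iff_prime_int.1 hp.out
  have hpA : (p : ℤ) ∣ A := by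
    by_contra hn
    exact hv (by rw [padicValInt.eq_zero_of_not_dvd hn]; exact Even.zero)
  by_cases h2 : p = 2
  · subst h2
    have hD8 : D % 8 = 5 := by
      have := hD4 rfl
      simp only [kron, if_true] at hD
      split_ifs at hD <;> omega
    obtain ⟨x, y, hx, hy, hxy⟩ := approx 2 A D 3 X Y h
    have hA8 : A % 8 ≠ 4 := by
      intro h4
      apply hv
      have := val_eq (p := 2) 2 (A / 4) (by push_cast; omega)
      rw [show (((2 : ℕ) : ℤ) ^ 2 * (A / 4)) = A by push_cast; omega] at this
      rw [this]; decide
    have key : (2 : ℤ) ∣ x ∧ (2 : ℤ) ∣ y := by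
      have hA2 : A % 2 = 0 := by push_cast at hpA; omega
      have hxy' : (x ^ 2 - D * y ^ 2) % 8 = A % 8 := by
        push_cast at hxy; omega
      by_cases ex : (2 : ℤ) ∣ x <;> by_cases ey : (2 : ℤ) ∣ y
      · exact ⟨ex, ey⟩
      · exfalso
        obtain ⟨k, rfl⟩ := ex
        have e1 := odd_sq_mod_eight ey
        have e2 : (D * y ^ 2) % 8 = 5 := by rw [Int.mul_emod, hD8, e1]; rfl
        ring_nf at hxy' e2
        omega
      · exfalso
        obtain ⟨k, rfl⟩ := ey
        have e1 := odd_sq_mod_eight ex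
        have e2 : D * (2 * k) ^ 2 = 2 * (2 * D * k ^ 2) := by ring
        rw [e2] at hxy'
        omega
      · exfalso
        have e1 := odd_sq_mod_eight ex
        have e2 : (D * y ^ 2) % 8 = 5 := by rw [Int.mul_emod, hD8, odd_sq_mod_eight ey]; rfl
        omega
    exact ⟨dvd_of_approx 2 (by norm_num) hx (by exact_mod_cast key.1),
      dvd_of_approx 2 (by norm_num) hy (by exact_mod_cast key.2)⟩
  · have hns : ¬ ∃ y : ℤ, (p : ℤ) ∣ (y ^ 2 - D) := by
      intro hs
      simp only [kron, if_neg h2, if_pos hs] at hD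
      split_ifs at hD
    obtain ⟨x, y, hx, hy, hxy⟩ := approx p A D 1 X Y h
    rw [pow_one] at hxy
    have hxy' : (p : ℤ) ∣ x ^ 2 - D * y ^ 2 := by simpa using dvd_add hxy hpA
    have hy' : (p : ℤ) ∣ y := by
      by_contra hny
      obtain ⟨a, b, hab⟩ := (hpp.coprime_iff_not_dvd).2 hny
      -- With `b y ≡ 1`, the integer `b x` is a square root of `D` modulo `p`.
      refine hns ⟨b * x, ?_⟩
      have e : (b * x) ^ 2 - D = b ^ 2 * (x ^ 2 - D * y ^ 2) + p * (-(a * D * (1 + b * y))) := by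
        linear_combination (D * (1 + b * y)) * hab
      rw [e]
      exact dvd_add (hxy'.mul_left _) (dvd_mul_right _ _)
    have hx' : (p : ℤ) ∣ x := by
      refine hpp.dvd_of_dvd_pow (n := 2) ?_
      have := dvd_add hxy' ((dvd_pow hy' two_ne_zero).mul_left D)
      simpa using this
    exact ⟨dvd_of_approx p one_ne_zero hx hx', dvd_of_approx p one_ne_zero hy hy'⟩

/-- Descent: an odd valuation could be lowered by two indefinitely. -/
lemma even_val (p : ℕ) [hp : Fact p.Prime] (D : ℤ)
    (hD : kron D p = -1) (hD4 : p = 2 → D % 4 = 1) (n : ℕ) :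
    ∀ A : ℤ, A ≠ 0 → padicValInt p A = n →
      (∃ X Y : ℤ_[p], X ^ 2 - (D : ℤ_[p]) * Y ^ 2 = (A : ℤ_[p])) → Even n := by
  induction n using Nat.strong_induction_on with
  | _ n ih =>
    rintro A hA rfl ⟨X, Y, h⟩
    by_contra hv
    obtain ⟨⟨X', rfl⟩, ⟨Y', rfl⟩⟩ := dvd_of_odd_val p A D hD hD4 X Y h hv
    have hpz : (p : ℤ_[p]) ≠ 0 := by exact_mod_cast hp.out.ne_zero
    have hd : (p : ℤ) ^ 2 ∣ A := by
      rw [← PadicInt.pow_p_dvd_int_iff, ← h]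
      exact ⟨X' ^ 2 - D * Y' ^ 2, by ring⟩
    obtain ⟨B, rfl⟩ := hd
    have hB : B ≠ 0 := right_ne_zero_of_mul hA
    have hval : padicValInt p ((p : ℤ) ^ 2 * B) = padicValInt p B + 2 := by
      have hp0 : (p : ℤ) ≠ 0 := by exact_mod_cast hp.out.ne_zero
      rw [padicValInt.mul (pow_ne_zero _ hp0) hB, sq, padicValInt.mul hp0 hp0, padicValInt_self]
      omega
    rw [hval] at hv ih
    have := ih _ (by omega) B hB rfl ⟨X', Y', by
      apply mul_left_cancel₀ (pow_ne_zero 2 hpz)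
      push_cast at h
      linear_combination h⟩
    exact hv (this.add even_two)

lemma exists_unit_part (p : ℕ) [hp : Fact p.Prime] (A : ℤ) (hA : A ≠ 0) :
    ∃ u : ℤ, ¬ (p : ℤ) ∣ u ∧ A = (p : ℤ) ^ padicValInt p A * u := by
  obtain ⟨u, hu⟩ := padicValInt_dvd (p := p) A
  refine ⟨u, ?_, hu⟩
  rintro ⟨k, rfl⟩
  have := (padicValInt_dvd_iff (p := p) (padicValInt p A + 1) A).1
    ⟨k, by rw [pow_succ, mul_assoc]; exact hu⟩
  omega

/-- For odd `p` the form `x² - D y²` is surjective modulo `p`: the sets of values of `x² - u` and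
`D y²` have `(p + 1) / 2` elements each, so they meet. -/
lemma exists_mod (p : ℕ) [hp : Fact p.Prime] (h2 : p ≠ 2) (D u : ℤ) (hD : ¬ (p : ℤ) ∣ D) :
    ∃ x y : ℤ, (p : ℤ) ∣ x ^ 2 - D * y ^ 2 - u := by
  have hD0 : (D : ZMod p) ≠ 0 := by rwa [Ne, ZMod.intCast_zmod_eq_zero_iff_dvd]
  obtain ⟨a, b, hab⟩ := FiniteField.exists_root_sum_quadratic
    (f := (Polynomial.X ^ 2 - Polynomial.C (u : ZMod p)))
    (g := (Polynomial.C (-(D : ZMod p)) * Polynomial.X ^ 2))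
    (Polynomial.degree_X_pow_sub_C (by decide) _)
    (Polynomial.degree_C_mul_X_pow 2 (neg_ne_zero.2 hD0))
    (by rw [ZMod.card]; exact hp.out.eq_two_or_odd.resolve_left h2)
  obtain ⟨x, rfl⟩ := ZMod.intCast_surjective a
  obtain ⟨y, rfl⟩ := ZMod.intCast_surjective b
  refine ⟨x, y, ?_⟩
  rw [← ZMod.intCast_zmod_eq_zero_iff_dvd]
  simp at hab
  push_cast
  linear_combination hab

/-- An integer prime to `p` is represented over `ℤ_p`. -/
lemma unit_repr (p : ℕ) [hp : Fact p.Prime] (D u : ℤ) (hD : ¬ (p : ℤ) ∣ D)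
    (hD8 : p = 2 → D % 8 = 5) (hu : ¬ (p : ℤ) ∣ u) :
    ∃ X Y : ℤ_[p], X ^ 2 - (D : ℤ_[p]) * Y ^ 2 = (u : ℤ_[p]) := by
  have hpp : Prime (p : ℤ) := Nat.prime_iff_prime_int.1 hp.out
  by_cases h2 : p = 2
  · subst h2
    have hD8 := hD8 rfl
    push_cast at hu hD
    have h8 : u % 8 = 1 ∨ u % 8 = 3 ∨ u % 8 = 5 ∨ u % 8 = 7 := by omega
    -- The residues `1, 5` are `1 - 5 y²` with `y = 0, 2`; `3, 7` are `x² - 5` with `x = 0, 2`.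
    have c1 : ∀ y : ℤ, (8 : ℤ) ∣ 1 * 1 ^ 2 + (-(D * y ^ 2) - u) →
        ∃ X Y : ℤ_[2], X ^ 2 - (D : ℤ_[2]) * Y ^ 2 = (u : ℤ_[2]) := by
      intro y hy
      obtain ⟨z, hz⟩ := hensel_two 1 _ 1 (by norm_num) (by norm_num) hy
      refine ⟨z, y, ?_⟩
      push_cast at hz
      linear_combination hz
    have c2 : ∀ x : ℤ, (8 : ℤ) ∣ (-D) * 1 ^ 2 + (x ^ 2 - u) →
        ∃ X Y : ℤ_[2], X ^ 2 - (D : ℤ_[2]) * Y ^ 2 = (u : ℤ_[2]) := by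
      intro x hx
      obtain ⟨z, hz⟩ := hensel_two (-D) _ 1 (by omega) (by norm_num) hx
      refine ⟨x, z, ?_⟩
      push_cast at hz
      linear_combination hz
    rcases h8 with h | h | h | h
    · exact c1 0 (by omega)
    · exact c2 0 (by omega)
    · exact c1 2 (by omega)
    · exact c2 2 (by omega)
  · obtain ⟨x, y, hxy⟩ := exists_mod p h2 D u hD
    by_cases hx : (p : ℤ) ∣ x
    · have hy : ¬ (p : ℤ) ∣ y := by
        intro hy
        apply hu
        have := dvd_sub (dvd_sub (dvd_pow hx two_ne_zero) ((dvd_pow hy two_ne_zero).mul_left D)) hxy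
        simpa using this
      obtain ⟨z, hz⟩ := hensel_odd p h2 (-D) (x ^ 2 - u) y (by simpa using hD) hy
        (by convert hxy using 1; ring)
      refine ⟨x, z, ?_⟩
      push_cast at hz
      linear_combination hz
    · obtain ⟨z, hz⟩ := hensel_odd p h2 1 (-(D * y ^ 2) - u) x
        (by simpa using hpp.not_dvd_one) hx (by convert hxy using 1; ring)
      refine ⟨z, y, ?_⟩
      push_cast at hz
      linear_combination hz

/-- If `D = d²` with `d` a unit, then `X² - D Y² = (X - d Y) (X + d Y)`, and a factorization
`A = s t` with `s ≡ t` modulo `2` gives a solution. -/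
lemma split_repr (p : ℕ) [hp : Fact p.Prime] (D A : ℤ) (hD : ¬ (p : ℤ) ∣ D) (d s t m : ℤ_[p])
    (hd : d ^ 2 = D) (hst : s * t = A) (hm : s + t = 2 * m) :
    ∃ X Y : ℤ_[p], X ^ 2 - (D : ℤ_[p]) * Y ^ 2 = (A : ℤ_[p]) := by
  have hu : IsUnit d := by
    refine (isUnit_pow_iff two_ne_zero).1 ?_
    rw [hd, PadicInt.isUnit_iff]
    exact norm_int_eq_one p D hD
  obtain ⟨e, he⟩ := hu.exists_right_inv
  refine ⟨m, e * (m - t), ?_⟩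
  rw [← hst, ← hd]
  linear_combination (-(m - t) ^ 2 * (d * e + 1)) * he - t * hm

/-- Let `p` be a prime, `A` a nonzero integer, and `D` a positive discriminant coprime to `p`.
Then the equation `X² − D·Y² = A` has a solution `(X, Y) ∈ ℤ_p × ℤ_p` if and only if one of the
following holds: (i) `(D/p) = 1` and, in case `p = 2`, additionally `v_2(A) ≠ 1`; or
(ii) `(D/p) = −1` and `v_p(A)` is even. -/
theorem stmt7 (p : ℕ) [Fact p.Prime] (A : ℤ) (hA : A ≠ 0)
    (D : ℤ) (hDpos : 0 < D) (hDdisc : D % 4 = 0 ∨ D % 4 = 1)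
    (hcop : IsCoprime D (p : ℤ)) :
    (∃ X Y : ℤ_[p], X ^ 2 - (D : ℤ_[p]) * Y ^ 2 = (A : ℤ_[p])) ↔
      ((kron D p = 1 ∧ (p = 2 → padicValInt 2 A ≠ 1)) ∨
        (kron D p = -1 ∧ Even (padicValInt p A))) := by
  have hp : p.Prime := Fact.out
  have hpp : Prime (p : ℤ) := Nat.prime_iff_prime_int.1 hp
  have hpD : ¬ (p : ℤ) ∣ D := (hpp.coprime_iff_not_dvd).1 hcop.symm
  have hD4 : p = 2 → D % 4 = 1 := by
    rintro rfl
    push_cast at hpD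
    omega
  constructor
  · rintro ⟨X, Y, h⟩
    have hk : kron D p = 1 ∨ kron D p = -1 := by
      unfold kron
      split_ifs with h1 h2 <;> try simp
      subst h1
      have := hD4 rfl
      omega
    rcases hk with hk | hk
    · refine Or.inl ⟨hk, ?_⟩
      rintro rfl hv
      have hD4 := hD4 rfl
      -- `x² - D y² ≡ x² - y²` is never `2` modulo `4`.
      obtain ⟨u, hu, hAu⟩ := exists_unit_part 2 A hA
      rw [hv] at hAu
      push_cast at hAu hu
      have hA4 : A % 4 = 2 := by omega
      obtain ⟨x, y, -, -, hxy⟩ := approx 2 A D 2 X Y h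
      push_cast at hxy
      obtain ⟨k, hk⟩ := hxy
      obtain ⟨D', rfl⟩ : ∃ D', D = 4 * D' + 1 := ⟨D / 4, by omega⟩
      have e : x ^ 2 - y ^ 2 = A + 4 * (k + D' * y ^ 2) := by linear_combination hk
      have hx := Int.sq_mod_four_eq_one_of_odd (x := x)
      have hy := Int.sq_mod_four_eq_one_of_odd (x := y)
      rcases Int.even_or_odd x with ⟨r, rfl⟩ | ex <;> rcases Int.even_or_odd y with ⟨s, rfl⟩ | ey
      · ring_nf at e; omega
      · have := hy ey; ring_nf at e this; omega
      · have := hx ex; ring_nf at e this; omega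
      · have := hy ey; have := hx ex; omega
    · exact Or.inr ⟨hk, even_val p D hk hD4 _ A hA rfl ⟨X, Y, h⟩⟩
  · rintro (⟨hk, hv⟩ | ⟨hk, hv⟩)
    · by_cases h2 : p = 2
      · subst h2
        have hD4 := hD4 rfl
        have hv := hv rfl
        have hD8 : D % 8 = 1 := by
          simp only [kron, if_true] at hk
          split_ifs at hk <;> omega
        obtain ⟨d, hd⟩ := hensel_two 1 (-D) 1 (by norm_num) (by norm_num) (by omega)
        have hd' : d ^ 2 = D := by push_cast at hd; linear_combination hd
        rcases Int.even_or_odd' A with ⟨B, hB | hB⟩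
        · -- `A` is even of valuation different from `1`, hence divisible by `4`.
          have hBe : (2 : ℤ) ∣ B := by
            by_contra hn
            apply hv
            have := val_eq (p := 2) 1 B (by exact_mod_cast hn)
            rw [hB]
            simpa using this
          obtain ⟨C, rfl⟩ := hBe
          exact split_repr 2 D A hpD d 2 (2 * C) (1 + C) hd' (by rw [hB]; push_cast; ring) (by ring)
        · exact split_repr 2 D A hpD d 1 A (1 + B) hd' (one_mul _) (by rw [hB]; push_cast; ring)
      · have hs : ∃ y : ℤ, (p : ℤ) ∣ (y ^ 2 - D) := by
          by_contra hs
          simp only [kron, if_neg h2, if_neg hs, if_neg hpD] at hk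
          omega
        obtain ⟨y, hy⟩ := hs
        have hny : ¬ (p : ℤ) ∣ y := by
          intro hdy
          apply hpD
          have := dvd_sub (dvd_pow hdy two_ne_zero) hy
          simpa using this
        obtain ⟨d, hd⟩ := hensel_odd p h2 1 (-D) y (by simpa using hpp.not_dvd_one) hny
          (by convert hy using 1; ring)
        have hu2 : IsUnit (2 : ℤ_[p]) := by
          rw [PadicInt.isUnit_iff]
          simpa using norm_int_eq_one p 2 (not_dvd_two p h2)
        obtain ⟨e, he⟩ := hu2.exists_right_inv
        exact split_repr p D A hpD d 1 A (e * (1 + A)) (by push_cast at hd; linear_combination hd)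
          (one_mul _) (by linear_combination (-(1 + (A : ℤ_[p]))) * he)
    · obtain ⟨u, hu, hAu⟩ := exists_unit_part p A hA
      obtain ⟨k, hk2⟩ := hv
      obtain ⟨X, Y, h⟩ := unit_repr p D u hpD (by
        rintro rfl
        have := hD4 rfl
        simp only [kron, if_true] at hk
        split_ifs at hk <;> omega) hu
      refine ⟨p ^ k * X, p ^ k * Y, ?_⟩
      rw [hAu, hk2]
      push_cast
      rw [pow_add]
      linear_combination ((p : ℤ_[p]) ^ k * p ^ k) * h
end

section
/- Let (D1, D2, x) be an admissible triple, p a prime, and B a quaternion algebra over ℚ_p that is a division ring. Then there exist elements w1, w2 ∈ B with w_i ∉ ℚ_p·1, w1² = D1·1, w2² = D2·1 and trd(w1·w2) = 2x if and only if the quaternion algebra ℍ[ℚ_p, D1, x² − D1·D2] is a division ring. If moreover p ∤ D1, this holds if and only if (D1/p) = −1 and v_p((D1·D2 − x²)/4) is odd. -/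
/-!
A pair `w₁, w₂` with `w₁² = D₁`, `w₂² = D₂` and `w₁w₂ + w₂w₁ = 2x` is the same thing as an algebra
homomorphism `ℍ[F, D₁, x² - D₁D₂] → B`: the elements `i = w₁` and `j = w₁w₂ - x` anticommute, with
squares `D₁` and `x² - D₁D₂`, and conversely `w₂ = (x i + k) / D₁` (`exists_hom_of_pair`,
`exists_pair`). Since both parameters are nonzero, the source is simple of dimension four, so such a
homomorphism into a quaternion algebra is an isomorphism (`equiv_of_hom`). Hence the pair exists if
and only if `B ≅ ℍ[ℚ_p, D₁, x² - D₁D₂]`, and what remains for the first claim is that any two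
quaternion division algebras over `ℚ_p` are isomorphic (`iso_standard`).

Uniqueness is proved by bringing `ℍ[ℚ_p, a, b]` to the form `ℍ[ℚ_p, δ, p]` with `ℚ_p(√δ)`
unramified. Scaling, swapping `i` and `j`, and replacing `i` by `k` make `a` a unit. For `p = 2` it
must moreover be congruent to `1` modulo `4`, which one of `i`, `j`, `i + j`, `i + j + k` achieves
as the new first generator (`iso_two_unit`). Such a unit is a square, which is impossible in a
division algebra, or it generates the unramified extension (`sq_or_inert`). In the second case all
units are norms (`Inert.norm_surj`), so `b` matters only through the parity of its valuation, and an
even valuation would split the algebra.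

When `p ∤ D₁`, the same facts together with the evenness of the valuation of unramified norms
(`Inert.norm_even`) show that `ℍ[ℚ_p, D₁, e]` is a division ring exactly when `ℚ_p(√D₁)` is the
unramified extension and `e` has odd valuation (`dv_iff_inert`). The first condition reads
`(D₁/p) = -1`, and `x² - D₁D₂` differs from `(D₁D₂ - x²)/4` by the factor `-4`, of even valuation.
-/

open Quaternion
open scoped Classical

namespace QuatLocal

/-! ### Quaternion algebras in characteristic zero -/

section General

variable {F : Type*} [Field F]

/-- `ℍ[F,a,b]` is a division ring. -/
def Dv (a b : F) : Prop := ∀ z : ℍ[F,a,b], z ≠ 0 → IsUnit z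

/-- The algebra homomorphism out of `ℍ[F,a,b]` given by an anticommuting pair. -/
theorem exists_hom {A : Type*} [Ring A] [Algebra F A] {a b : F} (I J : A)
    (hI : I * I = a • 1) (hJ : J * J = b • 1) (h : J * I = -(I * J)) :
    ∃ φ : ℍ[F,a,b] →ₐ[F] A, φ ⟨0, 1, 0, 0⟩ = I ∧ φ ⟨0, 0, 1, 0⟩ = J := by
  refine ⟨QuaternionAlgebra.Basis.liftHom
    { i := I, j := J, k := I * J, i_mul_i := by simp [hI], j_mul_j := hJ, i_mul_j := rfl
      j_mul_i := by simp [h] }, ?_, ?_⟩ <;>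
    simp [QuaternionAlgebra.Basis.lift]

/-- Averaging `z` over its conjugates by `1, i, j, k` recovers its real part, so a proper ideal
consists of pure quaternions. -/
theorem re_eq_zero_of_hom [CharZero F] {A : Type*} [Ring A] [Nontrivial A] [Algebra F A] {a b : F}
    (ha : a ≠ 0) (hb : b ≠ 0) (φ : ℍ[F,a,b] →ₐ[F] A) (z : ℍ[F,a,b]) (hz : φ z = 0) :
    z.re = 0 := by
  have key : (4 * a * b * z.re) • (1 : ℍ[F,a,b]) = (a * b) • z
      + b • ((⟨0, 1, 0, 0⟩ : ℍ[F,a,b]) * z * ⟨0, 1, 0, 0⟩)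
      + a • ((⟨0, 0, 1, 0⟩ : ℍ[F,a,b]) * z * ⟨0, 0, 1, 0⟩)
      - ((⟨0, 0, 0, 1⟩ : ℍ[F,a,b]) * z * ⟨0, 0, 0, 1⟩) := by
    ext <;> simp <;> ring
  have h := congrArg φ key
  simp only [map_add, map_sub, map_smul, map_mul, map_one, hz] at h
  simp only [mul_zero, zero_mul, smul_zero, add_zero, sub_zero] at h
  simpa [ha, hb] using h

/-- A quaternion algebra with nonzero parameters is simple. -/
theorem hom_injective [CharZero F] {A : Type*} [Ring A] [Nontrivial A] [Algebra F A] {a b : F}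
    (ha : a ≠ 0) (hb : b ≠ 0) (φ : ℍ[F,a,b] →ₐ[F] A) : Function.Injective φ := by
  rw [injective_iff_map_eq_zero]
  intro z hz
  have h0 := re_eq_zero_of_hom ha hb φ z hz
  have h1 := re_eq_zero_of_hom ha hb φ (z * ⟨0, 1, 0, 0⟩) (by rw [map_mul, hz, zero_mul])
  have h2 := re_eq_zero_of_hom ha hb φ (z * ⟨0, 0, 1, 0⟩) (by rw [map_mul, hz, zero_mul])
  have h3 := re_eq_zero_of_hom ha hb φ (z * ⟨0, 0, 0, 1⟩) (by rw [map_mul, hz, zero_mul])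
  ext
  · exact h0
  · simpa [ha] using h1
  · simpa [hb] using h2
  · simpa [ha, hb] using h3

/-- Homomorphisms between quaternion algebras are isomorphisms: the source is simple and both
sides have dimension four. -/
theorem equiv_of_hom [CharZero F] {a b a' b' : F} (ha : a' ≠ 0) (hb : b' ≠ 0)
    (φ : ℍ[F,a',b'] →ₐ[F] ℍ[F,a,b]) : Nonempty (ℍ[F,a',b'] ≃ₐ[F] ℍ[F,a,b]) := by
  have hi := hom_injective ha hb φ
  have hs : Function.Surjective φ.toLinearMap :=
    (LinearMap.injective_iff_surjective_of_finrank_eq_finrank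
      (by rw [QuaternionAlgebra.finrank_eq_four, QuaternionAlgebra.finrank_eq_four])).1 hi
  exact ⟨AlgEquiv.ofBijective φ ⟨hi, hs⟩⟩

/-- `ℍ[F,a,b]` and `ℍ[F,a',b']` are isomorphic. -/
def Iso (a b a' b' : F) : Prop := Nonempty (ℍ[F,a,b] ≃ₐ[F] ℍ[F,a',b'])

theorem Iso.symm {a b a' b' : F} (h : Iso a b a' b') : Iso a' b' a b := ⟨h.some.symm⟩

theorem Iso.trans {a b a' b' a'' b'' : F} (h : Iso a b a' b') (h' : Iso a' b' a'' b'') :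
    Iso a b a'' b'' := ⟨h.some.trans h'.some⟩

theorem Iso.dv {a b a' b' : F} (h : Iso a b a' b') (hd : Dv a b) : Dv a' b' := by
  obtain ⟨e⟩ := h
  intro z hz
  have := (hd (e.symm z) (by simpa using hz)).map e
  simpa using this

/-- A pair of anticommuting elements of `ℍ[F,a,b]` with nonzero scalar squares gives another
presentation of the algebra. -/
theorem iso_of_pair [CharZero F] {a b a' b' : F} (ha : a' ≠ 0) (hb : b' ≠ 0) (I J : ℍ[F,a,b])
    (hI : I * I = a' • 1) (hJ : J * J = b' • 1) (h : J * I = -(I * J)) : Iso a b a' b' := by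
  obtain ⟨φ, -, -⟩ := exists_hom I J hI hJ h
  exact ⟨(equiv_of_hom ha hb φ).some.symm⟩

theorem iso_swap [CharZero F] {a b : F} (ha : a ≠ 0) (hb : b ≠ 0) : Iso a b b a :=
  iso_of_pair hb ha ⟨0, 0, 1, 0⟩ ⟨0, 1, 0, 0⟩ (by ext <;> simp) (by ext <;> simp)
    (by ext <;> simp)

theorem iso_scale [CharZero F] {a b r s : F} (ha : a ≠ 0) (hb : b ≠ 0) (hr : r ≠ 0) (hs : s ≠ 0) :
    Iso a b (r ^ 2 * a) (s ^ 2 * b) :=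
  iso_of_pair (by positivity) (by positivity) ⟨0, r, 0, 0⟩ ⟨0, 0, s, 0⟩
    (by ext <;> simp; ring) (by ext <;> simp; ring) (by ext <;> simp; ring)

theorem iso_neg_mul [CharZero F] {a b : F} (ha : a ≠ 0) (hb : b ≠ 0) : Iso a b (-(a * b)) b :=
  iso_of_pair (by simp [ha, hb]) hb ⟨0, 0, 0, 1⟩ ⟨0, 0, 1, 0⟩
    (by ext <;> simp) (by ext <;> simp) (by ext <;> simp)

/-- Multiplying `b` by a norm from `F(√a)`: replace `j` by `(s + t i) j`. -/
theorem iso_norm [CharZero F] {a b s t : F} (ha : a ≠ 0) (hb : b ≠ 0) (h : s ^ 2 - a * t ^ 2 ≠ 0) :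
    Iso a b a (b * (s ^ 2 - a * t ^ 2)) :=
  iso_of_pair ha (mul_ne_zero hb h) ⟨0, 1, 0, 0⟩ ⟨0, 0, s, t⟩
    (by ext <;> simp) (by ext <;> simp <;> ring) (by ext <;> simp)

/-- The pure quaternion `i + j` as a first generator. -/
theorem iso_add [CharZero F] {a b : F} (ha : a ≠ 0) (hb : b ≠ 0) (h : a + b ≠ 0) :
    Iso a b (a + b) (-(a * b)) :=
  iso_of_pair h (by simp [ha, hb]) ⟨0, 1, 1, 0⟩ ⟨0, 0, 0, 1⟩
    (by ext <;> simp) (by ext <;> simp) (by ext <;> simp)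

/-- The pure quaternion `i + j + k` as a first generator. -/
theorem iso_add_add [CharZero F] {a b : F} (ha : a ≠ 0) (hb : b ≠ 0) (h : a + b - a * b ≠ 0)
    (h1 : a - 1 ≠ 0) : Iso a b (a + b - a * b) (a * b * (a - 1)) :=
  iso_of_pair h (by simp [ha, hb, h1]) ⟨0, 1, 1, 1⟩ ⟨0, 0, a, 1⟩
    (by ext <;> simp) (by ext <;> simp; ring) (by ext <;> simp; ring)

theorem mul_star_eq {a b : F} (z : ℍ[F,a,b]) : z * star z =
    (z.re ^ 2 - a * z.imI ^ 2 - b * (z.imJ ^ 2 - a * z.imK ^ 2)) • (1 : ℍ[F,a,b]) := by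
  ext <;> simp <;> ring

/-- `ℍ[F,a,b]` is a division ring exactly when its norm form is anisotropic. -/
theorem dv_iff {a b : F} : Dv a b ↔ ∀ s t u v : F,
    s ^ 2 - a * t ^ 2 - b * (u ^ 2 - a * v ^ 2) = 0 → s = 0 ∧ t = 0 ∧ u = 0 ∧ v = 0 := by
  constructor
  · intro h s t u v h0
    by_contra hne
    have hz : (⟨s, t, u, v⟩ : ℍ[F,a,b]) ≠ 0 := by
      intro hz
      rw [QuaternionAlgebra.ext_iff] at hz
      exact hne hz
    have h1 := mul_star_eq (⟨s, t, u, v⟩ : ℍ[F,a,b])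
    rw [h0, zero_smul, (h _ hz).mul_right_eq_zero] at h1
    exact hz (star_eq_zero.1 h1)
  · intro h z hz
    set n := z.re ^ 2 - a * z.imI ^ 2 - b * (z.imJ ^ 2 - a * z.imK ^ 2) with hn
    have hn0 : n ≠ 0 := by
      intro h0
      obtain ⟨h1, h2, h3, h4⟩ := h _ _ _ _ h0
      exact hz (QuaternionAlgebra.ext h1 h2 h3 h4)
    have hu : IsUnit (z * star z) := by
      rw [mul_star_eq, ← Algebra.algebraMap_eq_smul_one]
      exact (IsUnit.mk0 _ hn0).map _
    have hc : Commute z (star z) := by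
      show z * star z = star z * z
      ext <;> simp <;> ring
    exact (hc.isUnit_mul_iff.1 hu).1

theorem Dv.not_sq_left {a b : F} (h : Dv a b) (r : F) : a ≠ r ^ 2 := by
  rintro rfl
  have := dv_iff.1 h r 1 0 0 (by ring)
  simp at this

/-- If `ℍ[F,a,b]` is a division ring, `b` is not a norm from `F(√a)`. -/
theorem Dv.not_norm {a b : F} (h : Dv a b) (s t : F) : b ≠ s ^ 2 - a * t ^ 2 := by
  rintro rfl
  have := dv_iff.1 h s t 1 0 (by ring)
  simp at this

end General

/-! ### Squares and unramified norms in `ℚ_p` -/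

section Padic

variable {p : ℕ} [hp : Fact p.Prime]

theorem norm_four_odd (h2 : p ≠ 2) : ‖(4 : ℚ_[p])‖ = 1 := by
  have h : ‖((4 : ℕ) : ℚ_[p])‖ = 1 := by
    rw [Padic.norm_natCast_eq_one_iff]
    exact Nat.Coprime.pow_right 2 ((Nat.coprime_primes hp.out Nat.prime_two).2 h2)
  simpa using h

theorem norm_four_two : ‖(4 : ℚ_[2])‖ = 1 / 4 := by
  have h := Padic.norm_p_pow (p := 2) 2
  norm_num at h ⊢
  exact h

theorem norm_unit {n : ℤ} (h : ¬ (p : ℤ) ∣ n) : ‖(n : ℚ_[p])‖ = 1 :=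
  le_antisymm (Padic.norm_int_le_one n) (not_lt.1 (mt Padic.norm_intCast_lt_one_iff.1 h))

theorem cast_ne_zero_of_unit {n : ℤ} (h : ¬ (p : ℤ) ∣ n) : (n : ℚ_[p]) ≠ 0 := by
  rw [Int.cast_ne_zero]
  rintro rfl
  exact h (dvd_zero _)

/-- Hensel: elements of `ℚ_p` closer to `1` than `4` is to `0` are squares. -/
theorem exists_sq_of_near_one {z : ℚ_[p]} (hz : ‖z - 1‖ < ‖(4 : ℚ_[p])‖) :
    ∃ r : ℚ_[p], z = r ^ 2 := by
  have h4 : ‖(4 : ℚ_[p])‖ ≤ 1 := by simpa using Padic.norm_int_le_one (p := p) 4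
  have hz1 : ‖z‖ ≤ 1 := by
    have := Padic.nonarchimedean (z - 1) 1
    rw [sub_add_cancel, norm_one] at this
    exact this.trans (max_le (hz.le.trans h4) le_rfl)
  obtain ⟨z', rfl⟩ : ∃ z' : ℤ_[p], (z' : ℚ_[p]) = z := ⟨⟨z, hz1⟩, rfl⟩
  have hH := hensels_lemma (p := p) (R := ℤ_[p]) (F := Polynomial.X ^ 2 - Polynomial.C z') (a := 1)
    (by
      simp only [Polynomial.derivative_X_pow, Polynomial.derivative_C,
        map_sub, map_mul, map_pow, Polynomial.aeval_X, Polynomial.aeval_C, sub_zero]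
      have e1 : ‖(1 : ℤ_[p]) ^ 2 - algebraMap ℤ_[p] ℤ_[p] z'‖ = ‖(z' : ℚ_[p]) - 1‖ := by
        rw [norm_sub_rev, PadicInt.norm_def]
        simp
      rw [e1]
      refine hz.trans_eq ?_
      rw [← norm_pow, PadicInt.norm_def]
      have e2 : ((2 : ℤ_[p]) : ℚ_[p]) = 2 := rfl
      congr 1
      push_cast
      norm_num [e2])
  obtain ⟨r, hr, -⟩ := hH
  refine ⟨(r : ℚ_[p]), ?_⟩
  simp only [map_sub, map_pow, Polynomial.aeval_X, Polynomial.aeval_C, sub_eq_zero] at hr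
  have := congrArg (fun y : ℤ_[p] => (y : ℚ_[p])) hr
  simpa using this.symm

theorem exists_sq_of_sq_mod (h2 : p ≠ 2) {n y : ℤ} (hy : ¬ (p : ℤ) ∣ y)
    (h : (p : ℤ) ∣ y ^ 2 - n) : ∃ r : ℚ_[p], (n : ℚ_[p]) = r ^ 2 := by
  have hy0 := cast_ne_zero_of_unit hy
  obtain ⟨r, hr⟩ := exists_sq_of_near_one (p := p) (z := (n : ℚ_[p]) / y ^ 2) (by
    rw [norm_four_odd h2]
    have : (n : ℚ_[p]) / y ^ 2 - 1 = -((y ^ 2 - n : ℤ) : ℚ_[p]) / y ^ 2 := by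
      push_cast; field_simp; ring
    rw [this, norm_div, norm_neg, norm_pow, norm_unit hy, one_pow, div_one]
    exact Padic.norm_intCast_lt_one_iff.2 h)
  refine ⟨r * y, ?_⟩
  rw [mul_pow, ← hr]
  field_simp

theorem exists_sq_of_mod_eight {n : ℤ} (h : n % 8 = 1) : ∃ r : ℚ_[2], (n : ℚ_[2]) = r ^ 2 := by
  apply exists_sq_of_near_one
  have h1 : ‖((n - 1 : ℤ) : ℚ_[2])‖ ≤ ((2 : ℕ) : ℝ) ^ (-((3 : ℕ) : ℤ)) :=
    (Padic.norm_int_le_pow_iff_dvd _ _).2 (by norm_num; omega)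
  rw [norm_four_two]
  push_cast at h1
  refine h1.trans_lt ?_
  norm_num [zpow_neg]

/-- The rational integers are dense in the unit ball of `ℚ_p`. -/
theorem exists_int_near {z : ℚ_[p]} (hz : ‖z‖ ≤ 1) {ε : ℝ} (hε : 0 < ε) :
    ∃ n : ℤ, ‖z - n‖ < ε := by
  obtain ⟨z', rfl⟩ : ∃ z' : ℤ_[p], (z' : ℚ_[p]) = z := ⟨⟨z, hz⟩, rfl⟩
  obtain ⟨n, hn⟩ := PadicInt.denseRange_intCast.exists_dist_lt z' hε
  refine ⟨n, ?_⟩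
  rw [dist_eq_norm, PadicInt.norm_def] at hn
  simpa using hn

theorem norm_four_pos : 0 < ‖(4 : ℚ_[p])‖ := norm_pos_iff.2 (by norm_num)

theorem norm_four_le : ‖(4 : ℚ_[p])‖ ≤ 1 := by simpa using Padic.norm_int_le_one (p := p) 4

/-- Modulo squares, every unit of `ℤ_p` is a rational integer prime to `p`. -/
theorem exists_unit_class {u : ℚ_[p]} (hu : ‖u‖ = 1) :
    ∃ (r : ℚ_[p]) (m : ℤ), r ≠ 0 ∧ ¬ (p : ℤ) ∣ m ∧ u = r ^ 2 * m := by
  obtain ⟨m, hm⟩ := exists_int_near hu.le (norm_four_pos (p := p))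
  have hm1 : ‖(m : ℚ_[p])‖ = 1 := by
    rw [← hu]
    refine (Padic.norm_eq_of_norm_sub_lt_left ?_).symm
    exact (hm.trans_le norm_four_le).trans_eq hu.symm
  have hpm : ¬ (p : ℤ) ∣ m := fun h => (Padic.norm_intCast_lt_one_iff.2 h).ne hm1
  have hm0 := cast_ne_zero_of_unit hpm
  obtain ⟨r, hr⟩ := exists_sq_of_near_one (p := p) (z := u / m) (by
    rw [div_sub_one hm0, norm_div, hm1, div_one]
    exact hm)
  have hr' : u = r ^ 2 * m := by rw [← hr]; field_simp
  refine ⟨r, m, ?_, hpm, hr'⟩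
  rintro rfl
  rw [hr'] at hu
  simp at hu

theorem p_ne_zero : (p : ℚ_[p]) ≠ 0 := Nat.cast_ne_zero.2 hp.out.ne_zero

theorem class_even {a : ℚ_[p]} (ha : a ≠ 0) (hv : Even a.valuation) :
    ∃ (r : ℚ_[p]) (m : ℤ), r ≠ 0 ∧ ¬ (p : ℤ) ∣ m ∧ a = r ^ 2 * m := by
  obtain ⟨k, hk⟩ := hv
  have hp0 := p_ne_zero (p := p)
  have hpr : (p : ℝ) ≠ 0 := Nat.cast_ne_zero.2 hp.out.ne_zero
  obtain ⟨r, m, hr, hm, h⟩ := exists_unit_class (p := p) (u := a / (p ^ k) ^ 2) (by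
    rw [norm_div, norm_pow, Padic.norm_p_zpow, Padic.norm_eq_zpow_neg_valuation ha, hk, neg_add,
      zpow_add₀ hpr, ← sq]
    exact div_self (by positivity))
  refine ⟨r * p ^ k, m, by positivity, hm, ?_⟩
  have : ((p : ℚ_[p]) ^ k) ^ 2 ≠ 0 := by positivity
  field_simp at h
  rw [h]; ring

theorem class_odd {a : ℚ_[p]} (ha : a ≠ 0) (hv : Odd a.valuation) :
    ∃ (r : ℚ_[p]) (m : ℤ), r ≠ 0 ∧ ¬ (p : ℤ) ∣ m ∧ a = r ^ 2 * (p * m) := by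
  have hp0 := p_ne_zero (p := p)
  obtain ⟨r, m, hr, hm, h⟩ := class_even (a := a / (p : ℚ_[p])) (div_ne_zero ha hp0) (by
    rw [div_eq_mul_inv, Padic.valuation_mul ha (inv_ne_zero hp0), Padic.valuation_inv,
      Padic.valuation_p]
    obtain ⟨k, hk⟩ := hv
    exact ⟨k, by omega⟩)
  refine ⟨r, m, hr, hm, ?_⟩
  field_simp at h
  rw [h]; ring

/-- `ℚ_p(√n)` is the unramified quadratic extension of `ℚ_p`, for a suitable integer `n`: a
quadratic nonresidue for odd `p`, an integer congruent to `5` modulo `8` for `p = 2`. -/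
def Inert (p : ℕ) (n : ℤ) : Prop :=
  if p = 2 then n % 8 = 5 else ∀ y : ℤ, ¬ (p : ℤ) ∣ y ^ 2 - n

theorem inert_two {n : ℤ} : Inert 2 n ↔ n % 8 = 5 := by simp [Inert]

theorem inert_odd {p : ℕ} (h2 : p ≠ 2) {n : ℤ} : Inert p n ↔ ∀ y : ℤ, ¬ (p : ℤ) ∣ y ^ 2 - n := by
  simp [Inert, h2]

theorem Inert.unit {n : ℤ} (h : Inert p n) : ¬ (p : ℤ) ∣ n := by
  by_cases h2 : p = 2
  · subst h2; rw [inert_two] at h; push_cast; omega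
  · rw [inert_odd h2] at h
    have := h 0
    simpa using this

theorem prime_int : Prime (p : ℤ) := Nat.prime_iff_prime_int.1 hp.out

/-- An integral unit (congruent to `1` modulo `4` if `p = 2`) is a square or inert. -/
theorem sq_or_inert {n : ℤ} (hn : ¬ (p : ℤ) ∣ n) (h4 : p = 2 → n % 4 = 1) :
    (∃ r : ℚ_[p], (n : ℚ_[p]) = r ^ 2) ∨ Inert p n := by
  by_cases h2 : p = 2
  · subst h2
    rw [inert_two]
    have : n % 8 = 1 ∨ n % 8 = 5 := by have := h4 rfl; omega
    exact this.imp exists_sq_of_mod_eight id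
  · rw [inert_odd h2]
    by_cases h : ∀ y : ℤ, ¬ (p : ℤ) ∣ y ^ 2 - n
    · exact Or.inr h
    · push Not at h
      obtain ⟨y, hy⟩ := h
      refine Or.inl (exists_sq_of_sq_mod h2 (fun hpy => hn ?_) hy)
      have := dvd_sub (dvd_pow hpy two_ne_zero) hy
      simpa using this

theorem exists_inert : ∃ n : ℤ, Inert p n := by
  by_cases h2 : p = 2
  · subst h2; exact ⟨5, by simp [inert_two]⟩
  · obtain ⟨a, ha⟩ := FiniteField.exists_nonsquare (F := ZMod p) (by rwa [ZMod.ringChar_zmod_n])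
    refine ⟨a.val, (inert_odd h2).2 fun y hy => ha ⟨(y : ZMod p), ?_⟩⟩
    rw [← ZMod.intCast_zmod_eq_zero_iff_dvd] at hy
    push_cast at hy
    rw [ZMod.natCast_val, ZMod.cast_id, sub_eq_zero] at hy
    rw [← hy, sq]

/-- Any two inert integers differ by a square factor. -/
theorem Inert.ratio {m n : ℤ} (hm : Inert p m) (hn : Inert p n) :
    ∃ r : ℚ_[p], r ≠ 0 ∧ (m : ℚ_[p]) = r ^ 2 * n := by
  have hm0 := cast_ne_zero_of_unit hm.unit
  have hn0 := cast_ne_zero_of_unit hn.unit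
  have key : ∃ r : ℚ_[p], ((m * n : ℤ) : ℚ_[p]) = r ^ 2 := by
    by_cases h2 : p = 2
    · subst h2
      rw [inert_two] at hm hn
      exact exists_sq_of_mod_eight (by rw [Int.mul_emod, hm, hn]; norm_num)
    · have hnl : ∀ k : ℤ, Inert p k → legendreSym p k = -1 := by
        intro k hk
        rw [legendreSym.eq_neg_one_iff]
        rintro ⟨y, hy⟩
        refine (inert_odd h2).1 hk y.val ?_
        rw [← ZMod.intCast_zmod_eq_zero_iff_dvd]
        push_cast
        rw [ZMod.natCast_val, ZMod.cast_id, hy]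
        ring
      have hmn : legendreSym p (m * n) = 1 := by rw [legendreSym.mul, hnl m hm, hnl n hn]; norm_num
      have hmn0 : ((m * n : ℤ) : ZMod p) ≠ 0 := by
        rw [Ne, ZMod.intCast_zmod_eq_zero_iff_dvd]
        exact fun h => (prime_int.dvd_or_dvd h).elim hm.unit hn.unit
      obtain ⟨y, hy⟩ := (legendreSym.eq_one_iff p hmn0).1 hmn
      have hd : (p : ℤ) ∣ (y.val : ℤ) ^ 2 - m * n := by
        rw [← ZMod.intCast_zmod_eq_zero_iff_dvd]
        push_cast at hy ⊢
        rw [ZMod.natCast_val, ZMod.cast_id, hy]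
        ring
      refine exists_sq_of_sq_mod h2 (fun h => hmn0 ?_) hd
      rw [ZMod.intCast_zmod_eq_zero_iff_dvd]
      have := dvd_sub (dvd_pow h two_ne_zero) hd
      simpa using this
  obtain ⟨r, hr⟩ := key
  push_cast at hr
  refine ⟨r / n, div_ne_zero ?_ hn0, ?_⟩
  · rintro rfl
    simp [hm0, hn0] at hr
  · rw [div_pow, ← hr]; field_simp

/-- Every integral unit is a norm from the unramified quadratic extension. -/
theorem Inert.norm_surj {d u : ℤ} (hd : Inert p d) (hu : ¬ (p : ℤ) ∣ u) :
    ∃ s t : ℚ_[p], (u : ℚ_[p]) = s ^ 2 - d * t ^ 2 := by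
  have hd0 := cast_ne_zero_of_unit hd.unit
  by_cases h2 : p = 2
  · subst h2
    rw [inert_two] at hd
    have hu8 : u % 8 = 1 ∨ u % 8 = 3 ∨ u % 8 = 5 ∨ u % 8 = 7 := by push_cast at hu; omega
    rcases hu8 with h | h | h | h
    · obtain ⟨r, hr⟩ := exists_sq_of_mod_eight h
      exact ⟨r, 0, by rw [hr]; ring⟩
    · obtain ⟨r, hr⟩ := exists_sq_of_mod_eight (n := -u * d)
        (by rw [Int.mul_emod, hd, show -u % 8 = 5 by omega]; norm_num)
      refine ⟨0, r / d, ?_⟩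
      rw [div_pow, ← hr]; push_cast; field_simp; ring
    · obtain ⟨r, hr⟩ := exists_sq_of_mod_eight (n := u + 4 * d) (by omega)
      refine ⟨r, 2, ?_⟩
      rw [← hr]; push_cast; ring
    · obtain ⟨r, hr⟩ := exists_sq_of_mod_eight (n := (4 - u) * d)
        (by rw [Int.mul_emod, hd, show (4 - u) % 8 = 5 by omega]; norm_num)
      refine ⟨2, r / d, ?_⟩
      rw [div_pow, ← hr]; push_cast; field_simp; ring
  -- a solution modulo `p` exists by counting; one of its coordinates is a unit and can be lifted
  · have hdz : (d : ZMod p) ≠ 0 := by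
      rw [Ne, ZMod.intCast_zmod_eq_zero_iff_dvd]; exact hd.unit
    obtain ⟨s, t, hst⟩ := FiniteField.exists_root_sum_quadratic (R := ZMod p)
      (f := Polynomial.X ^ 2) (g := -Polynomial.C (d : ZMod p) * Polynomial.X ^ 2
        - Polynomial.C (u : ZMod p)) (by simp) (by
          rw [← Polynomial.C_neg, Polynomial.degree_sub_C]
          · rw [Polynomial.degree_C_mul_X_pow 2 (neg_ne_zero.2 hdz)]; rfl
          · rw [Polynomial.degree_C_mul_X_pow 2 (neg_ne_zero.2 hdz)]; norm_num) (by
        rw [ZMod.card]; exact hp.out.odd_of_ne_two h2 |> Nat.odd_iff.1)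
    simp only [Polynomial.eval_pow, Polynomial.eval_X, Polynomial.eval_sub, Polynomial.eval_mul,
      Polynomial.eval_neg, Polynomial.eval_C] at hst
    have hdiv : (p : ℤ) ∣ (s.val : ℤ) ^ 2 - (u + d * (t.val : ℤ) ^ 2) := by
      rw [← ZMod.intCast_zmod_eq_zero_iff_dvd]
      push_cast
      rw [ZMod.natCast_val, ZMod.cast_id, ZMod.natCast_val, ZMod.cast_id]
      linear_combination hst
    by_cases hs : (p : ℤ) ∣ s.val
    · have h1 : (p : ℤ) ∣ (d * t.val) ^ 2 - -(d * u) := by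
        have h3 := dvd_sub (dvd_pow hs two_ne_zero) hdiv
        have : (d * (t.val : ℤ)) ^ 2 - -(d * u)
          = d * ((s.val : ℤ) ^ 2 - ((s.val : ℤ) ^ 2 - (u + d * (t.val : ℤ) ^ 2))) := by ring
        rw [this]
        exact h3.mul_left d
      obtain ⟨r, hr⟩ := exists_sq_of_sq_mod h2 (fun h => by
        have h3 := dvd_sub (dvd_pow h two_ne_zero) h1
        rw [sub_sub_cancel, dvd_neg] at h3
        exact (prime_int.dvd_or_dvd h3).elim hd.unit hu) h1
      refine ⟨0, r / d, ?_⟩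
      rw [div_pow, ← hr]; push_cast; field_simp; ring
    · obtain ⟨r, hr⟩ := exists_sq_of_sq_mod h2 hs hdiv
      refine ⟨r, t.val, ?_⟩
      rw [← hr]; push_cast; ring

/-- For a unit `q`, the norm of `q + √d` has even valuation: it is a unit for odd `p`, and `4` times
a unit for `p = 2`. -/
theorem Inert.norm_aux {d : ℤ} (hd : Inert p d) {q : ℚ_[p]} (hq : ‖q‖ = 1) :
    ∃ k : ℤ, ‖q ^ 2 - d‖ = (p : ℝ) ^ (2 * k) := by
  obtain ⟨n, hn⟩ := exists_int_near hq.le (norm_four_pos (p := p))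
  have hdec : q ^ 2 - d = (q - n) * (q + n) + ((n ^ 2 - d : ℤ) : ℚ_[p]) := by push_cast; ring
  have hsmall : ‖(q - n) * (q + n)‖ < ‖(4 : ℚ_[p])‖ := by
    rw [norm_mul]
    have h1 : ‖q + n‖ ≤ 1 :=
      (Padic.nonarchimedean q n).trans (max_le hq.le (Padic.norm_int_le_one n))
    nlinarith [norm_nonneg (q - n)]
  have key : ∀ e : ℝ, ‖((n ^ 2 - d : ℤ) : ℚ_[p])‖ = e → ‖(4 : ℚ_[p])‖ ≤ e → ‖q ^ 2 - d‖ = e := by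
    intro e he hle
    have hlt : ‖(q - n) * (q + n)‖ < ‖((n ^ 2 - d : ℤ) : ℚ_[p])‖ := by
      rw [he]; exact hsmall.trans_le hle
    rw [hdec, Padic.add_eq_max_of_ne hlt.ne, max_eq_right hlt.le, he]
  by_cases h2 : p = 2
  · subst h2
    have hn1 : ‖(n : ℚ_[2])‖ = 1 := by
      rw [← hq]
      refine (Padic.norm_eq_of_norm_sub_lt_left ?_).symm
      exact (hn.trans_le norm_four_le).trans_eq hq.symm
    have hodd : n % 2 = 1 := by
      have : ¬ ((2 : ℕ) : ℤ) ∣ n := fun h => (Padic.norm_intCast_lt_one_iff.2 h).ne hn1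
      push_cast at this; omega
    rw [inert_two] at hd
    obtain ⟨c, hc⟩ : ∃ c : ℤ, n ^ 2 - d = 4 * c ∧ c % 2 = 1 := by
      have : n ^ 2 % 8 = 1 := by
        have : n % 8 = 1 ∨ n % 8 = 3 ∨ n % 8 = 5 ∨ n % 8 = 7 := by omega
        rcases this with h | h | h | h <;> simp [sq, Int.mul_emod, h]
      exact ⟨(n ^ 2 - d) / 4, by omega, by omega⟩
    refine ⟨-1, key _ ?_ ?_⟩
    · rw [hc.1]
      push_cast
      rw [norm_mul, norm_four_two, norm_unit (by push_cast; omega)]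
      norm_num [zpow_neg]
    · rw [norm_four_two]; norm_num [zpow_neg]
  · refine ⟨0, ?_⟩
    rw [mul_zero, zpow_zero]
    exact key 1 (norm_unit ((inert_odd h2).1 hd n)) norm_four_le

/-- Norms from the unramified quadratic extension have even valuation. -/
theorem Inert.norm_even {d : ℤ} (hd : Inert p d) {s t : ℚ_[p]} (h : ¬ (s = 0 ∧ t = 0)) :
    ∃ k : ℤ, ‖s ^ 2 - d * t ^ 2‖ = (p : ℝ) ^ (2 * k) := by
  have hsq : ∀ x : ℚ_[p], x ≠ 0 → ∃ k : ℤ, ‖x‖ ^ 2 = (p : ℝ) ^ (2 * k) := by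
    intro x hx
    exact ⟨-x.valuation, by rw [Padic.norm_eq_zpow_neg_valuation hx, mul_comm, zpow_mul, zpow_ofNat]⟩
  have hd1 : ‖(d : ℚ_[p])‖ = 1 := norm_unit hd.unit
  by_cases hst : ‖s‖ = ‖t‖
  · have ht : t ≠ 0 := by
      rintro rfl
      rw [norm_zero, norm_eq_zero] at hst
      exact h ⟨hst, rfl⟩
    obtain ⟨k, hk⟩ := hd.norm_aux (q := s / t) (by
      rw [norm_div, hst]; exact div_self (norm_ne_zero_iff.2 ht))
    obtain ⟨l, hl⟩ := hsq t ht
    refine ⟨k + l, ?_⟩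
    have : s ^ 2 - d * t ^ 2 = ((s / t) ^ 2 - d) * t ^ 2 := by field_simp
    rw [this, norm_mul, hk, norm_pow, hl, mul_add,
      zpow_add₀ (Nat.cast_ne_zero.2 hp.out.ne_zero)]
  · have hne : ‖s ^ 2‖ ≠ ‖-(d * t ^ 2)‖ := by
      rw [norm_neg, norm_mul, hd1, one_mul, norm_pow, norm_pow]
      exact fun e => hst ((sq_eq_sq₀ (norm_nonneg _) (norm_nonneg _)).1 e)
    rw [sub_eq_add_neg, Padic.add_eq_max_of_ne hne, norm_neg, norm_mul, hd1, one_mul, norm_pow,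
      norm_pow]
    rcases max_cases (‖s‖ ^ 2) (‖t‖ ^ 2) with ⟨e, hle⟩ | ⟨e, hle⟩
    · rw [e]
      refine hsq s ?_
      rintro rfl
      refine hst ?_
      rw [norm_zero] at hle ⊢
      nlinarith [norm_nonneg t]
    · rw [e]
      refine hsq t ?_
      rintro rfl
      rw [norm_zero] at hle
      nlinarith [sq_nonneg ‖s‖]

end Padic

/-! ### Quaternion division algebras over `ℚ_p` -/

section Classification

variable {p : ℕ} [hp : Fact p.Prime]

/-- Division quaternion algebras containing the unramified quadratic extension: the second
parameter matters only up to norms, that is, up to the parity of its valuation, and an even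
valuation would split the algebra. -/
theorem iso_of_inert {c δ : ℤ} {d : ℚ_[p]} (hc : Inert p c) (hδ : Inert p δ) (hd : d ≠ 0)
    (h : Dv (c : ℚ_[p]) d) : Iso (c : ℚ_[p]) d (δ : ℚ_[p]) (p : ℚ_[p]) := by
  have hδ0 := cast_ne_zero_of_unit hδ.unit
  obtain ⟨r, hr, hcr⟩ := hc.ratio hδ
  have h1 : Iso (δ : ℚ_[p]) d (c : ℚ_[p]) d := by
    have := iso_scale hδ0 hd hr one_ne_zero
    rwa [← hcr, one_pow, one_mul] at this
  refine h1.symm.trans ?_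
  have hdv := h1.symm.dv h
  rcases Int.even_or_odd d.valuation with hv | hv
  · obtain ⟨q, m, -, hm, rfl⟩ := class_even hd hv
    obtain ⟨s, t, hst⟩ := hδ.norm_surj hm
    exact absurd (by rw [hst]; ring) (hdv.not_norm (q * s) (q * t))
  · obtain ⟨q, m, hq, hm, rfl⟩ := class_odd hd hv
    obtain ⟨s, t, hst⟩ := hδ.norm_surj hm
    have e : q ^ 2 * (p * (m : ℚ_[p])) = p * ((q * s) ^ 2 - δ * (q * t) ^ 2) := by
      rw [hst]; ring
    rw [e] at hd ⊢
    exact (iso_norm hδ0 p_ne_zero (right_ne_zero_of_mul hd)).symm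

theorem iso_of_unit {c δ : ℤ} {d : ℚ_[p]} (hc : ¬ (p : ℤ) ∣ c) (h4 : p = 2 → c % 4 = 1)
    (hδ : Inert p δ) (hd : d ≠ 0) (h : Dv (c : ℚ_[p]) d) :
    Iso (c : ℚ_[p]) d (δ : ℚ_[p]) (p : ℚ_[p]) := by
  rcases sq_or_inert hc h4 with ⟨r, hr⟩ | hi
  · exact absurd hr (h.not_sq_left r)
  · exact iso_of_inert hi hδ hd h

/-- The dyadic case with one parameter a unit: one of `i`, `j`, `i + j`, `i + j + k` has square
congruent to `1` modulo `4`. -/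
theorem iso_two_unit {a b δ : ℤ} (ha : a % 2 = 1) (hb : b % 4 ≠ 0) (hδ : Inert 2 δ)
    (h : Dv (a : ℚ_[2]) (b : ℚ_[2])) :
    Iso (a : ℚ_[2]) (b : ℚ_[2]) (δ : ℚ_[2]) ((2 : ℕ) : ℚ_[2]) := by
  have ha0 : (a : ℚ_[2]) ≠ 0 := Int.cast_ne_zero.2 (by omega)
  have hb0 : (b : ℚ_[2]) ≠ 0 := Int.cast_ne_zero.2 (by omega)
  have ha4 : a % 4 = 1 ∨ a % 4 = 3 := by omega
  have hb4 : b % 4 = 1 ∨ b % 4 = 2 ∨ b % 4 = 3 := by omega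
  rcases ha4 with ha4 | ha4
  · exact iso_of_unit (by push_cast; omega) (fun _ => ha4) hδ hb0 h
  rcases hb4 with hb4 | hb4 | hb4
  · have h1 := iso_swap ha0 hb0
    exact h1.trans (iso_of_unit (by push_cast; omega) (fun _ => hb4) hδ ha0 (h1.dv h))
  · have h1 := iso_add ha0 hb0 (by exact_mod_cast (show a + b ≠ 0 by omega))
    have h2 := h1.dv h
    rw [← Int.cast_add] at h1 h2
    exact h1.trans (iso_of_unit (by push_cast; omega) (fun _ => by omega) hδ
      (by simp [ha0, hb0]) h2)
  · have hab : (a + b - a * b) % 4 = 1 := by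
      rw [Int.sub_emod, Int.add_emod, Int.mul_emod, ha4, hb4]; norm_num
    have ha1 : (a : ℚ_[2]) - 1 ≠ 0 := by exact_mod_cast (show a - 1 ≠ 0 by omega)
    have h1 := iso_add_add ha0 hb0
      (by exact_mod_cast (show a + b - a * b ≠ 0 by intro h0; rw [h0] at hab; norm_num at hab)) ha1
    have h2 := h1.dv h
    have e : (a : ℚ_[2]) + b - a * b = ((a + b - a * b : ℤ) : ℚ_[2]) := by push_cast; ring
    rw [e] at h1 h2
    exact h1.trans (iso_of_unit (by push_cast; omega) (fun _ => hab) hδ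
      (by simp [ha0, hb0, ha1]) h2)

/-- Uniqueness of the quaternion division algebra over `ℚ_p`: it is `ℍ[ℚ_p, δ, p]` with `ℚ_p(√δ)`
unramified. -/
theorem iso_standard {a b : ℚ_[p]} {δ : ℤ} (ha : a ≠ 0) (hb : b ≠ 0) (hδ : Inert p δ)
    (h : Dv a b) : Iso a b (δ : ℚ_[p]) (p : ℚ_[p]) := by
  -- one parameter a unit: enough for odd `p`, and reduced to `iso_two_unit` for `p = 2`
  have unit_case : ∀ (m : ℤ) (b : ℚ_[p]), ¬ (p : ℤ) ∣ m → b ≠ 0 → Dv (m : ℚ_[p]) b →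
      Iso (m : ℚ_[p]) b (δ : ℚ_[p]) (p : ℚ_[p]) := by
    intro m b hm hb h
    by_cases h2 : p = 2
    · subst h2
      have hm0 := cast_ne_zero_of_unit hm
      obtain ⟨r, n, hr, hn, hbn⟩ : ∃ (r : ℚ_[2]) (n : ℤ), r ≠ 0 ∧ n % 4 ≠ 0 ∧ b = r ^ 2 * n := by
        rcases Int.even_or_odd b.valuation with hv | hv
        · obtain ⟨r, n, hr, hn, hbn⟩ := class_even hb hv
          exact ⟨r, n, hr, by push_cast at hn; omega, hbn⟩
        · obtain ⟨r, n, hr, hn, hbn⟩ := class_odd hb hv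
          exact ⟨r, 2 * n, hr, by push_cast at hn; omega, by rw [hbn]; push_cast; ring⟩
      have hn0 : (n : ℚ_[2]) ≠ 0 := Int.cast_ne_zero.2 (by omega)
      have h1 := iso_scale hm0 hn0 one_ne_zero hr
      rw [one_pow, one_mul, ← hbn] at h1
      exact h1.symm.trans
        (iso_two_unit (by push_cast at hm; omega) hn hδ (h1.symm.dv h))
    · exact iso_of_unit hm (fun h => absurd h h2) hδ hb h
  -- a parameter of even valuation can be scaled to a unit
  have even_case : ∀ a b : ℚ_[p], a ≠ 0 → b ≠ 0 → Even a.valuation → Dv a b →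
      Iso a b (δ : ℚ_[p]) (p : ℚ_[p]) := by
    intro a b ha hb hv h
    obtain ⟨r, m, hr, hm, ham⟩ := class_even ha hv
    have h1 := iso_scale (cast_ne_zero_of_unit hm) hb hr one_ne_zero
    rw [one_pow, one_mul, ← ham] at h1
    exact h1.symm.trans (unit_case m b hm hb (h1.symm.dv h))
  rcases Int.even_or_odd a.valuation with hva | hva
  · exact even_case a b ha hb hva h
  rcases Int.even_or_odd b.valuation with hvb | hvb
  · have h1 := iso_swap ha hb
    exact h1.trans (even_case b a hb ha hvb (h1.dv h))
  · have h1 := iso_neg_mul ha hb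
    refine h1.trans (even_case _ b (by simp [ha, hb]) hb ?_ (h1.dv h))
    have hneg : (((-1 : ℤ) : ℚ_[p])).valuation = 0 := by
      rw [Padic.valuation_intCast]; simp [padicValInt]
    rw [← neg_mul, Padic.valuation_mul (neg_ne_zero.2 ha) hb,
      show -a = ((-1 : ℤ) : ℚ_[p]) * a by push_cast; ring,
      Padic.valuation_mul (by norm_num) ha, hneg, zero_add]
    exact hva.add_odd hvb

/-- For `d` a unit (and a discriminant), `ℍ[ℚ_p, d, e]` is a division ring exactly when `ℚ_p(√d)`
is the unramified quadratic extension and `e` is not one of its norms. -/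
theorem dv_iff_inert {d : ℤ} {e : ℚ_[p]} (hd : ¬ (p : ℤ) ∣ d) (h4 : p = 2 → d % 4 = 1)
    (he : e ≠ 0) : Dv (d : ℚ_[p]) e ↔ Inert p d ∧ Odd e.valuation := by
  constructor
  · intro h
    have hi : Inert p d := by
      rcases sq_or_inert hd h4 with ⟨r, hr⟩ | hi
      · exact absurd hr (h.not_sq_left r)
      · exact hi
    refine ⟨hi, ?_⟩
    rw [← Int.not_even_iff_odd]
    intro hv
    obtain ⟨q, m, -, hm, rfl⟩ := class_even he hv
    obtain ⟨s, t, hst⟩ := hi.norm_surj hm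
    exact absurd (by rw [hst]; ring) (h.not_norm (q * s) (q * t))
  · rintro ⟨hi, hv⟩
    rw [dv_iff]
    intro s t u v h
    have hp1 : (1 : ℝ) < p := by exact_mod_cast hp.out.one_lt
    have norm_zero_imp : ∀ x y : ℚ_[p], x ^ 2 - d * y ^ 2 = 0 → x = 0 ∧ y = 0 := by
      intro x y hxy
      by_contra hne
      obtain ⟨k, hk⟩ := hi.norm_even hne
      rw [hxy, norm_zero] at hk
      exact (zpow_pos (zero_lt_one.trans hp1) _).ne hk
    by_cases huv : u = 0 ∧ v = 0
    · obtain ⟨rfl, rfl⟩ := huv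
      obtain ⟨h1, h2⟩ := norm_zero_imp s t (by linear_combination h)
      exact ⟨h1, h2, rfl, rfl⟩
    · exfalso
      obtain ⟨k, hk⟩ := hi.norm_even huv
      have hst : ¬ (s = 0 ∧ t = 0) := by
        rintro ⟨rfl, rfl⟩
        refine huv (norm_zero_imp u v ?_)
        have : e * (u ^ 2 - d * v ^ 2) = 0 := by linear_combination -h
        exact (mul_eq_zero.1 this).resolve_left he
      obtain ⟨l, hl⟩ := hi.norm_even hst
      -- comparing the parities of the valuations of both sides of `N(s,t) = e N(u,v)`
      rw [sub_eq_zero.1 h, norm_mul, hk, Padic.norm_eq_zpow_neg_valuation he,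
        ← zpow_add₀ (zero_lt_one.trans hp1).ne'] at hl
      have := zpow_right_injective₀ (zero_lt_one.trans hp1) hp1.ne' hl
      obtain ⟨n, hn⟩ := hv
      omega

theorem kron_eq_neg_one_iff {d : ℤ} (hd : ¬ (p : ℤ) ∣ d) (h4 : d % 4 = 0 ∨ d % 4 = 1) :
    kron d p = -1 ↔ Inert p d := by
  by_cases h2 : p = 2
  · subst h2
    rw [inert_two]
    push_cast at hd
    unfold kron
    have : d % 8 = 1 ∨ d % 8 = 5 := by omega
    rcases this with h | h
    · simp [h, show d % 2 = 1 by omega]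
    · simp [h, show d % 2 = 1 by omega]
  · rw [inert_odd h2]
    unfold kron
    rw [if_neg h2, if_neg hd]
    by_cases h : ∃ y : ℤ, (p : ℤ) ∣ y ^ 2 - d
    · rw [if_pos h]
      obtain ⟨y, hy⟩ := h
      exact ⟨fun h => absurd h (by norm_num), fun h => absurd hy (h y)⟩
    · rw [if_neg h]
      exact ⟨fun _ y hy => h ⟨y, hy⟩, fun _ => rfl⟩

end Classification

/-- A pair `w₁, w₂` with `w₁² = d₁`, `w₂² = d₂`, `w₁w₂ + w₂w₁ = 2x` gives a homomorphism
from `ℍ[F, d₁, x² - d₁d₂]`, with `i ↦ w₁`, `j ↦ w₁w₂ - x`. -/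
theorem exists_hom_of_pair {F A : Type*} [Field F] [Ring A] [Algebra F A] {d₁ d₂ x : F} (w₁ w₂ : A)
    (h₁ : w₁ ^ 2 = algebraMap F A d₁) (h₂ : w₂ ^ 2 = algebraMap F A d₂)
    (h : w₁ * w₂ + w₂ * w₁ = algebraMap F A (2 * x)) :
    Nonempty (ℍ[F,d₁,x ^ 2 - d₁ * d₂] →ₐ[F] A) := by
  have hs : w₂ * w₁ = algebraMap F A (2 * x) - w₁ * w₂ := eq_sub_of_add_eq' h
  have c₁ : ∀ (r : F) (y : A), y * algebraMap F A r = algebraMap F A r * y :=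
    fun r y => (Algebra.commutes r y).symm
  have e₁ : w₁ * (w₁ * w₂) = algebraMap F A d₁ * w₂ := by rw [← mul_assoc, ← sq, h₁]
  obtain ⟨φ, -, -⟩ := exists_hom (a := d₁) (b := x ^ 2 - d₁ * d₂) w₁
    (w₁ * w₂ - algebraMap F A x)
    (by rw [← sq, h₁, Algebra.algebraMap_eq_smul_one])
    (by
      rw [← Algebra.algebraMap_eq_smul_one]
      have : w₁ * w₂ * (w₁ * w₂) =
          algebraMap F A (2 * x) * (w₁ * w₂) - algebraMap F A d₁ * algebraMap F A d₂ := by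
        calc w₁ * w₂ * (w₁ * w₂) = w₁ * (w₂ * w₁) * w₂ := by noncomm_ring
          _ = algebraMap F A (2 * x) * (w₁ * w₂) - w₁ ^ 2 * w₂ ^ 2 := by
            rw [hs, mul_sub, c₁]; noncomm_ring
          _ = _ := by rw [h₁, h₂]
      rw [sub_mul, mul_sub, mul_sub, this, c₁ x (w₁ * w₂)]
      simp only [map_sub, map_mul, map_pow, map_ofNat]
      noncomm_ring)
    (by
      have : w₁ * w₂ * w₁ = algebraMap F A (2 * x) * w₁ - algebraMap F A d₁ * w₂ := by
        rw [mul_assoc, hs, mul_sub, c₁, e₁]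
      rw [sub_mul, mul_sub, this, e₁, c₁ x w₁]
      simp only [map_mul, map_ofNat]
      noncomm_ring)
  exact ⟨φ⟩

/-! ### Pairs of elements with prescribed squares and trace -/

section Pairs

variable {p : ℕ} [hp : Fact p.Prime]

/-- Conversely to `exists_hom_of_pair`, an algebra isomorphic to `ℍ[F,d₁,x² - d₁d₂]` contains
the pair `(i, (x i + k) / d₁)`. -/
theorem exists_pair {F B : Type*} [Field F] [Ring B] [Algebra F B] {d₁ d₂ x : F}
    (h₀ : d₁ ≠ 0) (ψ : ℍ[F,d₁,x ^ 2 - d₁ * d₂] ≃ₐ[F] B) :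
    ∃ w₁ w₂ : B, w₁ ∉ Set.range (algebraMap F B) ∧ w₂ ∉ Set.range (algebraMap F B) ∧
      w₁ ^ 2 = algebraMap F B d₁ ∧ w₂ ^ 2 = algebraMap F B d₂ ∧
      w₁ * w₂ + w₂ * w₁ = algebraMap F B (2 * x) := by
  refine ⟨ψ ⟨0, 1, 0, 0⟩, ψ ⟨0, x / d₁, 0, 1 / d₁⟩, ?_, ?_, ?_, ?_, ?_⟩
  · rintro ⟨c, hc⟩
    rw [← ψ.commutes c, ψ.injective.eq_iff] at hc
    simpa using congrArg QuaternionAlgebra.imI hc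
  · rintro ⟨c, hc⟩
    rw [← ψ.commutes c, ψ.injective.eq_iff] at hc
    have := congrArg QuaternionAlgebra.imK hc
    exact one_div_ne_zero h₀ (by simpa using this.symm)
  · rw [sq, ← map_mul, ← ψ.commutes]
    congr 1
    ext <;> simp
  · rw [sq, ← map_mul, ← ψ.commutes]
    congr 1
    ext <;> simp
    all_goals field_simp
    all_goals ring
  · rw [← map_mul, ← map_mul, ← map_add, ← ψ.commutes, two_mul]
    congr 1
    ext <;> simp [h₀, mul_div_cancel₀]

/-- Over `ℚ_p` a division quaternion algebra is unique up to isomorphism, so such an algebra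
receives `ℍ[ℚ_p,d₁,x² - d₁d₂]` exactly when the latter is a division ring too. -/
theorem exists_pair_iff {B : Type*} [Ring B] [Algebra ℚ_[p] B]
    (hB : IsQuaternionAlgebra ℚ_[p] B) (hdiv : ∀ z : B, z ≠ 0 → IsUnit z)
    {d₁ d₂ x : ℚ_[p]} (h₀ : d₁ ≠ 0) (hE : x ^ 2 - d₁ * d₂ ≠ 0) :
    (∃ w₁ w₂ : B, w₁ ∉ Set.range (algebraMap ℚ_[p] B) ∧ w₂ ∉ Set.range (algebraMap ℚ_[p] B) ∧
      w₁ ^ 2 = algebraMap ℚ_[p] B d₁ ∧ w₂ ^ 2 = algebraMap ℚ_[p] B d₂ ∧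
      w₁ * w₂ + w₂ * w₁ = algebraMap ℚ_[p] B (2 * x)) ↔ Dv d₁ (x ^ 2 - d₁ * d₂) := by
  obtain ⟨a, b, ha, hb, ⟨e⟩⟩ := hB
  have hab : Dv a b := fun z hz => by
    have h := (hdiv (e.symm z) (by simpa using hz)).map e
    simpa using h
  constructor
  · rintro ⟨w₁, w₂, -, -, h₁, h₂, h⟩
    obtain ⟨φ⟩ := exists_hom_of_pair w₁ w₂ h₁ h₂ h
    have hiso : Iso d₁ (x ^ 2 - d₁ * d₂) a b := equiv_of_hom h₀ hE (e.toAlgHom.comp φ)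
    exact hiso.symm.dv hab
  · intro hd
    obtain ⟨δ, hδ⟩ := exists_inert (p := p)
    obtain ⟨ψ⟩ := (iso_standard h₀ hE hδ hd).trans (iso_standard ha hb hδ hab).symm
    exact exists_pair h₀ (ψ.trans e.symm)

/-- The integer division by `4` in the theorem is exact. -/
theorem four_dvd_of_admissible {D1 D2 x : ℤ} (h : Admissible D1 D2 x) :
    (4 : ℤ) ∣ D1 * D2 - x ^ 2 := by
  obtain ⟨-, -, h1, h2, h3, -⟩ := h
  have hx : x % 4 = 0 ∨ x % 4 = 1 ∨ x % 4 = 2 ∨ x % 4 = 3 := by omega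
  have hm : (D1 * D2) % 4 = (D1 % 4) * (D2 % 4) % 4 := Int.mul_emod _ _ _
  have hs : x ^ 2 % 4 = (x % 4) * (x % 4) % 4 := by rw [sq, Int.mul_emod]
  apply Int.dvd_of_emod_eq_zero
  rw [Int.sub_emod]
  rcases h1 with h1 | h1 <;> rcases h2 with h2 | h2 <;> rw [h1, h2] at hm <;>
    rcases hx with hx | hx | hx | hx <;> rw [hx] at hs <;> omega

/-- The factor `-4` relating `x² - D₁D₂` to `(D₁D₂ - x²)/4` has even valuation. -/
theorem odd_valuation_iff {E G : ℤ} (hG : G ≠ 0) (h : E = -1 * G * 2 ^ 2) :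
    Odd ((E : ℚ_[p]).valuation) ↔ Odd (padicValInt p G) := by
  have hG' : ((G : ℤ) : ℚ_[p]) ≠ 0 := by exact_mod_cast hG
  have h1 : ((-1 : ℤ) : ℚ_[p]).valuation = 0 := by
    rw [Padic.valuation_intCast]; simp [padicValInt]
  have hv : (E : ℚ_[p]).valuation = (padicValInt p G : ℤ) + 2 * (2 : ℚ_[p]).valuation := by
    rw [h, Int.cast_mul, Int.cast_mul, Padic.valuation_mul (by simp [hG']) (by simp),
      Padic.valuation_mul (by simp) hG', h1, Padic.valuation_intCast]
    rw [Int.cast_pow, Padic.valuation_pow]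
    push_cast
    ring
  rw [hv, Int.odd_add]
  simp

end Pairs

end QuatLocal

/-- Let `(D1, D2, x)` be an admissible triple, `p` a prime, and `B` a quaternion algebra over
`ℚ_p` that is a division ring. Then there exist elements `w1, w2 ∈ B` with `wᵢ ∉ ℚ_p·1`,
`w1² = D1·1`, `w2² = D2·1` and `trd(w1·w2) = 2x` (i.e. `w1·w2 + w2·w1 = 2x·1`) if and only if
the quaternion algebra `ℍ[ℚ_p, D1, x² − D1·D2]` is a division ring. If moreover `p ∤ D1`,
this holds if and only if `(D1/p) = −1` and `v_p((D1·D2 − x²)/4)` is odd. -/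
theorem stmt8 (p : ℕ) [Fact p.Prime] {B : Type*} [Ring B] [Algebra ℚ_[p] B]
    (hB : IsQuaternionAlgebra ℚ_[p] B)
    (hdiv : ∀ z : B, z ≠ 0 → IsUnit z)
    (D1 D2 x : ℤ) (hadm : Admissible D1 D2 x) :
    ((∃ w1 w2 : B,
        w1 ∉ Set.range (algebraMap ℚ_[p] B) ∧ w2 ∉ Set.range (algebraMap ℚ_[p] B) ∧
        w1 ^ 2 = algebraMap ℚ_[p] B ((D1 : ℤ) : ℚ_[p]) ∧
        w2 ^ 2 = algebraMap ℚ_[p] B ((D2 : ℤ) : ℚ_[p]) ∧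
        w1 * w2 + w2 * w1 = algebraMap ℚ_[p] B ((2 * x : ℤ) : ℚ_[p])) ↔
      (∀ z : ℍ[ℚ_[p], ((D1 : ℤ) : ℚ_[p]), ((x ^ 2 - D1 * D2 : ℤ) : ℚ_[p])],
        z ≠ 0 → IsUnit z)) ∧
    (¬ ((p : ℤ) ∣ D1) →
      ((∃ w1 w2 : B,
          w1 ∉ Set.range (algebraMap ℚ_[p] B) ∧ w2 ∉ Set.range (algebraMap ℚ_[p] B) ∧
          w1 ^ 2 = algebraMap ℚ_[p] B ((D1 : ℤ) : ℚ_[p]) ∧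
          w2 ^ 2 = algebraMap ℚ_[p] B ((D2 : ℤ) : ℚ_[p]) ∧
          w1 * w2 + w2 * w1 = algebraMap ℚ_[p] B ((2 * x : ℤ) : ℚ_[p])) ↔
        (kron D1 p = -1 ∧ Odd (padicValInt p ((D1 * D2 - x ^ 2) / 4))))) := by
  obtain ⟨hD1, -, hm1, -, -, hne⟩ := id hadm
  have h₀ : (D1 : ℚ_[p]) ≠ 0 := by exact_mod_cast hD1.ne'
  have hE : ((x ^ 2 - D1 * D2 : ℤ) : ℚ_[p]) ≠ 0 := by exact_mod_cast sub_ne_zero.2 hne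
  have key := QuatLocal.exists_pair_iff hB hdiv (d₁ := (D1 : ℚ_[p])) (d₂ := (D2 : ℚ_[p]))
    (x := (x : ℚ_[p])) h₀ (by simpa using hE)
  rw [show ((2 * x : ℤ) : ℚ_[p]) = 2 * (x : ℚ_[p]) by push_cast; rfl, key,
    show (x : ℚ_[p]) ^ 2 - (D1 : ℚ_[p]) * D2 = ((x ^ 2 - D1 * D2 : ℤ) : ℚ_[p]) by push_cast; rfl]
  refine ⟨Iff.rfl, fun hp1 => ?_⟩
  have h4 : p = 2 → D1 % 4 = 1 := by
    rintro rfl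
    have : ¬ (2 : ℤ) ∣ D1 := by exact_mod_cast hp1
    omega
  obtain ⟨G, hG⟩ := QuatLocal.four_dvd_of_admissible hadm
  have hG0 : G ≠ 0 := by
    rintro rfl
    exact hne (by linarith)
  rw [QuatLocal.dv_iff_inert hp1 h4 hE, QuatLocal.kron_eq_neg_one_iff hp1 hm1, hG,
    Int.mul_ediv_cancel_left G (by norm_num),
    QuatLocal.odd_valuation_iff hG0 (by linarith)]
end

section
/- Let (D1, D2, x) be an admissible triple and p a prime. Then there exist elements w1, w2 ∈ M₂(ℚ_p) with w_i ∉ ℚ_p·1, w1² = D1·1, w2² = D2·1 and trd(w1·w2) = 2x if and only if the quaternion algebra ℍ[ℚ_p, D1, x² − D1·D2] is not a division ring. If moreover p ∤ D1, this holds if and only if either (D1/p) = 1, or (D1/p) = −1 and v_p((D1·D2 − x²)/4) is even. -/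
/-! The matrices exist, and the quaternion algebra is not a division ring, exactly when
`b = x² - D1 * D2` is a norm `e² - D1 * f²` from `ℚ_p(√D1)`.

* For the matrices (`exists_matrices_iff`): by Cayley–Hamilton `w1` and `w2` are traceless, so
  `w1 * w2 + w2 * w1 = 2x`, and `w1 * w2 - x` anticommutes with `w1` and has square `b`. In coordinates
  adapted to `w1` this square is `e² - D1 * f²`; conversely `w1` can be taken to be a companion matrix.
* For the algebra (`quaternion_not_division_iff`): its reduced norm is
  `(e² - D1 f²) - b (g² - D1 h²)`, and the algebra is division iff this form is anisotropic.

When `p ∤ D1`, a Kronecker symbol `1` makes `D1` a square in `ℚ_p` by Hensel's lemma, and then every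
number is a norm (`isNormFrom_of_isSquare`). A Kronecker symbol `-1` makes `ℚ_p(√D1)` the unramified
quadratic extension, whose norms are the numbers of even valuation
(`isNormFrom_iff_of_kron_ne_one`): the norm form of its integers is anisotropic modulo `p`, and it
represents all units by solving modulo `p` and lifting with Hensel's lemma. -/

open Quaternion
open scoped Classical

/-! ### Norms, quaternions and matrices over a field -/

theorem isNormFrom_of_isSquare {K : Type*} [Field K] (h2 : (2 : K) ≠ 0) {a : K} (ha : a ≠ 0)
    (hsq : ∃ s, s ^ 2 = a) (b : K) : ∃ e f : K, b = e ^ 2 - a * f ^ 2 := by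
  obtain ⟨s, rfl⟩ := hsq
  have hs : s ≠ 0 := by rintro rfl; simp at ha
  -- `b = ((b + 1) / 2)² - ((b - 1) / 2)²`
  exact ⟨(b + 1) / 2, (b - 1) / (2 * s), by field_simp; ring⟩

theorem quaternion_not_division_iff {K : Type*} [Field K] (h2 : (2 : K) ≠ 0) {a b : K}
    (ha : a ≠ 0) :
    ¬ (∀ z : ℍ[K,a,b], z ≠ 0 → IsUnit z) ↔ ∃ e f : K, b = e ^ 2 - a * f ^ 2 := by
  constructor
  · intro h
    push Not at h
    obtain ⟨z, hz, hu⟩ := h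
    obtain ⟨e, f, g, h⟩ := z
    -- a nonzero reduced norm would make `star z` an inverse up to a scalar
    have hn : e ^ 2 - a * f ^ 2 - b * (g ^ 2 - a * h ^ 2) = 0 := by
      by_contra hn
      apply hu
      set n := e ^ 2 - a * f ^ 2 - b * (g ^ 2 - a * h ^ 2) with hndef
      refine ⟨⟨⟨e, f, g, h⟩, ⟨e / n, -f / n, -g / n, -h / n⟩, ?_, ?_⟩, rfl⟩ <;>
      · ext <;> simp <;> field_simp <;> ring1
    by_cases hgh : g ^ 2 - a * h ^ 2 = 0
    · apply isNormFrom_of_isSquare h2 ha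
      by_cases hh : h = 0
      · have hg : g = 0 := by simpa [hh] using hgh
        subst hh hg
        have hf : f ≠ 0 := by
          rintro rfl
          have he : e = 0 := by simpa using hn
          exact hz (by subst he; rfl)
        exact ⟨e / f, by field_simp; linear_combination hn⟩
      · exact ⟨g / h, by field_simp; linear_combination hgh⟩
    · -- the quotient of the two norms `e² - a f²` and `g² - a h²` is a norm
      refine ⟨(e * g - a * f * h) / (g ^ 2 - a * h ^ 2), (f * g - e * h) / (g ^ 2 - a * h ^ 2), ?_⟩
      field_simp
      linear_combination -(g ^ 2 - a * h ^ 2) * hn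
  · rintro ⟨e, f, hb⟩ h
    have h1 := h ⟨e, f, 1, 0⟩ (by intro h0; simpa using congrArg QuaternionAlgebra.imJ h0)
    have h3 : (⟨e, f, 1, 0⟩ : ℍ[K,a,b]) * ⟨e, -f, -1, 0⟩ = 0 := by
      ext <;> simp <;> first | linear_combination -hb | ring1
    have h4 := h1.mul_right_eq_zero.mp h3
    simpa using congrArg QuaternionAlgebra.imJ h4

/-- A non-scalar `2 × 2` matrix whose square is the scalar `a` is traceless with determinant `-a`,
by Cayley–Hamilton. -/
theorem matrix_entries {K : Type*} [Field K] {a : K} {w : Matrix (Fin 2) (Fin 2) K}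
    (hw : w ∉ Set.range (algebraMap K (Matrix (Fin 2) (Fin 2) K)))
    (h : w ^ 2 = algebraMap K (Matrix (Fin 2) (Fin 2) K) a) :
    w 1 1 = - w 0 0 ∧ w 0 0 ^ 2 + w 0 1 * w 1 0 = a := by
  have h00 := congrFun (congrFun h 0) 0
  have h01 := congrFun (congrFun h 0) 1
  have h10 := congrFun (congrFun h 1) 0
  have h11 := congrFun (congrFun h 1) 1
  simp [pow_two, Matrix.mul_apply, Fin.sum_univ_two, Matrix.algebraMap_matrix_apply] at h00 h01 h10 h11
  have ht : w 0 0 + w 1 1 = 0 := by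
    by_contra ht
    have hb : w 0 1 = 0 := by
      apply (mul_eq_zero.mp (?_ : (w 0 0 + w 1 1) * w 0 1 = 0)).resolve_left ht
      linear_combination h01
    have hc : w 1 0 = 0 := by
      apply (mul_eq_zero.mp (?_ : (w 0 0 + w 1 1) * w 1 0 = 0)).resolve_left ht
      linear_combination h10
    have hd : w 0 0 - w 1 1 = 0 := by
      apply (mul_eq_zero.mp (?_ : (w 0 0 + w 1 1) * (w 0 0 - w 1 1) = 0)).resolve_left ht
      linear_combination h00 - h11
    apply hw
    refine ⟨w 0 0, ?_⟩
    ext i j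
    fin_cases i <;> fin_cases j <;> simp [Matrix.algebraMap_matrix_apply, hb, hc]
    linear_combination hd
  exact ⟨by linear_combination ht, by linear_combination h00⟩

theorem exists_matrices_iff {K : Type*} [Field K] (h2 : (2 : K) ≠ 0) {a d : K} (ha : a ≠ 0)
    (hd : d ≠ 0) (x : K) :
    (∃ w1 w2 : Matrix (Fin 2) (Fin 2) K,
        w1 ∉ Set.range (algebraMap K (Matrix (Fin 2) (Fin 2) K)) ∧
        w2 ∉ Set.range (algebraMap K (Matrix (Fin 2) (Fin 2) K)) ∧
        w1 ^ 2 = algebraMap K (Matrix (Fin 2) (Fin 2) K) a ∧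
        w2 ^ 2 = algebraMap K (Matrix (Fin 2) (Fin 2) K) d ∧
        Matrix.trace (w1 * w2) = 2 * x) ↔
      ∃ e f : K, x ^ 2 - a * d = e ^ 2 - a * f ^ 2 := by
  constructor
  · rintro ⟨w1, w2, hw1, hw2, h1, h2', ht⟩
    obtain ⟨hA, hB⟩ := matrix_entries hw1 h1
    obtain ⟨hC, hD⟩ := matrix_entries hw2 h2'
    simp [Matrix.trace, Matrix.mul_apply, Fin.sum_univ_two, hA, hC] at ht
    by_cases hc : w1 1 0 = 0
    · exact isNormFrom_of_isSquare h2 ha ⟨w1 0 0, by simpa [hc] using hB⟩ _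
    · generalize w1 0 0 = α at *
      generalize w1 0 1 = β at *
      generalize w1 1 0 = γ at *
      generalize w2 0 0 = u at *
      generalize w2 0 1 = v at *
      generalize w2 1 0 = w at *
      -- `w1 * w2 - x` is traceless and anticommutes with `w1`, so its entries satisfy a linear
      -- relation; eliminating its upper right entry writes its square as this norm
      refine ⟨(β * w - γ * v) / 2 - α * (γ * u - α * w) / γ, (γ * u - α * w) / γ, ?_⟩
      have hx : x = α * u + (β * w + γ * v) / 2 := by field_simp; linear_combination -ht
      rw [hx, ← hB, ← hD]
      field_simp
      ring
  · rintro ⟨e, f, h⟩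
    refine ⟨!![0, a; 1, 0], !![f, x - e; (x + e) / a, -f], ?_, ?_, ?_, ?_, ?_⟩
    · rintro ⟨r, hr⟩
      have := congrFun (congrFun hr 1) 0
      simp [Matrix.algebraMap_matrix_apply] at this
    · rintro ⟨r, hr⟩
      have h00 := congrFun (congrFun hr 0) 0
      have h01 := congrFun (congrFun hr 0) 1
      have h11 := congrFun (congrFun hr 1) 1
      simp [Matrix.algebraMap_matrix_apply] at h00 h01 h11
      have hf : f = 0 := by
        have : 2 * f = 0 := by linear_combination h11 - h00
        simpa [h2] using this
      apply mul_ne_zero ha hd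
      subst hf
      linear_combination -h - (x + e) * h01
    · ext i j
      fin_cases i <;> fin_cases j <;>
        simp [pow_two, Matrix.mul_apply, Fin.sum_univ_two, Matrix.algebraMap_matrix_apply]
    · ext i j
      fin_cases i <;> fin_cases j <;>
        simp [pow_two, Matrix.mul_apply, Fin.sum_univ_two, Matrix.algebraMap_matrix_apply] <;>
        field_simp <;> first | ring1 | linear_combination h
    · simp [Matrix.trace, Fin.sum_univ_two]
      field_simp
      ring

/-! ### Binary quadratic forms over the p-adic integers -/

theorem isUnit_iff_toZMod {p : ℕ} [Fact p.Prime] (z : ℤ_[p]) :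
    IsUnit z ↔ PadicInt.toZMod z ≠ 0 := by
  rw [Ne, ← RingHom.mem_ker, PadicInt.ker_toZMod, IsLocalRing.mem_maximalIdeal, mem_nonunits_iff,
    not_not]

/-- Hensel's lemma for a monic quadratic polynomial with a simple root modulo `p`. -/
theorem exists_root_quadratic {p : ℕ} [Fact p.Prime] (β γ r : ℤ_[p])
    (h0 : ¬ IsUnit (r ^ 2 + β * r + γ)) (h1 : IsUnit (2 * r + β)) :
    ∃ z : ℤ_[p], z ^ 2 + β * z + γ = 0 := by
  let F : Polynomial ℤ_[p] := .X ^ 2 + .C β * .X + .C γ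
  have hF : ∀ z, F.aeval z = z ^ 2 + β * z + γ := fun z => by simp [F]
  have hF' : F.derivative.aeval r = 2 * r + β := by
    simp [F]; norm_num
  obtain ⟨z, hz, -⟩ := hensels_lemma (F := F) (a := r) (by
    rw [hF, hF', PadicInt.isUnit_iff.mp h1]
    simpa using PadicInt.not_isUnit_iff.mp h0)
  exact ⟨z, by rw [← hF, hz]⟩

/-- If the binary form `s² + ε s t + c t²` is anisotropic modulo `p` and represents every `p`-adic
unit, then it represents exactly the `p`-adic numbers of even valuation. -/
theorem represented_iff_even_valuation {p : ℕ} [Fact p.Prime] (ε c : ℤ_[p])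
    (haniso : ∀ r : ℤ_[p], IsUnit (r ^ 2 + ε * r + c))
    (hunit : ∀ u : ℤ_[p], IsUnit u → ∃ s t : ℤ_[p], s ^ 2 + ε * s * t + c * t ^ 2 = u)
    (y : ℚ_[p]) (hy : y ≠ 0) :
    (∃ s t : ℚ_[p], y = s ^ 2 + ε * s * t + c * t ^ 2) ↔ Even y.valuation := by
  have haniso' : ∀ r : ℤ_[p], IsUnit (1 + ε * r + c * r ^ 2) := by
    intro r
    by_cases hr : IsUnit r
    · obtain ⟨v, rfl⟩ := hr
      have h := (haniso (↑v⁻¹ : ℤ_[p])).mul (v.isUnit.pow 2)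
      have e : ((↑v⁻¹ : ℤ_[p]) ^ 2 + ε * ↑v⁻¹ + c) * (v : ℤ_[p]) ^ 2
          = 1 + ε * v + c * (v : ℤ_[p]) ^ 2 := by
        have := v.inv_mul
        linear_combination ((↑v⁻¹ : ℤ_[p]) * v + 1 + ε * v) * this
      rwa [e] at h
    · rw [isUnit_iff_toZMod, not_not] at hr
      rw [isUnit_iff_toZMod]
      simp [hr]
  -- a number `s² * unit` has even valuation
  have key : ∀ (s : ℚ_[p]) (u : ℤ_[p]), IsUnit u → s ^ 2 * u ≠ 0 →
      Even (s ^ 2 * (u : ℚ_[p])).valuation := by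
    intro s u hu hs
    have hu0 : (u : ℚ_[p]) ≠ 0 := right_ne_zero_of_mul hs
    have hv : (u : ℚ_[p]).valuation = 0 := by
      have h1 : ‖(u : ℚ_[p])‖ = 1 := PadicInt.isUnit_iff.mp hu
      rw [Padic.norm_eq_zpow_neg_valuation hu0] at h1
      have hp : 1 < (p : ℝ) := by exact_mod_cast (Fact.out : p.Prime).one_lt
      have := (zpow_eq_one_iff_right₀ (by linarith) hp.ne').mp h1
      lia
    rw [Padic.valuation_mul (left_ne_zero_of_mul hs) hu0, hv, Padic.valuation_pow]
    simp
  constructor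
  · rintro ⟨s, t, rfl⟩
    rcases le_total ‖t‖ ‖s‖ with h | h
    · have hs : s ≠ 0 := by
        rintro rfl
        have : t = 0 := by simpa using h
        simp [this] at hy
      let r : ℤ_[p] := ⟨t / s, by
        rw [norm_div]; exact div_le_one_of_le₀ h (norm_nonneg _)⟩
      have e : s ^ 2 + ε * s * t + c * t ^ 2
          = s ^ 2 * ((1 + ε * r + c * r ^ 2 : ℤ_[p]) : ℚ_[p]) := by
        have hr : (r : ℚ_[p]) = t / s := rfl
        push_cast; rw [hr]; field_simp
      rw [e] at hy ⊢
      exact key _ _ (haniso' r) hy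
    · have ht : t ≠ 0 := by
        rintro rfl
        have : s = 0 := by simpa using h
        simp [this] at hy
      let r : ℤ_[p] := ⟨s / t, by
        rw [norm_div]; exact div_le_one_of_le₀ h (norm_nonneg _)⟩
      have e : s ^ 2 + ε * s * t + c * t ^ 2
          = t ^ 2 * ((r ^ 2 + ε * r + c : ℤ_[p]) : ℚ_[p]) := by
        have hr : (r : ℚ_[p]) = s / t := rfl
        push_cast; rw [hr]; field_simp
      rw [e] at hy ⊢
      exact key _ _ (haniso r) hy
  · rintro ⟨k, hk⟩
    have hp0 : (p : ℚ_[p]) ≠ 0 := by exact_mod_cast (Fact.out : p.Prime).ne_zero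
    have hpR : (p : ℝ) ≠ 0 := by exact_mod_cast (Fact.out : p.Prime).ne_zero
    have hn : ‖y / (p : ℚ_[p]) ^ (2 * k)‖ = 1 := by
      rw [norm_div, Padic.norm_p_zpow, Padic.norm_eq_zpow_neg_valuation hy, hk, two_mul]
      exact div_self (zpow_ne_zero _ hpR)
    obtain ⟨s, t, h⟩ := hunit ⟨y / (p : ℚ_[p]) ^ (2 * k), hn.le⟩ (PadicInt.isUnit_iff.mpr hn)
    have h' := congrArg (fun z : ℤ_[p] => (z : ℚ_[p])) h
    push_cast at h'
    refine ⟨s * (p : ℚ_[p]) ^ k, t * (p : ℚ_[p]) ^ k, ?_⟩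
    have e : y = (y / (p : ℚ_[p]) ^ (2 * k)) * ((p : ℚ_[p]) ^ k) ^ 2 := by
      rw [two_mul, zpow_add₀ hp0]; field_simp
    rw [e, ← h']
    ring

/-- For odd `p` and a unit `D`, the form `s² - D t²` represents every unit: it does so modulo `p` by
counting squares, and the solution lifts in a coordinate that is nonzero modulo `p`. -/
theorem odd_represents {p : ℕ} [Fact p.Prime] (hp2 : p ≠ 2) (D : ℤ_[p]) (hD : IsUnit D)
    (u : ℤ_[p]) (hu : IsUnit u) : ∃ s t : ℤ_[p], s ^ 2 - D * t ^ 2 = u := by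
  have hp : p.Prime := Fact.out
  have hodd : p % 2 = 1 := hp.eq_two_or_odd.resolve_left hp2
  have hlift : ∀ a : ZMod p, ∃ z : ℤ_[p], PadicInt.toZMod z = a :=
    fun a => ⟨(a.val : ℤ_[p]), by simp⟩
  have h2 : (2 : ZMod p) ≠ 0 := by
    intro h
    have : ((2 : ℕ) : ZMod p) = 0 := by exact_mod_cast h
    rw [ZMod.natCast_eq_zero_iff] at this
    exact hp2 ((Nat.prime_dvd_prime_iff_eq hp Nat.prime_two).mp this)
  have hDm := (isUnit_iff_toZMod D).mp hD
  have hum := (isUnit_iff_toZMod u).mp hu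
  obtain ⟨a, b, hab⟩ : ∃ a b : ZMod p, a ^ 2 - PadicInt.toZMod D * b ^ 2 = PadicInt.toZMod u := by
    obtain ⟨a, b, hab⟩ := FiniteField.exists_root_sum_quadratic (R := ZMod p)
      (f := .X ^ 2 - .C (PadicInt.toZMod u)) (g := .C (-PadicInt.toZMod D) * .X ^ 2)
      (Polynomial.degree_X_pow_sub_C (by decide) _)
      (Polynomial.degree_C_mul_X_pow 2 (neg_ne_zero.mpr hDm)) (by rw [ZMod.card, hodd])
    refine ⟨a, b, ?_⟩
    simp at hab
    linear_combination hab
  obtain ⟨s, rfl⟩ := hlift a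
  obtain ⟨t, rfl⟩ := hlift b
  by_cases hs : PadicInt.toZMod s = 0
  · -- then `t` is a unit, and `t² = (s² - u) / D` is solved with `s` fixed
    obtain ⟨v, rfl⟩ := hD
    have hinv : PadicInt.toZMod (v : ℤ_[p]) * PadicInt.toZMod (↑v⁻¹ : ℤ_[p]) = 1 := by
      rw [← map_mul, v.mul_inv, map_one]
    have ht : PadicInt.toZMod t ≠ 0 := by
      intro ht; apply hum; rw [← hab, hs, ht]; simp
    obtain ⟨z, hz⟩ := exists_root_quadratic (0 : ℤ_[p]) (-(s ^ 2 - u) * ↑v⁻¹) t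
      (by
        rw [isUnit_iff_toZMod, not_not]
        simp only [map_add, map_mul, map_neg, map_sub, map_pow, map_zero]
        linear_combination -PadicInt.toZMod (↑v⁻¹ : ℤ_[p]) * hab
          - PadicInt.toZMod t ^ 2 * hinv)
      (by rw [isUnit_iff_toZMod]; simpa [map_ofNat] using ⟨h2, ht⟩)
    exact ⟨s, z, by linear_combination -(v : ℤ_[p]) * hz - (s ^ 2 - u) * v.mul_inv⟩
  · obtain ⟨z, hz⟩ := exists_root_quadratic (0 : ℤ_[p]) (-(u + D * t ^ 2)) s
      (by
        rw [isUnit_iff_toZMod, not_not]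
        simp only [map_add, map_mul, map_neg, map_pow, map_zero]
        linear_combination hab)
      (by rw [isUnit_iff_toZMod]; simpa [map_ofNat] using ⟨h2, hs⟩)
    exact ⟨z, t, by linear_combination hz⟩

theorem zmod_two_eq_one : ∀ a : ZMod 2, a ≠ 0 → a = 1 := by decide

theorem zmod_two_anisotropic : ∀ a : ZMod 2, a ^ 2 + 1 * a + 1 ≠ 0 := by decide

/-- The equation is solved with `t = 1`: `s² + s + (c - u)` has the simple root `0` modulo `2`. -/
theorem two_represents (c : ℤ_[2]) (hc : IsUnit c) (u : ℤ_[2]) (hu : IsUnit u) :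
    ∃ s t : ℤ_[2], s ^ 2 + 1 * s * t + c * t ^ 2 = u := by
  have hcm := zmod_two_eq_one _ ((isUnit_iff_toZMod c).mp hc)
  have hum := zmod_two_eq_one _ ((isUnit_iff_toZMod u).mp hu)
  obtain ⟨z, hz⟩ := exists_root_quadratic (1 : ℤ_[2]) (c - u) 0
    (by rw [isUnit_iff_toZMod, not_not]; simp [hcm, hum]) (by simp)
  exact ⟨z, 1, by linear_combination hz⟩

/-! ### The Kronecker symbol -/

theorem toZMod_intCast_eq_zero_iff {p : ℕ} [Fact p.Prime] (n : ℤ) :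
    PadicInt.toZMod (n : ℤ_[p]) = 0 ↔ (p : ℤ) ∣ n := by
  rw [map_intCast, ZMod.intCast_zmod_eq_zero_iff_dvd]

theorem isSquare_of_kron_eq_one {p : ℕ} [Fact p.Prime] {D : ℤ} (hD4 : D % 4 = 0 ∨ D % 4 = 1)
    (h : kron D p = 1) : ∃ s : ℚ_[p], s ^ 2 = (D : ℚ_[p]) := by
  have hp : p.Prime := Fact.out
  unfold kron at h
  by_cases hp2 : p = 2
  · subst hp2
    -- `D = 1 + 8 k`, and `D = (2 z - 1)²` for a root `z` of `X² - X - 2 k`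
    obtain ⟨k, hk⟩ : ∃ k, D = 1 + 8 * k := by
      refine ⟨D / 8, ?_⟩
      grind
    obtain ⟨z, hz⟩ := exists_root_quadratic (-1 : ℤ_[2]) (((-(2 * k) : ℤ)) : ℤ_[2]) 0
      (by
        rw [isUnit_iff_toZMod, not_not]
        simp only [ne_eq, OfNat.ofNat_ne_zero, not_false_eq_true, zero_pow, mul_zero, zero_add]
        rw [toZMod_intCast_eq_zero_iff]
        exact ⟨-k, by push_cast; ring⟩)
      (by simp)
    refine ⟨((2 * z - 1 : ℤ_[2]) : ℚ_[2]), ?_⟩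
    have e : (2 * z - 1) ^ 2 = (D : ℤ_[2]) := by
      rw [hk]; push_cast at hz ⊢; linear_combination 4 * hz
    exact_mod_cast congrArg (fun z : ℤ_[2] => (z : ℚ_[2])) e
  · rw [if_neg hp2] at h
    obtain ⟨hpD, y, hy⟩ : ¬ (p : ℤ) ∣ D ∧ ∃ y : ℤ, (p : ℤ) ∣ (y ^ 2 - D) := by
      split_ifs at h with h1 h2
      · lia
      · exact ⟨h1, h2⟩
    obtain ⟨z, hz⟩ := exists_root_quadratic (0 : ℤ_[p]) (((-D : ℤ)) : ℤ_[p]) (y : ℤ_[p])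
      (by
        rw [isUnit_iff_toZMod, not_not]
        have := (toZMod_intCast_eq_zero_iff (p := p) _).mpr hy
        push_cast at this ⊢
        rw [← this]; congr 1; ring)
      (by
        have e : (2 * (y : ℤ_[p]) + 0) = ((2 * y : ℤ) : ℤ_[p]) := by push_cast; ring
        rw [e, isUnit_iff_toZMod, Ne, toZMod_intCast_eq_zero_iff]
        intro hd
        have hpp : Prime (p : ℤ) := Nat.prime_iff_prime_int.mp hp
        rcases hpp.dvd_or_dvd hd with h' | h'
        · exact hp2 ((Nat.prime_dvd_prime_iff_eq hp Nat.prime_two).mp (by exact_mod_cast h'))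
        · exact hpD (by simpa using dvd_sub (dvd_pow h' two_ne_zero) hy))
    refine ⟨(z : ℚ_[p]), ?_⟩
    have e : z ^ 2 = (D : ℤ_[p]) := by
      push_cast at hz; linear_combination hz
    exact_mod_cast congrArg (fun z : ℤ_[p] => (z : ℚ_[p])) e

/-- If the discriminant `D` is prime to `p` and has Kronecker symbol `-1`, then `ℚ_p(√D)` is the
unramified quadratic extension, and its norms are the numbers of even valuation. For `p = 2` the norm
form of its ring of integers is `s² + s t + c t²` with `c = (1 - D) / 4`; the factor `4` relates it to
`e² - D f²`. -/
theorem isNormFrom_iff_of_kron_ne_one {p : ℕ} [Fact p.Prime] {D : ℤ} (hpD : ¬ (p : ℤ) ∣ D)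
    (hD4 : D % 4 = 0 ∨ D % 4 = 1) (h : kron D p ≠ 1) (y : ℚ_[p]) (hy : y ≠ 0) :
    (∃ e f : ℚ_[p], 4 * y = e ^ 2 - D * f ^ 2) ↔ Even y.valuation := by
  have hp : p.Prime := Fact.out
  unfold kron at h
  by_cases hp2 : p = 2
  · subst hp2
    obtain ⟨c, hc, hDc⟩ : ∃ c : ℤ, ¬ (2 : ℤ) ∣ c ∧ D = 1 - 4 * c := by
      push_cast at hpD
      refine ⟨(1 - D) / 4, ?_⟩
      grind
    have hcm : PadicInt.toZMod (c : ℤ_[2]) = 1 := by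
      apply zmod_two_eq_one
      rwa [Ne, toZMod_intCast_eq_zero_iff]
    have hcu : IsUnit (c : ℤ_[2]) := by rw [isUnit_iff_toZMod, hcm]; exact one_ne_zero
    rw [← represented_iff_even_valuation (1 : ℤ_[2]) (c : ℤ_[2]) ?_ (two_represents _ hcu) y hy]
    · push_cast
      constructor
      · rintro ⟨e, f, hef⟩
        refine ⟨(e - f) / 2, f, ?_⟩
        rw [hDc] at hef
        push_cast at hef
        linear_combination hef / 4
      · rintro ⟨s, t, hst⟩
        refine ⟨2 * s + t, t, ?_⟩
        rw [hDc, hst]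
        push_cast
        ring
    · intro r
      rw [isUnit_iff_toZMod]
      simp only [map_add, map_mul, map_pow, map_one, hcm]
      exact zmod_two_anisotropic _
  · rw [if_neg hp2, if_neg hpD] at h
    have hDu : IsUnit (D : ℤ_[p]) := by
      rwa [isUnit_iff_toZMod, Ne, toZMod_intCast_eq_zero_iff]
    rw [← represented_iff_even_valuation (0 : ℤ_[p]) (-D : ℤ_[p]) ?_ ?_ y hy]
    · push_cast
      constructor
      · rintro ⟨e, f, hef⟩
        exact ⟨e / 2, f / 2, by linear_combination hef / 4⟩
      · rintro ⟨s, t, hst⟩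
        exact ⟨2 * s, 2 * t, by linear_combination 4 * hst⟩
    · intro r
      rw [isUnit_iff_toZMod]
      intro hr
      have hno : ¬ ∃ y : ℤ, (p : ℤ) ∣ (y ^ 2 - D) := by
        intro hex
        rw [if_pos hex] at h
        exact h rfl
      apply hno
      obtain ⟨n, hn⟩ := ZMod.intCast_surjective (PadicInt.toZMod r)
      refine ⟨n, ?_⟩
      rw [← ZMod.intCast_zmod_eq_zero_iff_dvd]
      push_cast
      rw [hn, ← hr]
      simp [sub_eq_add_neg]
    · intro u hu
      obtain ⟨s, t, hst⟩ := odd_represents hp2 _ hDu u hu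
      exact ⟨s, t, by linear_combination hst⟩

theorem kron_eq_one_or {p : ℕ} {D : ℤ} (hpD : ¬ (p : ℤ) ∣ D) : kron D p = 1 ∨ kron D p = -1 := by
  unfold kron
  by_cases hp2 : p = 2
  · subst hp2
    have : D % 2 ≠ 0 := fun h => hpD (by push_cast; lia)
    rw [if_pos rfl, if_neg this]
    split_ifs <;> simp
  · rw [if_neg hp2, if_neg hpD]
    split_ifs <;> simp

/-- Let `(D1, D2, x)` be an admissible triple and `p` a prime. Then there exist elements
`w1, w2 ∈ M₂(ℚ_p)` with `wᵢ ∉ ℚ_p·1`, `w1² = D1·1`, `w2² = D2·1` and `trd(w1·w2) = 2x`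
(the reduced trace on `M₂(ℚ_p)` being the matrix trace) if and only if the quaternion algebra
`ℍ[ℚ_p, D1, x² − D1·D2]` is not a division ring. If moreover `p ∤ D1`, this holds if and only
if either `(D1/p) = 1`, or `(D1/p) = −1` and `v_p((D1·D2 − x²)/4)` is even. -/
theorem stmt9 (p : ℕ) [Fact p.Prime] (D1 D2 x : ℤ) (hadm : Admissible D1 D2 x) :
    ((∃ w1 w2 : Matrix (Fin 2) (Fin 2) ℚ_[p],
        w1 ∉ Set.range (algebraMap ℚ_[p] (Matrix (Fin 2) (Fin 2) ℚ_[p])) ∧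
        w2 ∉ Set.range (algebraMap ℚ_[p] (Matrix (Fin 2) (Fin 2) ℚ_[p])) ∧
        w1 ^ 2 = algebraMap ℚ_[p] (Matrix (Fin 2) (Fin 2) ℚ_[p]) ((D1 : ℤ) : ℚ_[p]) ∧
        w2 ^ 2 = algebraMap ℚ_[p] (Matrix (Fin 2) (Fin 2) ℚ_[p]) ((D2 : ℤ) : ℚ_[p]) ∧
        Matrix.trace (w1 * w2) = ((2 * x : ℤ) : ℚ_[p])) ↔
      ¬ (∀ z : ℍ[ℚ_[p], ((D1 : ℤ) : ℚ_[p]), ((x ^ 2 - D1 * D2 : ℤ) : ℚ_[p])],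
          z ≠ 0 → IsUnit z)) ∧
    (¬ ((p : ℤ) ∣ D1) →
      ((∃ w1 w2 : Matrix (Fin 2) (Fin 2) ℚ_[p],
          w1 ∉ Set.range (algebraMap ℚ_[p] (Matrix (Fin 2) (Fin 2) ℚ_[p])) ∧
          w2 ∉ Set.range (algebraMap ℚ_[p] (Matrix (Fin 2) (Fin 2) ℚ_[p])) ∧
          w1 ^ 2 = algebraMap ℚ_[p] (Matrix (Fin 2) (Fin 2) ℚ_[p]) ((D1 : ℤ) : ℚ_[p]) ∧
          w2 ^ 2 = algebraMap ℚ_[p] (Matrix (Fin 2) (Fin 2) ℚ_[p]) ((D2 : ℤ) : ℚ_[p]) ∧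
          Matrix.trace (w1 * w2) = ((2 * x : ℤ) : ℚ_[p])) ↔
        (kron D1 p = 1 ∨
          (kron D1 p = -1 ∧ Even (padicValInt p ((D1 * D2 - x ^ 2) / 4)))))) := by
  obtain ⟨hD1, hD2, hD14, hD24, hx, hne⟩ := hadm
  have h2 : (2 : ℚ_[p]) ≠ 0 := two_ne_zero
  have ha : (D1 : ℚ_[p]) ≠ 0 := by exact_mod_cast hD1.ne'
  have hd : (D2 : ℚ_[p]) ≠ 0 := by exact_mod_cast hD2.ne'
  have hmat := exists_matrices_iff h2 ha hd (x : ℚ_[p])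
  have ex : ((2 * x : ℤ) : ℚ_[p]) = 2 * (x : ℚ_[p]) := by push_cast; rfl
  have eb : ((x ^ 2 - D1 * D2 : ℤ) : ℚ_[p]) = (x : ℚ_[p]) ^ 2 - D1 * D2 := by push_cast; rfl
  rw [ex, hmat]
  refine ⟨?_, fun hpD => ?_⟩
  · rw [quaternion_not_division_iff h2 ha, eb]
  · by_cases hk : kron D1 p = 1
    · simp only [hk, true_or, iff_true]
      exact isNormFrom_of_isSquare h2 ha (isSquare_of_kron_eq_one hD14 hk) _
    · have hk' := (kron_eq_one_or hpD).resolve_left hk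
      -- `D1 D2 - x²` is divisible by `4` because `D1 D2` is `0` or `1` modulo `4`
      obtain ⟨m, hm⟩ : (4 : ℤ) ∣ D1 * D2 - x ^ 2 := by
        have h12 : (D1 * D2) % 4 = 0 ∨ (D1 * D2) % 4 = 1 := by
          rcases hD14 with h | h <;> rcases hD24 with h' | h' <;> simp [Int.mul_emod, h, h']
        have hxx : x ^ 2 % 4 = (D1 * D2) % 4 := by
          rcases Int.even_or_odd' x with ⟨k, rfl | rfl⟩ <;> ring_nf at * <;> lia
        lia
      have hm0 : m ≠ 0 := by
        rintro rfl
        apply hne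
        linear_combination -hm
      have hy : ((-m : ℤ) : ℚ_[p]) ≠ 0 := by exact_mod_cast neg_ne_zero.mpr hm0
      have e4 : (x : ℚ_[p]) ^ 2 - D1 * D2 = 4 * ((-m : ℤ) : ℚ_[p]) := by
        have : x ^ 2 - D1 * D2 = 4 * -m := by linear_combination -hm
        exact_mod_cast this
      rw [e4, isNormFrom_iff_of_kron_ne_one hpD hD14 hk _ hy, Padic.valuation_intCast, hm, hk',
        Int.mul_ediv_cancel_left _ (by norm_num)]
      simp [padicValInt]
end
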